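/- Let Ω be a bounded C² domain, F satisfy (F1)–(F4), b, c continuous on Ω̄ and λ ∈ ℝ. Suppose g ∈ LSC(Ω̄), h ∈ USC(Ω̄), h ≤ 0 on Ω̄, h ≤ g, and g(x) > 0 whenever h(x) = 0. Let u ∈ USC(Ω̄) be a viscosity subsolution of G(x,u,Du,D²u) + λ|u|^α u = g(x) in Ω with ⟨Du,n⟩ = 0 on ∂Ω, and let v ∈ LSC(Ω̄) be a bounded, positive viscosity supersolution of G(x,v,Dv,D²v) + λ|v|^α v = h(x) in Ω with ⟨Dv,n⟩ = 0 on ∂Ω. Then u ≤ v in Ω̄. -/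

import Mathlib

/-!
Comparison principle for a singular or degenerate fully nonlinear Neumann problem.

Suppose `u > v` somewhere. Since `v` is positive and bounded, `τ = sup u / v > 1` is attained, so
`w = -τ v` satisfies `u + w ≤ 0` with equality at some point. By homogeneity `w` is a subsolution
of the dual equation (`dualOp`) with right-hand side `-τ^(1+α) h`. The core of the proof is
`comparison_point`: in this situation `g - τ^(1+α) h ≤ 0` at some point. This is impossible, because
`τ^(1+α) > 1` gives `τ^(1+α) h < h ≤ g` where `h < 0`, and `g > 0` where `h = 0`.

For `comparison_point`, the functional `u(x) + w(y) - j |x-y|^(2m) (η(x) + η(y))` is maximised.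
The weight `η = exp(L ρ)` (`BoundaryWeight`) has a large outward gradient on
`∂Ω`; as a consequence, at a boundary point the gradient of the penalty points outward, the Neumann
alternative of the definition of viscosity solution is excluded, and the equation itself holds.

* Off the diagonal, the theorem on sums (`sums_superjets`) provides second order jets of `u` and
  `w`. It is obtained from a double convex conjugation with Moreau regularisation
  (`exists_regularization`) and Jensen's lemma (`jensen_core`), the latter proved through the
  differentiability almost everywhere of Lipschitz maps. The Hölder exponents `θ, ν > 1/2` make the
  error in `F` of order `|P|^(1+α) |x-y|^γ`, where `P` is the gradient of the penalty
  (`doubling_estimate`). It tends to zero once the gradients are bounded independently of `j`; this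
  bound follows from `u(x) + w(y) ≤ M |x-y|` (`lipschitz_estimate`), itself a consequence of the
  doubling estimate with the concave penalty `M (|x-y| - B |x-y|^2)`.
* On the diagonal, `u` and `w` are touched from above by `C |x-x'|^(2m)`, whose gradient vanishes
  at `x'`, so that the equation cannot be tested there. Translated copies of this function touch
  `u` at nearby points, with gradients so small that, for `(2m-1)(1+α) > 1`, the first and second
  order terms are negligible; if all these gradients vanish, `u` is locally constant and the
  convention for locally constant functions applies (`diagonal_estimate`).
-/


open Filter Set Metric
open scoped RealInnerProductSpace Topology NNReal

noncomputable section

/-- Euclidean space `ℝ^N`. -/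
abbrev EN (N : ℕ) := EuclideanSpace ℝ (Fin N)

/-- The space of `N × N` real matrices. -/
abbrev Mat (N : ℕ) := Matrix (Fin N) (Fin N) ℝ

/-- Operator (spectral) norm of a matrix, viewed as a linear map on Euclidean space. -/
noncomputable def matNorm {N : ℕ} (X : Mat N) : ℝ :=
  ‖LinearMap.toContinuousLinearMap (Matrix.toEuclideanLin X)‖

/-- The Hessian matrix of `φ : ℝ^N → ℝ` at `x`. -/
noncomputable def hess {N : ℕ} (φ : EN N → ℝ) (x : EN N) : Mat N :=
  Matrix.of fun i j =>
    iteratedFDeriv ℝ 2 φ x ![EuclideanSpace.single i 1, EuclideanSpace.single j 1]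

/-- `ρ` is a `C²` defining function for the domain `Ω` with exterior unit normal `nv`. -/
def IsC2DefiningFun {N : ℕ} (Ω : Set (EN N)) (nv : EN N → EN N) (ρ : EN N → ℝ) : Prop :=
  ContDiff ℝ 2 ρ ∧ Ω = {x | ρ x < 0} ∧ frontier Ω = {x | ρ x = 0} ∧
    ∀ x ∈ frontier Ω, gradient ρ x ≠ 0 ∧ nv x = ‖gradient ρ x‖⁻¹ • gradient ρ x

/-- `Ω` is a bounded domain of class `C²` with exterior unit normal `nv` on `∂Ω`. -/
def IsC2Domain {N : ℕ} (Ω : Set (EN N)) (nv : EN N → EN N) : Prop :=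
  IsOpen Ω ∧ IsConnected Ω ∧ Bornology.IsBounded Ω ∧ ∃ ρ : EN N → ℝ, IsC2DefiningFun Ω nv ρ

/-- `Ω` is a bounded domain of class `C¹` with exterior unit normal `nv` on `∂Ω`. -/
def IsC1Domain {N : ℕ} (Ω : Set (EN N)) (nv : EN N → EN N) : Prop :=
  IsOpen Ω ∧ IsConnected Ω ∧ Bornology.IsBounded Ω ∧
    ∃ ρ : EN N → ℝ, ContDiff ℝ 1 ρ ∧ Ω = {x | ρ x < 0} ∧ frontier Ω = {x | ρ x = 0} ∧
      ∀ x ∈ frontier Ω, gradient ρ x ≠ 0 ∧ nv x = ‖gradient ρ x‖⁻¹ • gradient ρ x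

/-- Interior sphere condition (Ω1). -/
def InteriorSphereCond {N : ℕ} (Ω : Set (EN N)) : Prop :=
  ∀ x ∈ frontier Ω, ∃ R > (0 : ℝ), ∃ y ∈ Ω, ‖x - y‖ = R ∧ Metric.ball y R ⊆ Ω

/-- (F1): homogeneity of `F`. -/
def CondF1 {N : ℕ} (Ω : Set (EN N)) (α : ℝ) (F : EN N → EN N → Mat N → ℝ) : Prop :=
  ∀ x ∈ closure Ω, ∀ t : ℝ, t ≠ 0 → ∀ μ : ℝ, 0 ≤ μ → ∀ p : EN N, p ≠ 0 → ∀ X : Mat N,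
    X.IsSymm → F x (t • p) (μ • X) = |t| ^ α * μ * F x p X

/-- (F2): uniform ellipticity of `F` with ellipticity constants `0 < a ≤ A`. -/
def CondF2 {N : ℕ} (Ω : Set (EN N)) (α a A : ℝ) (F : EN N → EN N → Mat N → ℝ) : Prop :=
  0 < a ∧ a ≤ A ∧ ∀ x ∈ closure Ω, ∀ p : EN N, p ≠ 0 → ∀ M P : Mat N, M.IsSymm →
    P.PosSemidef →
      a * ‖p‖ ^ α * P.trace ≤ F x p (M + P) - F x p M ∧
      F x p (M + P) - F x p M ≤ A * ‖p‖ ^ α * P.trace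

/-- (F3): Hölder continuity of `F` in the `x` variable. -/
def CondF3 {N : ℕ} (Ω : Set (EN N)) (α C₁ θ : ℝ) (F : EN N → EN N → Mat N → ℝ) : Prop :=
  0 < C₁ ∧ θ ∈ Set.Ioc (1/2 : ℝ) 1 ∧ ∀ x ∈ closure Ω, ∀ y ∈ closure Ω, ∀ p : EN N, p ≠ 0 →
    ∀ X : Mat N, X.IsSymm → |F x p X - F y p X| ≤ C₁ * ‖x - y‖ ^ θ * ‖p‖ ^ α * matNorm X

/-- (F4): Hölder continuity of `F` in the gradient variable. -/
def CondF4 {N : ℕ} (Ω : Set (EN N)) (α C₂ ν : ℝ) (F : EN N → EN N → Mat N → ℝ) : Prop :=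
  0 < C₂ ∧ ν ∈ Set.Ioc (1/2 : ℝ) 1 ∧ ∀ x ∈ closure Ω, ∀ p : EN N, p ≠ 0 → ∀ q : EN N,
    ‖q‖ ≤ ‖p‖ / 2 → ∀ X : Mat N, X.IsSymm →
      |F x (p + q) X - F x p X| ≤ C₂ * ‖p‖ ^ (α - ν) * ‖q‖ ^ ν * matNorm X

/-- The Neumann boundary operator `B(x,r,p) = ⟨p, n(x)⟩`. -/
def BNeu {N : ℕ} (nv : EN N → EN N) : EN N → ℝ → EN N → ℝ := fun x _ p => ⟪p, nv x⟫

/-- Viscosity subsolution of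
`F(x,Du,D²u) + b(x)·Du |Du|^α + c₀(x, u) = g(x)` in `Ω`, `B(x,u,Du) = 0` on `∂Ω`. -/
def IsSubSol {N : ℕ} (Ω : Set (EN N)) (F : EN N → EN N → Mat N → ℝ) (b : EN N → EN N)
    (α : ℝ) (c₀ : EN N → ℝ → ℝ) (g : EN N → ℝ) (B : EN N → ℝ → EN N → ℝ)
    (u : EN N → ℝ) : Prop :=
  (∀ x₀ ∈ Ω, ∀ φ : EN N → ℝ, ContDiff ℝ 2 φ →
      IsLocalMaxOn (fun x => u x - φ x) (closure Ω) x₀ → gradient φ x₀ ≠ 0 →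
      g x₀ ≤ F x₀ (gradient φ x₀) (hess φ x₀)
        + ⟪b x₀, gradient φ x₀⟫ * ‖gradient φ x₀‖ ^ α + c₀ x₀ (u x₀)) ∧
  (∀ x₀ ∈ Ω, ∀ k : ℝ, (∀ᶠ x in nhdsWithin x₀ (closure Ω), u x = k) → g x₀ ≤ c₀ x₀ k) ∧
  (∀ x₀ ∈ frontier Ω, ∀ φ : EN N → ℝ, ContDiff ℝ 2 φ →
      IsLocalMaxOn (fun x => u x - φ x) (closure Ω) x₀ → gradient φ x₀ ≠ 0 →
      min (g x₀ - (F x₀ (gradient φ x₀) (hess φ x₀)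
          + ⟪b x₀, gradient φ x₀⟫ * ‖gradient φ x₀‖ ^ α + c₀ x₀ (u x₀)))
        (B x₀ (u x₀) (gradient φ x₀)) ≤ 0) ∧
  (∀ x₀ ∈ frontier Ω, ∀ k : ℝ, (∀ᶠ x in nhdsWithin x₀ (closure Ω), u x = k) →
      min (g x₀ - c₀ x₀ k) (B x₀ k 0) ≤ 0)

/-- Viscosity supersolution of
`F(x,Dv,D²v) + b(x)·Dv |Dv|^α + c₀(x, v) = g(x)` in `Ω`, `B(x,v,Dv) = 0` on `∂Ω`. -/
def IsSuperSol {N : ℕ} (Ω : Set (EN N)) (F : EN N → EN N → Mat N → ℝ) (b : EN N → EN N)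
    (α : ℝ) (c₀ : EN N → ℝ → ℝ) (g : EN N → ℝ) (B : EN N → ℝ → EN N → ℝ)
    (v : EN N → ℝ) : Prop :=
  (∀ x₀ ∈ Ω, ∀ φ : EN N → ℝ, ContDiff ℝ 2 φ →
      IsLocalMinOn (fun x => v x - φ x) (closure Ω) x₀ → gradient φ x₀ ≠ 0 →
      F x₀ (gradient φ x₀) (hess φ x₀)
        + ⟪b x₀, gradient φ x₀⟫ * ‖gradient φ x₀‖ ^ α + c₀ x₀ (v x₀) ≤ g x₀) ∧
  (∀ x₀ ∈ Ω, ∀ k : ℝ, (∀ᶠ x in nhdsWithin x₀ (closure Ω), v x = k) → c₀ x₀ k ≤ g x₀) ∧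
  (∀ x₀ ∈ frontier Ω, ∀ φ : EN N → ℝ, ContDiff ℝ 2 φ →
      IsLocalMinOn (fun x => v x - φ x) (closure Ω) x₀ → gradient φ x₀ ≠ 0 →
      0 ≤ max (g x₀ - (F x₀ (gradient φ x₀) (hess φ x₀)
          + ⟪b x₀, gradient φ x₀⟫ * ‖gradient φ x₀‖ ^ α + c₀ x₀ (v x₀)))
        (B x₀ (v x₀) (gradient φ x₀))) ∧
  (∀ x₀ ∈ frontier Ω, ∀ k : ℝ, (∀ᶠ x in nhdsWithin x₀ (closure Ω), v x = k) →
      0 ≤ max (g x₀ - c₀ x₀ k) (B x₀ k 0))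

/-- The admissible set for the principal eigenvalue `λ̄`:
all `λ` such that there is a bounded positive supersolution of
`G(x,v,Dv,D²v) + λ v^{α+1} ≤ 0` in `Ω`, `⟨Dv, n⟩ ≥ 0` on `∂Ω`. -/
def lamBarSet {N : ℕ} (Ω : Set (EN N)) (nv : EN N → EN N) (F : EN N → EN N → Mat N → ℝ)
    (b : EN N → EN N) (c : EN N → ℝ) (α : ℝ) : Set ℝ :=
  {lam | ∃ v : EN N → ℝ, LowerSemicontinuousOn v (closure Ω) ∧
    (∀ x ∈ closure Ω, 0 < v x) ∧ (∃ M, ∀ x ∈ closure Ω, v x ≤ M) ∧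
    IsSuperSol Ω F b α (fun x r => (c x + lam) * |r| ^ α * r) (fun _ => 0) (BNeu nv) v}

/-- The admissible set for the principal eigenvalue `λ̲`:
all `λ` such that there is a bounded negative subsolution of
`G(x,u,Du,D²u) + λ |u|^α u ≥ 0` in `Ω`, `⟨Du, n⟩ ≤ 0` on `∂Ω`. -/
def lamLowSet {N : ℕ} (Ω : Set (EN N)) (nv : EN N → EN N) (F : EN N → EN N → Mat N → ℝ)
    (b : EN N → EN N) (c : EN N → ℝ) (α : ℝ) : Set ℝ :=
  {lam | ∃ u : EN N → ℝ, UpperSemicontinuousOn u (closure Ω) ∧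
    (∀ x ∈ closure Ω, u x < 0) ∧ (∃ M, ∀ x ∈ closure Ω, M ≤ u x) ∧
    IsSubSol Ω F b α (fun x r => (c x + lam) * |r| ^ α * r) (fun _ => 0) (BNeu nv) u}

/-! ### Regularisation of semicontinuous functions -/

/-- Double conjugation of a lower semicontinuous `V` on a compact set `K`, followed by a Moreau
regularization with parameter `σ`: the value `e z` is the maximum over `ξ` of the minimum over
`ζ ∈ K` of `⟪z - ζ, ξ⟫ - ‖ξ‖² / (2σ) + V ζ`.  The result is convex with Lipschitz gradient `J`. -/
lemma exists_regularization {E : Type*} [NormedAddCommGroup E] [InnerProductSpace ℝ E]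
    [FiniteDimensional ℝ E] {K : Set E} (hK : IsCompact K) (hne : K.Nonempty) {V : E → ℝ}
    (hV : LowerSemicontinuousOn V K) {σ : ℝ} (hσ : 0 < σ) :
    ∃ (e : E → ℝ) (J : E → E), (∃ C : ℝ≥0, LipschitzWith C J) ∧
      (∀ z z', e z + ⟪J z, z' - z⟫ ≤ e z') ∧
      (∀ z, ∀ ζ ∈ K, e z ≤ V ζ + σ / 2 * ‖z - ζ‖ ^ 2) ∧
      (∀ z, ∃ ζ ∈ K, e z = ⟪z - ζ, J z⟫ - ‖J z‖ ^ 2 / (2 * σ) + V ζ) ∧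
      (∀ z ξ, ∃ ζ ∈ K, ⟪z - ζ, ξ⟫ - ‖ξ‖ ^ 2 / (2 * σ) + V ζ ≤ e z) := by
  obtain ⟨B, hB⟩ := hK.isBounded.exists_norm_le
  have hmin : ∀ ξ : E, ∃ ζ ∈ K, ∀ ζ' ∈ K, V ζ - ⟪ζ, ξ⟫ ≤ V ζ' - ⟪ζ', ξ⟫ := by
    intro ξ
    have h1 : LowerSemicontinuousOn (fun ζ => V ζ + (-⟪ζ, ξ⟫)) K := by
      refine hV.add (ContinuousOn.lowerSemicontinuousOn ?_)
      fun_prop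
    obtain ⟨ζ, hζ, h2⟩ := h1.exists_isMinOn hne hK
    exact ⟨ζ, hζ, fun ζ' hζ' => by simpa [sub_eq_add_neg] using h2 hζ'⟩
  choose Z hZK hZ using hmin
  set W : E → ℝ := fun ξ => V (Z ξ) - ⟪Z ξ, ξ⟫ with hW
  have hWle : ∀ ξ, ∀ ζ ∈ K, W ξ ≤ V ζ - ⟪ζ, ξ⟫ := fun ξ ζ hζ => hZ ξ ζ hζ
  have hWlip : ∀ ξ ξ', W ξ ≤ W ξ' + B * ‖ξ - ξ'‖ := by
    intro ξ ξ'
    have h1 := hWle ξ (Z ξ') (hZK ξ')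
    have h2 : ⟪Z ξ', ξ' - ξ⟫ ≤ B * ‖ξ - ξ'‖ := by
      refine (real_inner_le_norm _ _).trans ?_
      rw [norm_sub_rev]
      exact mul_le_mul_of_nonneg_right (hB _ (hZK ξ')) (norm_nonneg _)
    rw [inner_sub_right] at h2
    simp only [hW] at h1 ⊢
    linarith
  have hB0 : 0 ≤ B := (norm_nonneg _).trans (hB _ (hZK 0))
  have hWcont : Continuous W := by
    refine (LipschitzWith.of_le_add_mul ⟨B, hB0⟩ ?_).continuous
    intro x y
    rw [dist_eq_norm]; exact hWlip x y
  have hWconc : ∀ ξ ξ' (t : ℝ), 0 ≤ t → t ≤ 1 →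
      (1 - t) * W ξ + t * W ξ' ≤ W (ξ + t • (ξ' - ξ)) := by
    intro ξ ξ' t h0 h1
    set η := ξ + t • (ξ' - ξ)
    have h2 := mul_le_mul_of_nonneg_left (hWle ξ (Z η) (hZK η)) (sub_nonneg.2 h1)
    have h3 := mul_le_mul_of_nonneg_left (hWle ξ' (Z η) (hZK η)) h0
    have h4 : ⟪Z η, η⟫ = (1 - t) * ⟪Z η, ξ⟫ + t * ⟪Z η, ξ'⟫ := by
      conv_lhs => rw [show η = ξ + t • (ξ' - ξ) from rfl]
      rw [inner_add_right, real_inner_smul_right, inner_sub_right]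
      ring
    have h5 : W η = V (Z η) - ⟪Z η, η⟫ := rfl
    rw [h5, h4]
    nlinarith
  set Φ : E → E → ℝ := fun z ξ => ⟪z, ξ⟫ - ‖ξ‖ ^ 2 / (2 * σ) + W ξ with hΦ
  have hmax : ∀ z, ∃ ξ, ∀ ξ', Φ z ξ' ≤ Φ z ξ := by
    intro z
    have hc : Continuous (Φ z) := by
      simp only [hΦ]; fun_prop
    set R : ℝ := 2 * σ * (‖z‖ + B) + 1
    have hR : 0 ≤ R := by positivity
    obtain ⟨ξ, hξ, h1⟩ := (isCompact_closedBall (0 : E) R).exists_isMaxOn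
      ⟨0, by simpa using hR⟩ hc.continuousOn
    refine ⟨ξ, fun ξ' => ?_⟩
    by_cases h2 : ‖ξ'‖ ≤ R
    · exact h1 (by simpa using h2)
    · have h3 : Φ z 0 ≤ Φ z ξ := h1 (by simpa using hR)
      refine le_trans ?_ h3
      have h4 := hWlip ξ' 0
      have h5 := real_inner_le_norm z ξ'
      simp only [hΦ, inner_zero_right, norm_zero, sub_zero] at h4 ⊢
      have h6 : (‖z‖ + B) * ‖ξ'‖ ≤ ‖ξ'‖ ^ 2 / (2 * σ) := by
        rw [le_div_iff₀ (by positivity)]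
        have : 2 * σ * (‖z‖ + B) ≤ ‖ξ'‖ := by
          have := not_le.1 h2
          linarith
        nlinarith [norm_nonneg ξ']
      norm_num
      linarith
  choose J hJ using hmax
  -- quadratic growth of the strongly concave `Φ z` at its maximum
  have hgrow : ∀ z ξ, Φ z ξ + ‖ξ - J z‖ ^ 2 / (2 * σ) ≤ Φ z (J z) := by
    intro z ξ
    have key : ∀ t : ℝ, 0 < t → t ≤ 1 →
        Φ z ξ + (1 - t) * (‖ξ - J z‖ ^ 2 / (2 * σ)) ≤ Φ z (J z) := by
      intro t h0 h1
      have h2 := hJ z (J z + t • (ξ - J z))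
      have h3 := hWconc (J z) ξ t h0.le h1
      have h4 : ‖J z + t • (ξ - J z)‖ ^ 2
          = (1 - t) * ‖J z‖ ^ 2 + t * ‖ξ‖ ^ 2 - t * (1 - t) * ‖ξ - J z‖ ^ 2 := by
        simp only [← real_inner_self_eq_norm_sq, inner_add_left, inner_add_right,
          real_inner_smul_left, real_inner_smul_right, inner_sub_left, inner_sub_right,
          real_inner_comm ξ (J z)]
        ring
      have h5 : ⟪z, J z + t • (ξ - J z)⟫ = (1 - t) * ⟪z, J z⟫ + t * ⟪z, ξ⟫ := by
        rw [inner_add_right, real_inner_smul_right, inner_sub_right]; ring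
      simp only [hΦ] at h2 ⊢
      rw [h4, h5] at h2
      have h6 : t * (⟪z, ξ⟫ - ‖ξ‖ ^ 2 / (2 * σ) + W ξ + (1 - t) * (‖ξ - J z‖ ^ 2 / (2 * σ)))
          ≤ t * (⟪z, J z⟫ - ‖J z‖ ^ 2 / (2 * σ) + W (J z)) := by
        have h7 : ((1 - t) * ‖J z‖ ^ 2 + t * ‖ξ‖ ^ 2 - t * (1 - t) * ‖ξ - J z‖ ^ 2) / (2 * σ)
          = (1 - t) * (‖J z‖ ^ 2 / (2 * σ)) + t * (‖ξ‖ ^ 2 / (2 * σ))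
            - t * (1 - t) * (‖ξ - J z‖ ^ 2 / (2 * σ)) := by ring
        rw [h7] at h2
        nlinarith
      exact le_of_mul_le_mul_left h6 h0
    have hlim : Tendsto (fun t : ℝ => Φ z ξ + (1 - t) * (‖ξ - J z‖ ^ 2 / (2 * σ))) (𝓝[>] 0)
        (𝓝 (Φ z ξ + (1 - 0) * (‖ξ - J z‖ ^ 2 / (2 * σ)))) := by
      refine Tendsto.mono_left ?_ nhdsWithin_le_nhds
      exact Continuous.tendsto (by fun_prop) 0
    rw [sub_zero, one_mul] at hlim
    refine le_of_tendsto hlim ?_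
    filter_upwards [Ioc_mem_nhdsGT (show (0 : ℝ) < 1 by norm_num)] with t ht
    exact key t ht.1 ht.2
  refine ⟨fun z => Φ z (J z), J, ⟨⟨σ, hσ.le⟩, ?_⟩, ?_, ?_, ?_, ?_⟩
  · refine LipschitzWith.of_dist_le_mul fun z z' => ?_
    rw [dist_eq_norm, dist_eq_norm]
    have h1 := hgrow z (J z')
    have h2 := hgrow z' (J z)
    have h3 : ‖J z - J z'‖ ^ 2 / σ ≤ ⟪z - z', J z - J z'⟫ := by
      rw [norm_sub_rev (J z') (J z)] at h1
      simp only [hΦ] at h1 h2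
      simp only [inner_sub_left, inner_sub_right]
      have : ‖J z - J z'‖ ^ 2 / σ = 2 * (‖J z - J z'‖ ^ 2 / (2 * σ)) := by
        field_simp
      linarith
    have h4 := h3.trans (real_inner_le_norm _ _)
    rw [div_le_iff₀ hσ] at h4
    show ‖J z - J z'‖ ≤ σ * ‖z - z'‖
    by_contra hlt
    push Not at hlt
    have h5 : 0 < ‖J z - J z'‖ := lt_of_le_of_lt (by positivity) hlt
    nlinarith
  · intro z z'
    have := hJ z' (J z)
    simp only [hΦ] at this ⊢
    rw [inner_sub_right, real_inner_comm z' (J z), real_inner_comm z (J z)]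
    linarith
  · intro z ζ hζ
    have h1 := hWle (J z) ζ hζ
    have h2 : 0 ≤ ‖σ • (z - ζ) - J z‖ ^ 2 := by positivity
    rw [norm_sub_sq_real, norm_smul, real_inner_smul_left, Real.norm_of_nonneg hσ.le] at h2
    have h3 : ⟪z - ζ, J z⟫ - ‖J z‖ ^ 2 / (2 * σ) ≤ σ / 2 * ‖z - ζ‖ ^ 2 := by
      rw [sub_le_iff_le_add, ← sub_le_iff_le_add', le_div_iff₀ (by positivity)]
      nlinarith
    rw [inner_sub_left] at h3
    simp only [hΦ]
    linarith
  · intro z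
    refine ⟨Z (J z), hZK _, ?_⟩
    simp only [hΦ, hW, inner_sub_left]
    ring
  · intro z ξ
    refine ⟨Z ξ, hZK _, ?_⟩
    have := hJ z ξ
    simp only [hΦ, hW, inner_sub_left] at this ⊢
    linarith

/-! ### Convex functions with Lipschitz gradient -/

lemma eq_zero_of_quadratic_nonneg {E : Type*} [NormedAddCommGroup E] [InnerProductSpace ℝ E]
    {w : E} {C : ℝ} (h : ∀ k : E, 0 ≤ ⟪w, k⟫ + C * ‖k‖ ^ 2) : w = 0 := by
  by_contra hw
  have hw' : 0 < ‖w‖ ^ 2 := by positivity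
  have h1 : ∀ t : ℝ, 0 < t → 1 ≤ C * t := by
    intro t ht
    have h2 := h (-(t • w))
    rw [inner_neg_right, real_inner_smul_right, norm_neg, norm_smul, Real.norm_of_nonneg ht.le,
      real_inner_self_eq_norm_sq] at h2
    by_contra h3
    push Not at h3
    nlinarith [mul_pos ht hw']
  have h3 := h1 (1 / (|C| + 1) / 2) (by positivity)
  have h4 : C * (1 / (|C| + 1) / 2) ≤ 1 / 2 := by
    rw [show C * (1 / (|C| + 1) / 2) = (C / (|C| + 1)) / 2 by ring]
    have : C / (|C| + 1) ≤ 1 := by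
      rw [div_le_one (by positivity)]
      linarith [le_abs_self C]
    linarith
  linarith

lemma subgrad_upper {E : Type*} [NormedAddCommGroup E] [InnerProductSpace ℝ E]
    {e : E → ℝ} {J : E → E} {C : ℝ≥0} (hJ : LipschitzWith C J)
    (hs : ∀ z z', e z + ⟪J z, z' - z⟫ ≤ e z') (z k : E) :
    e (z + k) ≤ e z + ⟪J z, k⟫ + C * ‖k‖ ^ 2 := by
  have h1 := hs (z + k) z
  have h2 : ⟪J (z + k) - J z, k⟫ ≤ C * ‖k‖ ^ 2 := by
    refine (real_inner_le_norm _ _).trans ?_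
    have := hJ.dist_le_mul (z + k) z
    rw [dist_eq_norm, dist_eq_norm, add_sub_cancel_left] at this
    nlinarith [norm_nonneg k]
  rw [inner_sub_left] at h2
  rw [show z - (z + k) = -k by abel, inner_neg_right] at h1
  linarith

lemma subgrad_hasFDerivAt {E : Type*} [NormedAddCommGroup E] [InnerProductSpace ℝ E]
    {e : E → ℝ} {J : E → E} {C : ℝ≥0} (hJ : LipschitzWith C J)
    (hs : ∀ z z', e z + ⟪J z, z' - z⟫ ≤ e z') (z : E) :
    HasFDerivAt e (innerSL ℝ (J z)) z := by
  rw [hasFDerivAt_iff_isLittleO_nhds_zero, Asymptotics.isLittleO_iff]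
  intro c hc
  have : ∀ᶠ k : E in 𝓝 0, ‖k‖ < c / (C + 1) := by
    have := Metric.ball_mem_nhds (0 : E) (show 0 < c / ((C : ℝ) + 1) by positivity)
    filter_upwards [this] with k hk
    simpa using hk
  filter_upwards [this] with k hk
  rw [lt_div_iff₀ (by positivity)] at hk
  have h1 := subgrad_upper hJ hs z k
  have h2 := hs z (z + k)
  rw [add_sub_cancel_left] at h2
  rw [Real.norm_eq_abs, abs_le, innerSL_apply_apply]
  constructor <;> nlinarith [norm_nonneg k]

/-- If the Lipschitz gradient `J` of a convex function is differentiable at `z`, the function has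
a second order Taylor expansion there. -/
lemma subgrad_expansion {E : Type*} [NormedAddCommGroup E] [InnerProductSpace ℝ E]
    {e : E → ℝ} {J : E → E} {C : ℝ≥0} (hJ : LipschitzWith C J)
    (hs : ∀ z z', e z + ⟪J z, z' - z⟫ ≤ e z') {z : E} {D : E →L[ℝ] E} (hD : HasFDerivAt J D z)
    {ε : ℝ} (hε : 0 < ε) :
    ∀ᶠ k in 𝓝 (0 : E), |e (z + k) - e z - ⟪J z, k⟫ - 1 / 2 * ⟪D k, k⟫| ≤ ε * ‖k‖ ^ 2 := by
  rw [hasFDerivAt_iff_isLittleO_nhds_zero, Asymptotics.isLittleO_iff] at hD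
  obtain ⟨δ, hδ, hb⟩ := Metric.eventually_nhds_iff_ball.1 (hD hε)
  refine Metric.eventually_nhds_iff_ball.2 ⟨δ, hδ, fun k hk => ?_⟩
  have hk' : ‖k‖ < δ := by simpa using hk
  set s : ℝ → ℝ := fun t => e (z + t • k) - t * ⟪J z, k⟫ - t ^ 2 / 2 * ⟪D k, k⟫ with hs'
  have hder : ∀ t ∈ Icc (0 : ℝ) 1, HasDerivWithinAt s
      (⟪J (z + t • k), k⟫ - ⟪J z, k⟫ - t * ⟪D k, k⟫) (Icc 0 1) t := by
    intro t _
    refine HasDerivAt.hasDerivWithinAt ?_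
    have h1 : HasDerivAt (fun t : ℝ => z + t • k) k t := by
      simpa using ((hasDerivAt_id t).smul_const k).const_add z
    have h2 := (subgrad_hasFDerivAt hJ hs (z + t • k)).comp_hasDerivAt t h1
    rw [innerSL_apply_apply] at h2
    have h3 : HasDerivAt (fun t : ℝ => t * ⟪J z, k⟫) (1 * ⟪J z, k⟫) t :=
      (hasDerivAt_id t).mul_const _
    have h4 : HasDerivAt (fun t : ℝ => t ^ 2 / 2 * ⟪D k, k⟫) (t * ⟪D k, k⟫) t := by
      have := (((hasDerivAt_pow 2 t).div_const 2).mul_const ⟪D k, k⟫)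
      exact this.congr_deriv (by norm_num)
    have := (h2.sub h3).sub h4
    rw [one_mul] at this
    exact this
  have hbd : ∀ t ∈ Ico (0 : ℝ) 1,
      ‖⟪J (z + t • k), k⟫ - ⟪J z, k⟫ - t * ⟪D k, k⟫‖ ≤ ε * ‖k‖ ^ 2 := by
    intro t ht
    have h1 : ‖t • k‖ ≤ ‖k‖ := by
      rw [norm_smul, Real.norm_of_nonneg ht.1]
      nlinarith [norm_nonneg k, ht.2]
    have h2 := hb (t • k) (by simpa using h1.trans_lt hk')
    rw [map_smul] at h2
    have h3 : ⟪J (z + t • k), k⟫ - ⟪J z, k⟫ - t * ⟪D k, k⟫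
        = ⟪J (z + t • k) - J z - t • D k, k⟫ := by
      rw [inner_sub_left, inner_sub_left, real_inner_smul_left]
    rw [h3]
    refine (norm_inner_le_norm _ _).trans ?_
    nlinarith [norm_nonneg k, mul_le_mul_of_nonneg_left h1 hε.le]
  have h := norm_image_sub_le_of_norm_deriv_le_segment' hder hbd 1 (by simp)
  simp only [hs', Real.norm_eq_abs] at h
  norm_num at h
  have h5 : e (z + k) - e z - ⟪J z, k⟫ - 1 / 2 * ⟪D k, k⟫
      = e (z + k) - ⟪J z, k⟫ - 1 / 2 * ⟪D k, k⟫ - e z := by ring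
  rw [h5]
  exact h

/-- Lipschitz self-maps of `ℝ^N × ℝ^N` preserve null sets. -/
lemma volume_image_eq_zero_of_lipschitz {N : ℕ} {T : EN N × EN N → EN N × EN N} {C : ℝ≥0}
    (hT : LipschitzWith C T) {s : Set (EN N × EN N)} (hs : MeasureTheory.volume s = 0) :
    MeasureTheory.volume (T '' s) = 0 := by
  set d : ℝ := (Module.finrank ℝ (EN N × EN N) : ℝ) with hd
  have hvol : MeasureTheory.Measure.IsAddHaarMeasure
      (MeasureTheory.volume : MeasureTheory.Measure (EN N × EN N)) :=
    inferInstanceAs (MeasureTheory.Measure.IsAddHaarMeasure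
      ((MeasureTheory.volume : MeasureTheory.Measure (EN N)).prod MeasureTheory.volume))
  have h1 : MeasureTheory.Measure.hausdorffMeasure d s = 0 :=
    MeasureTheory.Measure.absolutelyContinuous_isAddHaarMeasure
      (MeasureTheory.Measure.hausdorffMeasure d) MeasureTheory.volume hs
  have h2 := (hT.lipschitzOnWith (s := s)).hausdorffMeasure_image_le (d := d) (by positivity)
  rw [h1, mul_zero] at h2
  exact MeasureTheory.Measure.absolutelyContinuous_isAddHaarMeasure MeasureTheory.volume
    (MeasureTheory.Measure.hausdorffMeasure d) (le_antisymm h2 bot_le)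

/-! ### Jensen's lemma -/

set_option maxHeartbeats 1000000 in
/-- Jensen's lemma for a sum of two `C^{1,1}` convex functions touched from below by a quadratic
form: there are points of twice differentiability near the origin, with small gradients, at which
the Hessian dominates the quadratic form. -/
lemma jensen_core {N : ℕ} {e1 e2 : EN N → ℝ} {J1 J2 : EN N → EN N} {C1 C2 : ℝ≥0}
    (hJ1 : LipschitzWith C1 J1) (hJ2 : LipschitzWith C2 J2)
    (hs1 : ∀ z z', e1 z + ⟪J1 z, z' - z⟫ ≤ e1 z') (hs2 : ∀ z z', e2 z + ⟪J2 z, z' - z⟫ ≤ e2 z')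
    {Q1 Q2 : EN N × EN N →L[ℝ] EN N}
    (hQ : ∀ z z', ⟪Q1 z, z'.1⟫ + ⟪Q2 z, z'.2⟫ = ⟪Q1 z', z.1⟫ + ⟪Q2 z', z.2⟫)
    {ε : ℝ} (hε : 0 < ε)
    (hlow : ∀ z : EN N × EN N, 1 / 2 * (⟪Q1 z, z.1⟫ + ⟪Q2 z, z.2⟫) + ε * (‖z.1‖ ^ 2 + ‖z.2‖ ^ 2)
      ≤ e1 z.1 + e2 z.2)
    (h10 : e1 0 ≤ 0) (h20 : e2 0 ≤ 0) {δ : ℝ} (hδ : 0 < δ) :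
    ∃ z1 z2 : EN N, ‖z1‖ < δ ∧ ‖z2‖ < δ ∧ ‖J1 z1‖ < δ ∧ ‖J2 z2‖ < δ ∧
      DifferentiableAt ℝ J1 z1 ∧ DifferentiableAt ℝ J2 z2 ∧
      ∀ h k, ⟪Q1 (h, k), h⟫ + ⟪Q2 (h, k), k⟫ ≤ ⟪fderiv ℝ J1 z1 h, h⟫ + ⟪fderiv ℝ J2 z2 k, k⟫ := by
  -- `s` bounds the size of the linear perturbation
  obtain ⟨s, hs, hs'⟩ : ∃ s : ℝ, 0 < s ∧ (‖Q1‖ + ‖Q2‖ + 1) * (2 * s / ε) + s < δ := by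
    refine ⟨δ / ((‖Q1‖ + ‖Q2‖ + 1) * (2 / ε) + 1) / 2, by positivity, ?_⟩
    set c := (‖Q1‖ + ‖Q2‖ + 1) * (2 / ε) + 1 with hc
    have hcpos : 0 < c := by positivity
    have : (‖Q1‖ + ‖Q2‖ + 1) * (2 * (δ / c / 2) / ε) + δ / c / 2 = c * (δ / c / 2) := by
      rw [hc]; ring
    rw [this]
    have : c * (δ / c / 2) = δ / 2 := by field_simp
    linarith
  have he1 : Continuous e1 := continuous_iff_continuousAt.2 fun z =>
    (subgrad_hasFDerivAt hJ1 hs1 z).continuousAt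
  have he2 : Continuous e2 := continuous_iff_continuousAt.2 fun z =>
    (subgrad_hasFDerivAt hJ2 hs2 z).continuousAt
  -- minimisation of the perturbed function
  have hmin : ∀ p : EN N × EN N, ‖p.1‖ ≤ s → ‖p.2‖ ≤ s → ∃ z : EN N × EN N,
      ‖z.1‖ + ‖z.2‖ ≤ 2 * s / ε ∧ ∀ z' : EN N × EN N,
        e1 z.1 + e2 z.2 - 1 / 2 * (⟪Q1 z, z.1⟫ + ⟪Q2 z, z.2⟫) - ⟪p.1, z.1⟫ - ⟪p.2, z.2⟫ ≤
        e1 z'.1 + e2 z'.2 - 1 / 2 * (⟪Q1 z', z'.1⟫ + ⟪Q2 z', z'.2⟫) - ⟪p.1, z'.1⟫ - ⟪p.2, z'.2⟫ := by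
    intro p hp1 hp2
    set Θ : EN N × EN N → ℝ := fun z =>
      e1 z.1 + e2 z.2 - 1 / 2 * (⟪Q1 z, z.1⟫ + ⟪Q2 z, z.2⟫) - ⟪p.1, z.1⟫ - ⟪p.2, z.2⟫ with hΘ
    have hcont : Continuous Θ := by
      have h1 : Continuous fun z : EN N × EN N => e1 z.1 := he1.comp continuous_fst
      have h2 : Continuous fun z : EN N × EN N => e2 z.2 := he2.comp continuous_snd
      have h3 : Continuous fun z : EN N × EN N => ⟪Q1 z, z.1⟫ := Q1.continuous.inner continuous_fst
      have h4 : Continuous fun z : EN N × EN N => ⟪Q2 z, z.2⟫ := Q2.continuous.inner continuous_snd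
      have h5 : Continuous fun z : EN N × EN N => ⟪p.1, z.1⟫ :=
        continuous_const.inner continuous_fst
      have h6 : Continuous fun z : EN N × EN N => ⟪p.2, z.2⟫ :=
        continuous_const.inner continuous_snd
      exact (((h1.add h2).sub (continuous_const.mul (h3.add h4))).sub h5).sub h6
    have hsmall : ∀ z, Θ z ≤ 0 → ‖z.1‖ + ‖z.2‖ ≤ 2 * s / ε := by
      intro z hz
      have h1 := hlow z
      have h2 := (real_inner_le_norm p.1 z.1).trans
        (mul_le_mul_of_nonneg_right hp1 (norm_nonneg _))
      have h3 := (real_inner_le_norm p.2 z.2).trans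
        (mul_le_mul_of_nonneg_right hp2 (norm_nonneg _))
      simp only [hΘ] at hz
      have h4 : ε * (‖z.1‖ ^ 2 + ‖z.2‖ ^ 2) ≤ s * (‖z.1‖ + ‖z.2‖) := by linarith
      rw [le_div_iff₀ hε]
      by_contra hcon
      push Not at hcon
      have h5 : 0 < ‖z.1‖ + ‖z.2‖ := by
        have := norm_nonneg z.1
        have := norm_nonneg z.2
        by_contra h
        have : ‖z.1‖ + ‖z.2‖ = 0 := by linarith
        rw [this] at hcon
        linarith
      have h6 : ε * (‖z.1‖ + ‖z.2‖) ^ 2 ≤ 2 * (ε * (‖z.1‖ ^ 2 + ‖z.2‖ ^ 2)) := by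
        nlinarith [mul_nonneg hε.le (sq_nonneg (‖z.1‖ - ‖z.2‖))]
      nlinarith
    have h0 : Θ 0 ≤ 0 := by simp [hΘ]; linarith
    obtain ⟨z, -, hzmin⟩ := (isCompact_closedBall (0 : EN N × EN N) (2 * s / ε)).exists_isMinOn
      ⟨0, mem_closedBall_self (by positivity)⟩ hcont.continuousOn
    have hz0 : Θ z ≤ 0 := (hzmin (mem_closedBall_self (by positivity))).trans h0
    refine ⟨z, hsmall z hz0, fun z' => ?_⟩
    by_cases hz' : Θ z' ≤ 0
    · refine hzmin ?_
      have := hsmall z' hz'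
      rw [mem_closedBall_zero_iff, Prod.norm_def]
      exact max_le (by linarith [norm_nonneg z'.2]) (by linarith [norm_nonneg z'.1])
    · exact hz0.trans (not_le.1 hz').le
  choose! Z hZ1 hZ2 using hmin
  -- the quadratic form along increments
  have hquad : ∀ z k : EN N × EN N, ⟪Q1 (z + k), (z + k).1⟫ + ⟪Q2 (z + k), (z + k).2⟫ =
      ⟪Q1 z, z.1⟫ + ⟪Q2 z, z.2⟫ + 2 * (⟪Q1 z, k.1⟫ + ⟪Q2 z, k.2⟫)
        + (⟪Q1 k, k.1⟫ + ⟪Q2 k, k.2⟫) := by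
    intro z k
    have := hQ z k
    simp only [map_add, Prod.fst_add, Prod.snd_add, inner_add_left, inner_add_right]
    linarith
  have hfirst : ∀ p : EN N × EN N, ‖p.1‖ ≤ s → ‖p.2‖ ≤ s →
      J1 (Z p).1 = Q1 (Z p) + p.1 ∧ J2 (Z p).2 = Q2 (Z p) + p.2 := by
    intro p hp1 hp2
    constructor
    · have : J1 (Z p).1 - Q1 (Z p) - p.1 = 0 := by
        refine eq_zero_of_quadratic_nonneg (C := C1 + ‖Q1‖ / 2) fun k => ?_
        have h1 := hZ2 p hp1 hp2 (Z p + (k, 0))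
        rw [hquad] at h1
        simp only [Prod.fst_add, Prod.snd_add, add_zero, inner_zero_right, inner_add_right] at h1
        have h2 := subgrad_upper hJ1 hs1 (Z p).1 k
        have h3 : -(‖Q1‖ * ‖k‖ ^ 2) ≤ ⟪Q1 (k, 0), k⟫ := by
          have h4 := (abs_le.1 (abs_real_inner_le_norm (Q1 (k, 0)) k)).1
          have h5 := Q1.le_opNorm (k, 0)
          have h6 : ‖((k, 0) : EN N × EN N)‖ = ‖k‖ := by simp [Prod.norm_def]
          rw [h6] at h5
          nlinarith [norm_nonneg k]
        rw [inner_sub_left, inner_sub_left]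
        nlinarith
      rw [sub_sub, sub_eq_zero] at this
      exact this
    · have : J2 (Z p).2 - Q2 (Z p) - p.2 = 0 := by
        refine eq_zero_of_quadratic_nonneg (C := C2 + ‖Q2‖ / 2) fun k => ?_
        have h1 := hZ2 p hp1 hp2 (Z p + (0, k))
        rw [hquad] at h1
        simp only [Prod.fst_add, Prod.snd_add, add_zero, inner_zero_right, inner_add_right] at h1
        have h2 := subgrad_upper hJ2 hs2 (Z p).2 k
        have h3 : -(‖Q2‖ * ‖k‖ ^ 2) ≤ ⟪Q2 (0, k), k⟫ := by
          have h4 := (abs_le.1 (abs_real_inner_le_norm (Q2 (0, k)) k)).1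
          have h5 := Q2.le_opNorm (0, k)
          have h6 : ‖((0, k) : EN N × EN N)‖ = ‖k‖ := by simp [Prod.norm_def]
          rw [h6] at h5
          nlinarith [norm_nonneg k]
        rw [inner_sub_left, inner_sub_left]
        nlinarith
      rw [sub_sub, sub_eq_zero] at this
      exact this
  -- Rademacher's theorem
  have hvol : MeasureTheory.Measure.IsAddHaarMeasure
      (MeasureTheory.volume : MeasureTheory.Measure (EN N × EN N)) :=
    inferInstanceAs (MeasureTheory.Measure.IsAddHaarMeasure
      ((MeasureTheory.volume : MeasureTheory.Measure (EN N)).prod MeasureTheory.volume))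
  have hL1 : LipschitzWith (C1 * 1) fun z : EN N × EN N => J1 z.1 := hJ1.comp LipschitzWith.prod_fst
  have hL2 : LipschitzWith (C2 * 1) fun z : EN N × EN N => J2 z.2 := hJ2.comp LipschitzWith.prod_snd
  have hae := (hL1.prodMk hL2).ae_differentiableAt (μ := MeasureTheory.volume)
  rw [MeasureTheory.ae_iff] at hae
  have hT := (hL1.sub Q1.lipschitz).prodMk (hL2.sub Q2.lipschitz)
  have hnull := volume_image_eq_zero_of_lipschitz hT hae
  have hpos : 0 < MeasureTheory.volume (ball (0 : EN N × EN N) s) :=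
    isOpen_ball.measure_pos _ ⟨0, mem_ball_self hs⟩
  obtain ⟨p, hp, hpn⟩ : ∃ p ∈ ball (0 : EN N × EN N) s, p ∉ (fun z : EN N × EN N =>
      (J1 z.1 - Q1 z, J2 z.2 - Q2 z)) ''
      {z | ¬ DifferentiableAt ℝ (fun z : EN N × EN N => (J1 z.1, J2 z.2)) z} := by
    by_contra hcon
    push Not at hcon
    have := MeasureTheory.measure_mono_null hcon hnull
    exact hpos.ne' this
  rw [mem_ball_zero_iff, Prod.norm_def, max_lt_iff] at hp
  obtain ⟨hp1, hp2⟩ := hp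
  obtain ⟨hf1, hf2⟩ := hfirst p hp1.le hp2.le
  have hz := hZ1 p hp1.le hp2.le
  have hm := hZ2 p hp1.le hp2.le
  set z := Z p with hzdef
  have hdiff : DifferentiableAt ℝ (fun z : EN N × EN N => (J1 z.1, J2 z.2)) z := by
    by_contra hcon
    refine hpn ⟨z, hcon, ?_⟩
    simp only [hf1, hf2, add_sub_cancel_left]
  have hd1 : DifferentiableAt ℝ J1 z.1 := by
    have h1 : DifferentiableAt ℝ (fun k : EN N => (k, z.2)) z.1 :=
      differentiableAt_id.prodMk (differentiableAt_const _)
    have h2 : DifferentiableAt ℝ (fun z : EN N × EN N => J1 z.1) z := hdiff.fst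
    exact DifferentiableAt.comp z.1 (g := fun z : EN N × EN N => J1 z.1) h2 h1
  have hd2 : DifferentiableAt ℝ J2 z.2 := by
    have h1 : DifferentiableAt ℝ (fun k : EN N => (z.1, k)) z.2 :=
      (differentiableAt_const _).prodMk differentiableAt_id
    have h2 : DifferentiableAt ℝ (fun z : EN N × EN N => J2 z.2) z := hdiff.snd
    exact DifferentiableAt.comp z.2 (g := fun z : EN N × EN N => J2 z.2) h2 h1
  have hzn : ‖z‖ ≤ 2 * s / ε := by
    rw [Prod.norm_def]
    exact max_le (by linarith [norm_nonneg z.2]) (by linarith [norm_nonneg z.1])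
  have hse : 0 ≤ 2 * s / ε := by positivity
  have hq1 := norm_nonneg Q1
  have hq2 := norm_nonneg Q2
  refine ⟨z.1, z.2, ?_, ?_, ?_, ?_, hd1, hd2, fun h k => ?_⟩
  · nlinarith [norm_nonneg z.2]
  · nlinarith [norm_nonneg z.1]
  · rw [hf1]
    have h1 := norm_add_le (Q1 z) p.1
    have h2 := Q1.le_opNorm z
    nlinarith
  · rw [hf2]
    have h1 := norm_add_le (Q2 z) p.2
    have h2 := Q2.le_opNorm z
    nlinarith
  -- second order condition
  refine le_of_forall_pos_le_add fun ε' hε' => ?_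
  set c : ℝ := ‖h‖ ^ 2 + ‖k‖ ^ 2 + 1 with hc
  have hcpos : 0 < c := by positivity
  have hη : 0 < ε' / (2 * c) := by positivity
  have x1 := subgrad_expansion hJ1 hs1 hd1.hasFDerivAt hη
  have x2 := subgrad_expansion hJ2 hs2 hd2.hasFDerivAt hη
  have t1 : Tendsto (fun t : ℝ => t • h) (𝓝[>] 0) (𝓝 0) := by
    have : Tendsto (fun t : ℝ => t • h) (𝓝 0) (𝓝 ((0 : ℝ) • h)) :=
      (continuous_id.smul continuous_const).tendsto 0
    rw [zero_smul] at this
    exact this.mono_left nhdsWithin_le_nhds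
  have t2 : Tendsto (fun t : ℝ => t • k) (𝓝[>] 0) (𝓝 0) := by
    have : Tendsto (fun t : ℝ => t • k) (𝓝 0) (𝓝 ((0 : ℝ) • k)) :=
      (continuous_id.smul continuous_const).tendsto 0
    rw [zero_smul] at this
    exact this.mono_left nhdsWithin_le_nhds
  obtain ⟨t, ⟨ht1, ht2⟩, ht⟩ := (((t1.eventually x1).and (t2.eventually x2)).and
    self_mem_nhdsWithin).exists
  have htpos : 0 < t := ht
  have h1 := hm (z + t • (h, k))
  rw [hquad] at h1
  simp only [Prod.fst_add, Prod.snd_add, Prod.smul_mk, inner_add_right, real_inner_smul_right]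
    at h1
  have h2 : (t • h, t • k) = t • ((h, k) : EN N × EN N) := rfl
  rw [h2, map_smul, map_smul] at h1
  have h3 := (abs_le.1 ht1).2
  have h4 := (abs_le.1 ht2).2
  simp only [map_smul, norm_smul, Real.norm_of_nonneg htpos.le, real_inner_smul_left,
    real_inner_smul_right] at h1 h3 h4
  rw [hf1, inner_add_left] at h3
  rw [hf2, inner_add_left] at h4
  have h5 : t ^ 2 * (⟪Q1 (h, k), h⟫ + ⟪Q2 (h, k), k⟫) ≤ t ^ 2 * (⟪fderiv ℝ J1 z.1 h, h⟫
      + ⟪fderiv ℝ J2 z.2 k, k⟫ + 2 * (ε' / (2 * c)) * (‖h‖ ^ 2 + ‖k‖ ^ 2)) := by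
    linarith
  have h6 := le_of_mul_le_mul_left h5 (by positivity)
  refine h6.trans ?_
  have h7 : 2 * (ε' / (2 * c)) * (‖h‖ ^ 2 + ‖k‖ ^ 2) ≤ ε' := by
    have : 2 * (ε' / (2 * c)) * c = ε' := by field_simp
    have h8 : ‖h‖ ^ 2 + ‖k‖ ^ 2 ≤ c := by linarith
    calc 2 * (ε' / (2 * c)) * (‖h‖ ^ 2 + ‖k‖ ^ 2) ≤ 2 * (ε' / (2 * c)) * c := by gcongr
      _ = ε' := this
  linarith

/-! ### The theorem on sums -/

/-- At a point `z` where the regularisation `e` of `V` has a positive definite Hessian, the point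
`z - σ⁻¹ J z` lies in `K` and `V` inherits there the second order expansion of `e` from below. -/
lemma regularization_transfer {N : ℕ} {K : Set (EN N)} {V e : EN N → ℝ} {J : EN N → EN N} {σ : ℝ}
    (hσ : 0 < σ) {C : ℝ≥0} (hJ : LipschitzWith C J)
    (hs : ∀ z z', e z + ⟪J z, z' - z⟫ ≤ e z')
    (h3 : ∀ z, ∀ ζ ∈ K, e z ≤ V ζ + σ / 2 * ‖z - ζ‖ ^ 2)
    (h4 : ∀ z, ∃ ζ ∈ K, e z = ⟪z - ζ, J z⟫ - ‖J z‖ ^ 2 / (2 * σ) + V ζ)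
    {z : EN N} (hd : DifferentiableAt ℝ J z) {κ : ℝ} (hκ : 0 < κ)
    (hpos : ∀ h, κ * ‖h‖ ^ 2 ≤ ⟪fderiv ℝ J z h, h⟫) :
    ∃ ζ ∈ K, ‖z - ζ‖ = ‖J z‖ / σ ∧ V ζ = e z - ‖J z‖ ^ 2 / (2 * σ) ∧
      ∀ ε' > 0, ∀ᶠ x in 𝓝[K] ζ, V ζ + ⟪J z, x - ζ⟫ + 1 / 2 * ⟪fderiv ℝ J z (x - ζ), x - ζ⟫
        - ε' * ‖x - ζ‖ ^ 2 ≤ V x := by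
  obtain ⟨ζ, hζK, hζ⟩ := h4 z
  set ζs : EN N := z - σ⁻¹ • J z with hζs
  have hzs : z - ζs = σ⁻¹ • J z := by rw [hζs]; abel
  have hnzs : ‖z - ζs‖ = ‖J z‖ / σ := by
    rw [hzs, norm_smul, Real.norm_of_nonneg (by positivity), inv_mul_eq_div]
  have hsq : σ / 2 * ‖z - ζs‖ ^ 2 = ‖J z‖ ^ 2 / (2 * σ) := by
    rw [hnzs]; field_simp
  -- the minimiser in the formula for `e z` is forced by strict convexity
  have hd0 : ζ - ζs = 0 := by
    by_contra hne
    set d := ζ - ζs with hdd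
    have hdn : 0 < ‖d‖ ^ 2 := by positivity
    have u1 := h3 (z + d) ζ hζK
    rw [show z + d - ζ = z - ζs by rw [hdd]; abel, hsq] at u1
    have u2 : ⟪z - ζ, J z⟫ = ‖J z‖ ^ 2 / σ - ⟪J z, d⟫ := by
      rw [show z - ζ = (z - ζs) - d by rw [hdd]; abel, inner_sub_left, hzs, real_inner_smul_left,
        real_inner_self_eq_norm_sq, real_inner_comm, inv_mul_eq_div]
    have u3 : e (z + d) ≤ e z + ⟪J z, d⟫ := by
      rw [hζ, u2]
      have : ‖J z‖ ^ 2 / σ = 2 * (‖J z‖ ^ 2 / (2 * σ)) := by field_simp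
      linarith
    have x1 := subgrad_expansion hJ hs hd.hasFDerivAt (show 0 < κ / 4 by positivity)
    have t1 : Tendsto (fun t : ℝ => t • d) (𝓝[>] 0) (𝓝 0) := by
      have : Tendsto (fun t : ℝ => t • d) (𝓝 0) (𝓝 ((0 : ℝ) • d)) :=
        (continuous_id.smul continuous_const).tendsto 0
      rw [zero_smul] at this
      exact this.mono_left nhdsWithin_le_nhds
    obtain ⟨t, ⟨ht1, ht2⟩, ht⟩ := (((t1.eventually x1).and
      (nhdsWithin_le_nhds (eventually_lt_nhds (show (0 : ℝ) < 1 by norm_num)))).and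
      self_mem_nhdsWithin).exists
    have htpos : 0 < t := ht
    have w1 := hs (z + t • d) (z + d)
    have w2 := hs (z + t • d) z
    rw [show z + d - (z + t • d) = (1 - t) • d by rw [sub_smul, one_smul]; abel,
      real_inner_smul_right] at w1
    rw [show z - (z + t • d) = (-t) • d by rw [neg_smul]; abel, real_inner_smul_right] at w2
    have w3 := (abs_le.1 ht1).1
    have w4 := hpos (t • d)
    rw [norm_smul, Real.norm_of_nonneg htpos.le] at w3 w4
    rw [real_inner_smul_right] at w3
    have w5 : e (z + t • d) ≤ t * e (z + d) + (1 - t) * e z := by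
      have := mul_le_mul_of_nonneg_left w1 htpos.le
      have := mul_le_mul_of_nonneg_left w2 (show 0 ≤ 1 - t by linarith)
      linarith
    have w6 := mul_le_mul_of_nonneg_left u3 htpos.le
    have w7 : 0 < (t * ‖d‖) ^ 2 := by
      have : 0 < ‖d‖ := norm_pos_iff.2 hne
      positivity
    nlinarith
  have hζe : ζ = ζs := sub_eq_zero.1 hd0
  have hVζ : V ζ = e z - ‖J z‖ ^ 2 / (2 * σ) := by
    rw [hζe, hzs, real_inner_smul_left, real_inner_self_eq_norm_sq] at hζ
    rw [hζe, hζ]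
    field_simp
    ring
  refine ⟨ζ, hζK, by rw [hζe, hnzs], hVζ, fun ε' hε' => ?_⟩
  have x1 := subgrad_expansion hJ hs hd.hasFDerivAt hε'
  have t1 : Tendsto (fun x => x - ζ) (𝓝[K] ζ) (𝓝 0) := by
    have : Tendsto (fun x => x - ζ) (𝓝 ζ) (𝓝 (ζ - ζ)) :=
      (continuous_id.sub continuous_const).tendsto ζ
    rw [sub_self] at this
    exact this.mono_left nhdsWithin_le_nhds
  filter_upwards [t1.eventually x1, self_mem_nhdsWithin] with x hx hxK
  have y1 := h3 (z + (x - ζ)) x hxK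
  rw [show z + (x - ζ) - x = z - ζs by rw [hζe]; abel, hsq] at y1
  have y2 := (abs_le.1 hx).1
  linarith

set_option maxHeartbeats 1000000 in
/-- Theorem on sums, in normalised form: two lower semicontinuous functions vanishing at the origin
whose sum is bounded below by a positive definite quadratic form. -/
lemma sums_core {N : ℕ} {K1 K2 : Set (EN N)} (hK1 : IsCompact K1) (hK2 : IsCompact K2)
    (h01 : (0 : EN N) ∈ K1) (h02 : (0 : EN N) ∈ K2) {V1 V2 : EN N → ℝ}
    (hV1 : LowerSemicontinuousOn V1 K1) (hV2 : LowerSemicontinuousOn V2 K2)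
    (hV10 : V1 0 = 0) (hV20 : V2 0 = 0) {R1 R2 : EN N × EN N →L[ℝ] EN N}
    (hR : ∀ z z', ⟪R1 z, z'.1⟫ + ⟪R2 z, z'.2⟫ = ⟪R1 z', z.1⟫ + ⟪R2 z', z.2⟫)
    {c0 : ℝ} (hc0 : 0 < c0)
    (hRpos : ∀ z, c0 * (‖z.1‖ ^ 2 + ‖z.2‖ ^ 2) ≤ ⟪R1 z, z.1⟫ + ⟪R2 z, z.2⟫)
    (hlow : ∀ ζ1 ∈ K1, ∀ ζ2 ∈ K2,
      1 / 2 * (⟪R1 (ζ1, ζ2), ζ1⟫ + ⟪R2 (ζ1, ζ2), ζ2⟫) ≤ V1 ζ1 + V2 ζ2)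
    {ε : ℝ} (hε : 0 < ε) :
    ∃ ζ1 ∈ K1, ∃ ζ2 ∈ K2, ∃ ξ1 ξ2 : EN N, ∃ D1 D2 : EN N →L[ℝ] EN N,
      ‖ζ1‖ < ε ∧ ‖ζ2‖ < ε ∧ ‖ξ1‖ < ε ∧ ‖ξ2‖ < ε ∧ |V1 ζ1| < ε ∧ |V2 ζ2| < ε ∧
      (∀ ε' > 0, ∀ᶠ x in 𝓝[K1] ζ1, V1 ζ1 + ⟪ξ1, x - ζ1⟫ + 1 / 2 * ⟪D1 (x - ζ1), x - ζ1⟫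
        - ε' * ‖x - ζ1‖ ^ 2 ≤ V1 x) ∧
      (∀ ε' > 0, ∀ᶠ x in 𝓝[K2] ζ2, V2 ζ2 + ⟪ξ2, x - ζ2⟫ + 1 / 2 * ⟪D2 (x - ζ2), x - ζ2⟫
        - ε' * ‖x - ζ2‖ ^ 2 ≤ V2 x) ∧
      ∀ h k, ⟪R1 (h, k), h⟫ + ⟪R2 (h, k), k⟫ - ε * (‖h‖ ^ 2 + ‖k‖ ^ 2)
        ≤ ⟪D1 h, h⟫ + ⟪D2 k, k⟫ := by
  set Λ : ℝ := ‖R1‖ ^ 2 + ‖R2‖ ^ 2 with hΛ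
  have hΛ0 : 0 ≤ Λ := by positivity
  set ε0 : ℝ := min ε c0 / 8 with hε0
  have hmin : 0 < min ε c0 := lt_min hε hc0
  have hε0p : 0 < ε0 := by positivity
  have hε1 : 8 * ε0 ≤ ε := by rw [hε0]; linarith [min_le_left ε c0]
  have hε2 : 8 * ε0 ≤ c0 := by rw [hε0]; linarith [min_le_right ε c0]
  set σ : ℝ := Λ / (2 * ε0) + 1 with hσ
  have hσ1 : 1 ≤ σ := by
    have : 0 ≤ Λ / (2 * ε0) := by positivity
    linarith
  have hσ0 : 0 < σ := by linarith
  have hΛσ : Λ / (2 * σ) ≤ ε0 := by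
    rw [div_le_iff₀ (by positivity), hσ]
    have : ε0 * (2 * (Λ / (2 * ε0) + 1)) = Λ + 2 * ε0 := by field_simp
    linarith
  obtain ⟨e1, J1, ⟨C1, hJ1⟩, hs1, h31, h41, h51⟩ := exists_regularization hK1 ⟨0, h01⟩ hV1 hσ0
  obtain ⟨e2, J2, ⟨C2, hJ2⟩, hs2, h32, h42, h52⟩ := exists_regularization hK2 ⟨0, h02⟩ hV2 hσ0
  have he1 : e1 0 ≤ 0 := by simpa [hV10] using h31 0 0 h01
  have he2 : e2 0 ≤ 0 := by simpa [hV20] using h32 0 0 h02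
  have hRn : ∀ z : EN N × EN N, ‖R1 z‖ ^ 2 + ‖R2 z‖ ^ 2 ≤ Λ * (‖z.1‖ ^ 2 + ‖z.2‖ ^ 2) := by
    intro z
    have hz : ‖z‖ ^ 2 ≤ ‖z.1‖ ^ 2 + ‖z.2‖ ^ 2 := by
      rw [Prod.norm_def]
      rcases max_cases ‖z.1‖ ‖z.2‖ with h | h <;> rw [h.1] <;> nlinarith [norm_nonneg z.1, norm_nonneg z.2]
    have a1 : ‖R1 z‖ ^ 2 ≤ ‖R1‖ ^ 2 * ‖z‖ ^ 2 := by
      rw [← mul_pow]; exact pow_le_pow_left₀ (norm_nonneg _) (R1.le_opNorm z) 2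
    have a2 : ‖R2 z‖ ^ 2 ≤ ‖R2‖ ^ 2 * ‖z‖ ^ 2 := by
      rw [← mul_pow]; exact pow_le_pow_left₀ (norm_nonneg _) (R2.le_opNorm z) 2
    have := mul_le_mul_of_nonneg_left hz hΛ0
    rw [hΛ] at this ⊢
    linarith
  have hlowe : ∀ z : EN N × EN N, 1 / 2 * (⟪R1 z, z.1⟫ + ⟪R2 z, z.2⟫)
      - ε0 * (‖z.1‖ ^ 2 + ‖z.2‖ ^ 2) ≤ e1 z.1 + e2 z.2 := by
    intro z
    obtain ⟨ζ1, hζ1, b1⟩ := h51 z.1 (R1 z)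
    obtain ⟨ζ2, hζ2, b2⟩ := h52 z.2 (R2 z)
    have b3 := hlow ζ1 hζ1 ζ2 hζ2
    have b4 : 0 ≤ ⟪R1 (z - (ζ1, ζ2)), (z - (ζ1, ζ2)).1⟫ + ⟪R2 (z - (ζ1, ζ2)), (z - (ζ1, ζ2)).2⟫ :=
      le_trans (by positivity) (hRpos _)
    have b5 := hR z (ζ1, ζ2)
    simp only [map_sub, Prod.fst_sub, Prod.snd_sub, inner_sub_left, inner_sub_right] at b4 b5
    rw [inner_sub_left, real_inner_comm, real_inner_comm _ ζ1] at b1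
    rw [inner_sub_left, real_inner_comm, real_inner_comm _ ζ2] at b2
    have b6 : ‖R1 z‖ ^ 2 / (2 * σ) + ‖R2 z‖ ^ 2 / (2 * σ) ≤ ε0 * (‖z.1‖ ^ 2 + ‖z.2‖ ^ 2) := by
      rw [← add_div]
      calc _ ≤ Λ * (‖z.1‖ ^ 2 + ‖z.2‖ ^ 2) / (2 * σ) := by gcongr; exact hRn z
        _ = Λ / (2 * σ) * (‖z.1‖ ^ 2 + ‖z.2‖ ^ 2) := by ring
        _ ≤ _ := by gcongr
    linarith
  have he10 : e1 0 = 0 ∧ e2 0 = 0 := by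
    have := hlowe 0
    simp only [Prod.fst_zero, Prod.snd_zero, inner_zero_right, norm_zero] at this
    norm_num at this
    constructor <;> linarith
  set Q1 : EN N × EN N →L[ℝ] EN N := R1 - (4 * ε0) • ContinuousLinearMap.fst ℝ (EN N) (EN N)
    with hQ1
  set Q2 : EN N × EN N →L[ℝ] EN N := R2 - (4 * ε0) • ContinuousLinearMap.snd ℝ (EN N) (EN N)
    with hQ2
  have hQ1a : ∀ z w, ⟪Q1 z, w⟫ = ⟪R1 z, w⟫ - 4 * ε0 * ⟪z.1, w⟫ := by
    intro z w
    simp [hQ1, inner_sub_left, real_inner_smul_left]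
  have hQ2a : ∀ z w, ⟪Q2 z, w⟫ = ⟪R2 z, w⟫ - 4 * ε0 * ⟪z.2, w⟫ := by
    intro z w
    simp [hQ2, inner_sub_left, real_inner_smul_left]
  have hQsymm : ∀ z z', ⟪Q1 z, z'.1⟫ + ⟪Q2 z, z'.2⟫ = ⟪Q1 z', z.1⟫ + ⟪Q2 z', z.2⟫ := by
    intro z z'
    rw [hQ1a, hQ2a, hQ1a, hQ2a, real_inner_comm z.1 z'.1, real_inner_comm z.2 z'.2]
    linarith [hR z z']
  have hlowQ : ∀ z : EN N × EN N, 1 / 2 * (⟪Q1 z, z.1⟫ + ⟪Q2 z, z.2⟫)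
      + ε0 * (‖z.1‖ ^ 2 + ‖z.2‖ ^ 2) ≤ e1 z.1 + e2 z.2 := by
    intro z
    rw [hQ1a, hQ2a, real_inner_self_eq_norm_sq, real_inner_self_eq_norm_sq]
    linarith [hlowe z]
  have hce1 : ∀ᶠ z in 𝓝 (0 : EN N), |e1 z| < ε / 2 := by
    have := (subgrad_hasFDerivAt hJ1 hs1 0).continuousAt.abs
    exact this.eventually (gt_mem_nhds (by simp [he10.1]; exact hε))
  have hce2 : ∀ᶠ z in 𝓝 (0 : EN N), |e2 z| < ε / 2 := by
    have := (subgrad_hasFDerivAt hJ2 hs2 0).continuousAt.abs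
    exact this.eventually (gt_mem_nhds (by simp [he10.2]; exact hε))
  obtain ⟨δ0, hδ0, hball⟩ := Metric.eventually_nhds_iff_ball.1 (hce1.and hce2)
  set δ := min δ0 (min (ε / 2) 1) with hδ
  have hδp : 0 < δ := lt_min hδ0 (lt_min (by positivity) one_pos)
  have hδa : δ ≤ δ0 := min_le_left _ _
  have hδb : δ ≤ ε / 2 := (min_le_right _ _).trans (min_le_left _ _)
  have hδc : δ ≤ 1 := (min_le_right _ _).trans (min_le_right _ _)
  obtain ⟨z1, z2, hz1, hz2, hj1, hj2, hd1, hd2, hH⟩ :=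
    jensen_core hJ1 hJ2 hs1 hs2 hQsymm hε0p hlowQ he1 he2 hδp
  have hH' : ∀ h k, ⟪R1 (h, k), h⟫ + ⟪R2 (h, k), k⟫ - 4 * ε0 * (‖h‖ ^ 2 + ‖k‖ ^ 2)
        ≤ ⟪fderiv ℝ J1 z1 h, h⟫ + ⟪fderiv ℝ J2 z2 k, k⟫ := by
    intro h k
    have := hH h k
    rw [hQ1a, hQ2a, real_inner_self_eq_norm_sq, real_inner_self_eq_norm_sq] at this
    linarith
  have hp1 : ∀ h, (4 * ε0) * ‖h‖ ^ 2 ≤ ⟪fderiv ℝ J1 z1 h, h⟫ := by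
    intro h
    have q1 := hH' h 0
    have q2 := hRpos (h, 0)
    simp only [inner_zero_right, norm_zero] at q1 q2
    nlinarith [sq_nonneg ‖h‖]
  have hp2 : ∀ h, (4 * ε0) * ‖h‖ ^ 2 ≤ ⟪fderiv ℝ J2 z2 h, h⟫ := by
    intro h
    have q1 := hH' 0 h
    have q2 := hRpos (0, h)
    simp only [inner_zero_right, norm_zero] at q1 q2
    nlinarith [sq_nonneg ‖h‖]
  obtain ⟨ζ1, hζ1, n1, v1, s1⟩ :=
    regularization_transfer hσ0 hJ1 hs1 h31 h41 hd1 (by positivity) hp1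
  obtain ⟨ζ2, hζ2, n2, v2, s2⟩ :=
    regularization_transfer hσ0 hJ2 hs2 h32 h42 hd2 (by positivity) hp2
  have hb1 := (hball z1 (by simpa using hz1.trans_le hδa)).1
  have hb2 := (hball z2 (by simpa using hz2.trans_le hδa)).2
  have small : ∀ j : EN N, ‖j‖ < δ → ‖j‖ / σ < ε / 2 ∧ ‖j‖ ^ 2 / (2 * σ) < ε / 2 := by
    intro j hj
    have hn := norm_nonneg j
    constructor
    · exact (div_le_self hn hσ1).trans_lt (hj.trans_le hδb)
    · have : ‖j‖ ^ 2 / (2 * σ) ≤ ‖j‖ ^ 2 := div_le_self (by positivity) (by linarith)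
      nlinarith
  refine ⟨ζ1, hζ1, ζ2, hζ2, J1 z1, J2 z2, fderiv ℝ J1 z1, fderiv ℝ J2 z2, ?_, ?_, ?_, ?_, ?_, ?_,
    s1, s2, fun h k => ?_⟩
  · have t1 := norm_sub_norm_le ζ1 z1
    rw [norm_sub_rev] at t1
    linarith [(small _ hj1).1]
  · have t1 := norm_sub_norm_le ζ2 z2
    rw [norm_sub_rev] at t1
    linarith [(small _ hj2).1]
  · linarith
  · linarith
  · have q1 := (small _ hj1).2
    have q2 : 0 ≤ ‖J1 z1‖ ^ 2 / (2 * σ) := by positivity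
    rw [v1, abs_lt]
    rw [abs_lt] at hb1
    constructor <;> linarith
  · have q1 := (small _ hj2).2
    have q2 : 0 ≤ ‖J2 z2‖ ^ 2 / (2 * σ) := by positivity
    rw [v2, abs_lt]
    rw [abs_lt] at hb2
    constructor <;> linarith
  · refine le_trans ?_ (hH' h k)
    nlinarith [sq_nonneg ‖h‖, sq_nonneg ‖k‖]

/-- The quadratic form `⟨X h, h⟩` of a matrix. -/
def qf {N : ℕ} (X : Mat N) (h : EN N) : ℝ := ⟪Matrix.toEuclideanLin X h, h⟫

/-- Second order superjets of `u` relative to `K`: `(p, X)` is a superjet at `x₀` when `u` lies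
below the corresponding second order expansion, up to `o(‖x - x₀‖²)`, as `x → x₀` in `K`. -/
def SupJet {N : ℕ} (K : Set (EN N)) (u : EN N → ℝ) (x₀ p : EN N) (X : Mat N) : Prop :=
  ∀ ε > 0, ∀ᶠ x in 𝓝[K] x₀, u x ≤ u x₀ + ⟪p, x - x₀⟫ + 1 / 2 * qf X (x - x₀) + ε * ‖x - x₀‖ ^ 2

lemma qf_transpose {N : ℕ} (X : Mat N) (h : EN N) : qf X.transpose h = qf X h := by
  have h1 := Matrix.toEuclideanLin_conjTranspose_eq_adjoint X
  rw [Matrix.conjTranspose_eq_transpose_of_trivial] at h1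
  unfold qf
  rw [h1, LinearMap.adjoint_inner_left, real_inner_comm]

lemma qf_add {N : ℕ} (X Y : Mat N) (h : EN N) : qf (X + Y) h = qf X h + qf Y h := by
  simp [qf, inner_add_left]

lemma qf_sub {N : ℕ} (X Y : Mat N) (h : EN N) : qf (X - Y) h = qf X h - qf Y h := by
  simp [qf, inner_sub_left]

lemma qf_neg {N : ℕ} (X : Mat N) (h : EN N) : qf (-X) h = -qf X h := by
  simp [qf]

lemma qf_smul {N : ℕ} (t : ℝ) (X : Mat N) (h : EN N) : qf (t • X) h = t * qf X h := by
  simp [qf, real_inner_smul_left]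

lemma qf_one {N : ℕ} (h : EN N) : qf (1 : Mat N) h = ‖h‖ ^ 2 := by
  have : Matrix.toEuclideanLin (1 : Mat N) h = h := by
    ext i; simp
  rw [qf, this, real_inner_self_eq_norm_sq]

/-- Every quadratic form is the quadratic form of a symmetric matrix. -/
lemma exists_symm_matrix {N : ℕ} (L : EN N →L[ℝ] EN N) :
    ∃ X : Mat N, X.IsSymm ∧ ∀ h, qf X h = ⟪L h, h⟫ := by
  set M : Mat N := Matrix.toEuclideanLin.symm L.toLinearMap with hM
  have hMq : ∀ h, qf M h = ⟪L h, h⟫ := by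
    intro h
    rw [qf, hM, LinearEquiv.apply_symm_apply]
    rfl
  refine ⟨(1 / 2 : ℝ) • (M + M.transpose), ?_, fun h => ?_⟩
  · unfold Matrix.IsSymm
    rw [Matrix.transpose_smul, Matrix.transpose_add, Matrix.transpose_transpose, add_comm]
  · rw [qf_smul, qf_add, qf_transpose, hMq]
    ring

/-- Translation of the second order information about the normalised function `V` back to `u`. -/
lemma supJet_of_normalized {N : ℕ} {K : Set (EN N)} {u : EN N → ℝ} {x₀ p : EN N} {r lam : ℝ}
    (hlam : 0 ≤ lam) {ζ₁ ξ : EN N} {D : EN N →L[ℝ] EN N} {ε₁ : ℝ}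
    (hζ : ‖ζ₁‖ < ε₁) (hr : ε₁ ≤ r) (hξ : ‖ξ‖ < ε₁) (hε1 : ε₁ ≤ 1)
    (hV : |lam / 2 * ‖ζ₁‖ ^ 2 - (u (x₀ + ζ₁) - u x₀ - ⟪p, ζ₁⟫)| < ε₁)
    (hjet : ∀ ε' > 0, ∀ᶠ x in 𝓝[(fun ζ => x₀ + ζ) ⁻¹' (K ∩ closedBall x₀ r)] ζ₁,
      lam / 2 * ‖ζ₁‖ ^ 2 - (u (x₀ + ζ₁) - u x₀ - ⟪p, ζ₁⟫) + ⟪ξ, x - ζ₁⟫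
        + 1 / 2 * ⟪D (x - ζ₁), x - ζ₁⟫ - ε' * ‖x - ζ₁‖ ^ 2
        ≤ lam / 2 * ‖x‖ ^ 2 - (u (x₀ + x) - u x₀ - ⟪p, x⟫)) :
    |u (x₀ + ζ₁) - u x₀| ≤ ε₁ * (‖p‖ + lam + 1) ∧
    ‖p + lam • ζ₁ - ξ - p‖ ≤ ε₁ * (‖p‖ + lam + 1) ∧
    ∃ X : Mat N, X.IsSymm ∧ (∀ h, qf X h = lam * ‖h‖ ^ 2 - ⟪D h, h⟫) ∧
      SupJet K u (x₀ + ζ₁) (p + lam • ζ₁ - ξ) X := by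
  have hn := norm_nonneg ζ₁
  have hpn := norm_nonneg p
  refine ⟨?_, ?_, ?_⟩
  · rw [abs_lt] at hV
    have h1 := abs_le.1 (abs_real_inner_le_norm p ζ₁)
    have h2 : ‖p‖ * ‖ζ₁‖ ≤ ‖p‖ * ε₁ := by gcongr
    have h3 : 0 ≤ lam / 2 * ‖ζ₁‖ ^ 2 := by positivity
    have h4 : lam / 2 * ‖ζ₁‖ ^ 2 ≤ lam * ε₁ := by
      have : ‖ζ₁‖ ^ 2 ≤ ε₁ := by nlinarith
      nlinarith
    rw [abs_le]
    constructor <;> linarith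
  · rw [show p + lam • ζ₁ - ξ - p = lam • ζ₁ - ξ by abel]
    refine (norm_sub_le _ _).trans ?_
    rw [norm_smul, Real.norm_of_nonneg hlam]
    have : 0 ≤ ε₁ := by linarith
    nlinarith
  · obtain ⟨X, hX, hXq⟩ := exists_symm_matrix (lam • ContinuousLinearMap.id ℝ (EN N) - D)
    have hXq' : ∀ h, qf X h = lam * ‖h‖ ^ 2 - ⟪D h, h⟫ := by
      intro h
      rw [hXq]
      simp [inner_sub_left, real_inner_smul_left]
    refine ⟨X, hX, hXq', fun ε' hε' => ?_⟩
    have t1 : Tendsto (fun x => x - x₀) (𝓝[K] (x₀ + ζ₁))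
        (𝓝[(fun ζ => x₀ + ζ) ⁻¹' (K ∩ closedBall x₀ r)] ζ₁) := by
      refine tendsto_nhdsWithin_iff.2 ⟨?_, ?_⟩
      · have : Tendsto (fun x => x - x₀) (𝓝 (x₀ + ζ₁)) (𝓝 (x₀ + ζ₁ - x₀)) :=
          (continuous_id.sub continuous_const).tendsto _
        rw [add_sub_cancel_left] at this
        exact this.mono_left nhdsWithin_le_nhds
      · have hb : closedBall x₀ r ∈ 𝓝 (x₀ + ζ₁) := by
          refine mem_of_superset (isOpen_ball.mem_nhds ?_) (ball_subset_closedBall (x := x₀) (ε := r))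
          rw [mem_ball, dist_eq_norm, add_sub_cancel_left]
          linarith
        filter_upwards [self_mem_nhdsWithin, nhdsWithin_le_nhds hb] with x hx1 hx2
        simp only [mem_preimage, add_sub_cancel]
        exact ⟨hx1, hx2⟩
    filter_upwards [t1.eventually (hjet ε' hε')] with x hx
    rw [add_sub_cancel] at hx
    have e1 : x - x₀ = ζ₁ + (x - (x₀ + ζ₁)) := by abel
    set w := x - (x₀ + ζ₁) with hw
    rw [show x - x₀ - ζ₁ = w by rw [hw]; abel, e1, norm_add_sq_real, inner_add_right] at hx
    rw [hXq', inner_sub_left, inner_add_left, real_inner_smul_left]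
    linarith

set_option maxHeartbeats 1000000 in
/-- Theorem on sums for semicontinuous functions on a compact set: a local quadratic upper bound
for `u(x) + w(y)` yields superjets of `u` and `w` at nearby points, with coupled second order
parts. -/
lemma sums_superjets {N : ℕ} {K : Set (EN N)} (hK : IsCompact K) {u w : EN N → ℝ}
    (hu : UpperSemicontinuousOn u K) (hw : UpperSemicontinuousOn w K) {x₀ y₀ : EN N}
    (hx₀ : x₀ ∈ K) (hy₀ : y₀ ∈ K) (p q : EN N) {S1 S2 : EN N × EN N →L[ℝ] EN N}
    (hS : ∀ z z', ⟪S1 z, z'.1⟫ + ⟪S2 z, z'.2⟫ = ⟪S1 z', z.1⟫ + ⟪S2 z', z.2⟫)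
    {r : ℝ} (hr : 0 < r)
    (hup : ∀ x ∈ K, ∀ y ∈ K, ‖x - x₀‖ ≤ r → ‖y - y₀‖ ≤ r →
      u x + w y ≤ u x₀ + w y₀ + ⟪p, x - x₀⟫ + ⟪q, y - y₀⟫ +
        1 / 2 * (⟪S1 (x - x₀, y - y₀), x - x₀⟫ + ⟪S2 (x - x₀, y - y₀), y - y₀⟫))
    {ε : ℝ} (hε : 0 < ε) :
    ∃ x ∈ K, ∃ y ∈ K, ∃ p' q' : EN N, ∃ X Z : Mat N, ‖x - x₀‖ < ε ∧ ‖y - y₀‖ < ε ∧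
      |u x - u x₀| < ε ∧ |w y - w y₀| < ε ∧ ‖p' - p‖ < ε ∧ ‖q' - q‖ < ε ∧ X.IsSymm ∧ Z.IsSymm ∧
      SupJet K u x p' X ∧ SupJet K w y q' Z ∧
      ∀ h k, qf X h + qf Z k ≤ ⟪S1 (h, k), h⟫ + ⟪S2 (h, k), k⟫ + ε * (‖h‖ ^ 2 + ‖k‖ ^ 2) := by
  set lam : ℝ := ‖S1‖ + ‖S2‖ + 1 with hlam
  have hlam0 : 0 ≤ lam := by positivity
  have hcomp : ∀ x₀ : EN N, IsCompact ((fun ζ => x₀ + ζ) ⁻¹' (K ∩ closedBall x₀ r)) := fun x₀ =>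
    (Homeomorph.addLeft x₀).isCompact_preimage.2 (hK.inter_right isClosed_closedBall)
  have hlsc : ∀ (u : EN N → ℝ) (x₀ p : EN N), UpperSemicontinuousOn u K →
      LowerSemicontinuousOn (fun ζ => lam / 2 * ‖ζ‖ ^ 2 - (u (x₀ + ζ) - u x₀ - ⟪p, ζ⟫))
        ((fun ζ => x₀ + ζ) ⁻¹' (K ∩ closedBall x₀ r)) := by
    intro u x₀ p hu
    have h1 : UpperSemicontinuousOn (fun ζ => u (x₀ + ζ))
        ((fun ζ => x₀ + ζ) ⁻¹' (K ∩ closedBall x₀ r)) := by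
      intro ζ hζ c hc
      have t : Tendsto (fun ζ => x₀ + ζ) (𝓝[(fun ζ => x₀ + ζ) ⁻¹' (K ∩ closedBall x₀ r)] ζ)
          (𝓝[K] (x₀ + ζ)) := by
        refine tendsto_nhdsWithin_iff.2 ⟨((continuous_const.add continuous_id).tendsto
          ζ).mono_left nhdsWithin_le_nhds, ?_⟩
        filter_upwards [self_mem_nhdsWithin] with x hx using hx.1
      exact t.eventually (hu (x₀ + ζ) hζ.1 c hc)
    have h2 : Continuous fun ζ : EN N => lam / 2 * ‖ζ‖ ^ 2 + u x₀ + ⟪p, ζ⟫ :=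
      ((continuous_const.mul (continuous_norm.pow 2)).add continuous_const).add
        (continuous_const.inner continuous_id)
    have h3 := (h2.lowerSemicontinuous.lowerSemicontinuousOn
      ((fun ζ => x₀ + ζ) ⁻¹' (K ∩ closedBall x₀ r)))
    have h4 : LowerSemicontinuousOn (fun ζ => -u (x₀ + ζ))
        ((fun ζ => x₀ + ζ) ⁻¹' (K ∩ closedBall x₀ r)) := by
      intro ζ hζ c hc
      filter_upwards [h1 ζ hζ (-c) (by linarith)] with x hx
      linarith
    have h5 := h3.add h4
    have h6 : (fun ζ => lam / 2 * ‖ζ‖ ^ 2 - (u (x₀ + ζ) - u x₀ - ⟪p, ζ⟫)) =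
        fun ζ => lam / 2 * ‖ζ‖ ^ 2 + u x₀ + ⟪p, ζ⟫ + -u (x₀ + ζ) := by
      funext ζ; ring
    rw [h6]
    exact h5
  set R1 : EN N × EN N →L[ℝ] EN N := lam • ContinuousLinearMap.fst ℝ (EN N) (EN N) - S1 with hR1
  set R2 : EN N × EN N →L[ℝ] EN N := lam • ContinuousLinearMap.snd ℝ (EN N) (EN N) - S2 with hR2
  have hR1a : ∀ z v, ⟪R1 z, v⟫ = lam * ⟪z.1, v⟫ - ⟪S1 z, v⟫ := by
    intro z v
    simp [hR1, inner_sub_left, real_inner_smul_left]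
  have hR2a : ∀ z v, ⟪R2 z, v⟫ = lam * ⟪z.2, v⟫ - ⟪S2 z, v⟫ := by
    intro z v
    simp [hR2, inner_sub_left, real_inner_smul_left]
  have hRsymm : ∀ z z', ⟪R1 z, z'.1⟫ + ⟪R2 z, z'.2⟫ = ⟪R1 z', z.1⟫ + ⟪R2 z', z.2⟫ := by
    intro z z'
    rw [hR1a, hR2a, hR1a, hR2a, real_inner_comm z.1 z'.1, real_inner_comm z.2 z'.2]
    linarith [hS z z']
  have hRpos : ∀ z : EN N × EN N, 1 * (‖z.1‖ ^ 2 + ‖z.2‖ ^ 2) ≤ ⟪R1 z, z.1⟫ + ⟪R2 z, z.2⟫ := by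
    intro z
    rw [hR1a, hR2a, real_inner_self_eq_norm_sq, real_inner_self_eq_norm_sq]
    have hz : ‖z‖ ^ 2 ≤ ‖z.1‖ ^ 2 + ‖z.2‖ ^ 2 := by
      rw [Prod.norm_def]
      rcases max_cases ‖z.1‖ ‖z.2‖ with h | h <;> rw [h.1] <;>
        nlinarith [norm_nonneg z.1, norm_nonneg z.2]
    have a1 : ⟪S1 z, z.1⟫ ≤ ‖S1‖ * ‖z‖ ^ 2 := by
      refine (real_inner_le_norm _ _).trans ?_
      calc ‖S1 z‖ * ‖z.1‖ ≤ (‖S1‖ * ‖z‖) * ‖z‖ := by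
            gcongr
            · exact S1.le_opNorm z
            · exact norm_fst_le z
        _ = _ := by ring
    have a2 : ⟪S2 z, z.2⟫ ≤ ‖S2‖ * ‖z‖ ^ 2 := by
      refine (real_inner_le_norm _ _).trans ?_
      calc ‖S2 z‖ * ‖z.2‖ ≤ (‖S2‖ * ‖z‖) * ‖z‖ := by
            gcongr
            · exact S2.le_opNorm z
            · exact norm_snd_le z
        _ = _ := by ring
    have a3 := mul_le_mul_of_nonneg_left hz (norm_nonneg S1)
    have a4 := mul_le_mul_of_nonneg_left hz (norm_nonneg S2)
    rw [hlam]
    linarith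
  set m : ℝ := min (min r ε) 1 with hm
  have hm0 : 0 < m := lt_min (lt_min hr hε) one_pos
  have hm1 : m ≤ 1 := min_le_right _ _
  have hmr : m ≤ r := (min_le_left _ _).trans (min_le_left _ _)
  have hme : m ≤ ε := (min_le_left _ _).trans (min_le_right _ _)
  set c : ℝ := ‖p‖ + ‖q‖ + lam + 2 with hc
  have hc0 : 0 < c := by positivity
  have hc1 : 1 < c := by
    have := norm_nonneg p
    have := norm_nonneg q
    linarith
  set ε₁ : ℝ := m / c with hε₁
  have hε₁0 : 0 < ε₁ := by positivity
  have hε₁c : ε₁ * c = m := by rw [hε₁]; field_simp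
  have hε₁m : ε₁ < m := by nlinarith
  have hzero : ∀ x₀ ∈ K, (0 : EN N) ∈ (fun ζ => x₀ + ζ) ⁻¹' (K ∩ closedBall x₀ r) := by
    intro x₀ hx
    simp only [mem_preimage, add_zero]
    exact ⟨hx, mem_closedBall_self hr.le⟩
  obtain ⟨ζ1, hζ1, ζ2, hζ2, ξ1, ξ2, D1, D2, a1, a2, a3, a4, a5, a6, j1, j2, hD⟩ :=
    sums_core (hcomp x₀) (hcomp y₀) (hzero x₀ hx₀) (hzero y₀ hy₀) (hlsc u x₀ p hu)
      (hlsc w y₀ q hw) (by simp) (by simp) hRsymm one_pos hRpos (by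
        intro ζ1 hζ1 ζ2 hζ2
        have b1 : ‖ζ1‖ ≤ r := by simpa [dist_eq_norm] using hζ1.2
        have b2 : ‖ζ2‖ ≤ r := by simpa [dist_eq_norm] using hζ2.2
        have b3 := hup (x₀ + ζ1) hζ1.1 (y₀ + ζ2) hζ2.1 (by simpa using b1) (by simpa using b2)
        simp only [add_sub_cancel_left] at b3
        rw [hR1a, hR2a, real_inner_self_eq_norm_sq, real_inner_self_eq_norm_sq]
        linarith) hε₁0
  obtain ⟨c1, c2, X, hX, hXq, hXj⟩ := supJet_of_normalized hlam0 a1 (hε₁m.le.trans hmr) a3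
    (hε₁m.le.trans hm1) a5 j1
  obtain ⟨d1, d2, Z, hZ, hZq, hZj⟩ := supJet_of_normalized hlam0 a2 (hε₁m.le.trans hmr) a4
    (hε₁m.le.trans hm1) a6 j2
  have hpn := norm_nonneg p
  have hqn := norm_nonneg q
  have f1 : ε₁ * (‖p‖ + lam + 1) < ε := by
    have : ε₁ * (‖p‖ + lam + 1) < ε₁ * c := by
      apply mul_lt_mul_of_pos_left _ hε₁0; linarith
    linarith
  have f2 : ε₁ * (‖q‖ + lam + 1) < ε := by
    have : ε₁ * (‖q‖ + lam + 1) < ε₁ * c := by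
      apply mul_lt_mul_of_pos_left _ hε₁0; linarith
    linarith
  refine ⟨x₀ + ζ1, hζ1.1, y₀ + ζ2, hζ2.1, _, _, X, Z, ?_, ?_, c1.trans_lt f1, d1.trans_lt f2,
    c2.trans_lt f1, d2.trans_lt f2, hX, hZ, hXj, hZj, fun h k => ?_⟩
  · rw [add_sub_cancel_left]; linarith
  · rw [add_sub_cancel_left]; linarith
  · have g1 := hD h k
    rw [hR1a, hR2a, real_inner_self_eq_norm_sq, real_inner_self_eq_norm_sq] at g1
    rw [hXq, hZq]
    have : ε₁ * (‖h‖ ^ 2 + ‖k‖ ^ 2) ≤ ε * (‖h‖ ^ 2 + ‖k‖ ^ 2) := by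
      apply mul_le_mul_of_nonneg_right (by linarith) (by positivity)
    linarith

/-! ### Jets of viscosity solutions -/

/-- The quadratic polynomial with prescribed gradient and Hessian at `x₀`. -/
lemma exists_quadratic_test {N : ℕ} (x₀ p : EN N) {X : Mat N} (hX : X.IsSymm) :
    ContDiff ℝ 2 (fun x : EN N => ⟪p, x - x₀⟫ + 1 / 2 * qf X (x - x₀)) ∧
    gradient (fun x : EN N => ⟪p, x - x₀⟫ + 1 / 2 * qf X (x - x₀)) x₀ = p ∧
    hess (fun x : EN N => ⟪p, x - x₀⟫ + 1 / 2 * qf X (x - x₀)) x₀ = X := by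
  set L : EN N →L[ℝ] EN N := LinearMap.toContinuousLinearMap (Matrix.toEuclideanLin X) with hL
  have hLsymm : ∀ h k : EN N, ⟪L h, k⟫ = ⟪h, L k⟫ := by
    intro h k
    have h1 := Matrix.toEuclideanLin_conjTranspose_eq_adjoint X
    rw [Matrix.conjTranspose_eq_transpose_of_trivial, hX] at h1
    change ⟪Matrix.toEuclideanLin X h, k⟫ = ⟪h, Matrix.toEuclideanLin X k⟫
    conv_lhs => rw [h1]
    rw [LinearMap.adjoint_inner_left]
  have hfun : (fun x : EN N => ⟪p, x - x₀⟫ + 1 / 2 * qf X (x - x₀)) =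
      fun x => ⟪p, x - x₀⟫ + 1 / 2 * ⟪L (x - x₀), x - x₀⟫ := rfl
  rw [hfun]
  have hder : ∀ x, HasFDerivAt (fun x : EN N => ⟪p, x - x₀⟫ + 1 / 2 * ⟪L (x - x₀), x - x₀⟫)
      (innerSL ℝ (p + L (x - x₀))) x := by
    intro x
    have h0 : HasFDerivAt (fun x : EN N => x - x₀) (ContinuousLinearMap.id ℝ (EN N)) x :=
      (hasFDerivAt_id x).sub_const x₀
    have h1 : HasFDerivAt (fun x : EN N => L (x - x₀)) (L.comp (ContinuousLinearMap.id ℝ (EN N)))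
        x := L.hasFDerivAt.comp x h0
    have h2 := (h1.inner ℝ h0).const_mul (1 / 2)
    have h3 := ((innerSL ℝ p).hasFDerivAt.comp x h0).add h2
    refine h3.congr_fderiv ?_
    ext k
    simp only [_root_.add_apply, ContinuousLinearMap.comp_apply,
      _root_.smul_apply, fderivInnerCLM_apply, ContinuousLinearMap.prod_apply,
      innerSL_apply_apply, ContinuousLinearMap.id_apply, smul_eq_mul, inner_add_left]
    rw [hLsymm k (x - x₀), real_inner_comm _ k]
    ring
  have hcd : ContDiff ℝ 2 (fun x : EN N => ⟪p, x - x₀⟫ + 1 / 2 * ⟪L (x - x₀), x - x₀⟫) := by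
    have h0 : ContDiff ℝ 2 (fun x : EN N => x - x₀) := contDiff_id.sub contDiff_const
    exact (contDiff_const.inner ℝ h0).add
      (contDiff_const.mul ((L.contDiff.comp h0).inner ℝ h0))
  refine ⟨hcd, ?_, ?_⟩
  · have : HasGradientAt (fun x : EN N => ⟪p, x - x₀⟫ + 1 / 2 * ⟪L (x - x₀), x - x₀⟫) p x₀ := by
      rw [hasGradientAt_iff_hasFDerivAt]
      refine (hder x₀).congr_fderiv ?_
      ext k
      simp
    exact this.gradient
  · ext i j
    rw [hess, Matrix.of_apply, iteratedFDeriv_two_apply]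
    have hf : fderiv ℝ (fun x : EN N => ⟪p, x - x₀⟫ + 1 / 2 * ⟪L (x - x₀), x - x₀⟫) =
        fun x => innerSL ℝ (p + L (x - x₀)) := funext fun x => (hder x).fderiv
    rw [hf]
    have h1 : HasFDerivAt (fun x : EN N => innerSL ℝ (p + L (x - x₀)))
        ((innerSL ℝ).comp (L.comp (ContinuousLinearMap.id ℝ (EN N)))) x₀ :=
      (innerSL ℝ).hasFDerivAt.comp x₀
        ((L.hasFDerivAt.comp x₀ ((hasFDerivAt_id x₀).sub_const x₀)).const_add p)
    rw [h1.fderiv]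
    have h2 : X j i = X i j := hX.apply i j
    simp [hL, Matrix.toLpLin_apply, EuclideanSpace.inner_single_right, h2]

/-- The two consequences of being a viscosity subsolution that enter the comparison argument: the
differential inequality for superjets with nonzero gradient (at the boundary only for gradients
pointing outwards), and the inequality at interior points of local constancy. The derivative of
the defining function `ρ` plays the role of the exterior normal. -/
def JetSub {N : ℕ} (Ω : Set (EN N)) (ρ : EN N → ℝ) (F : EN N → EN N → Mat N → ℝ)
    (b : EN N → EN N) (α : ℝ) (c₀ : EN N → ℝ → ℝ) (g u : EN N → ℝ) : Prop :=
  (∀ x ∈ closure Ω, ∀ p : EN N, p ≠ 0 → ∀ X : Mat N, X.IsSymm → SupJet (closure Ω) u x p X →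
    (x ∈ Ω ∨ 0 < ⟪p, gradient ρ x⟫) → g x ≤ F x p X + ⟪b x, p⟫ * ‖p‖ ^ α + c₀ x (u x)) ∧
  (∀ x ∈ Ω, ∀ k : ℝ, (∀ᶠ y in 𝓝[closure Ω] x, u y = k) → g x ≤ c₀ x k)

/-- The operator governing `-v` when `F` governs `v`. -/
def dualOp {N : ℕ} (F : EN N → EN N → Mat N → ℝ) : EN N → EN N → Mat N → ℝ :=
  fun x p X => -F x (-p) (-X)

/-- The zeroth order term `(c(x) + λ)|r|^α r`. -/
def zot {N : ℕ} (c : EN N → ℝ) (lam α : ℝ) : EN N → ℝ → ℝ := fun x r => (c x + lam) * |r| ^ α * r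

lemma posSemidef_smul_one {N : ℕ} {t : ℝ} (ht : 0 ≤ t) : (t • (1 : Mat N)).PosSemidef :=
  Matrix.PosSemidef.one.smul ht

/-- Jets with an arbitrarily small upward perturbation produce test functions. -/
lemma supJet_isLocalMaxOn {N : ℕ} {K : Set (EN N)} {u : EN N → ℝ} {x₀ p : EN N} {X : Mat N}
    (h : SupJet K u x₀ p X) {ε : ℝ} (hε : 0 < ε) :
    IsLocalMaxOn (fun x => u x - (⟪p, x - x₀⟫ + 1 / 2 * qf (X + (2 * ε) • (1 : Mat N)) (x - x₀)))
      K x₀ := by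
  filter_upwards [h ε hε] with x hx
  have h0 : qf (X + (2 * ε) • (1 : Mat N)) (x₀ - x₀) = 0 := by simp [qf]
  rw [h0, qf_add, qf_smul, qf_one, sub_self, inner_zero_right]
  linarith

lemma le_of_forall_perturb {x y C : ℝ} (h : ∀ ε > 0, x ≤ y + C * ε) : x ≤ y := by
  refine le_of_forall_pos_le_add fun ε hε => ?_
  have h1 := h (ε / (|C| + 1)) (by positivity)
  have h2 : C * (ε / (|C| + 1)) ≤ ε := by
    rw [mul_div_assoc', div_le_iff₀ (by positivity)]
    nlinarith [le_abs_self C]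
  linarith

lemma jetSub_of_isSubSol {N : ℕ} {Ω : Set (EN N)} {nv : EN N → EN N} {ρ : EN N → ℝ}
    (hρ : IsC2DefiningFun Ω nv ρ) {α a A : ℝ} {F : EN N → EN N → Mat N → ℝ}
    (hF2 : CondF2 Ω α a A F) {b : EN N → EN N} {c₀ : EN N → ℝ → ℝ} {g u : EN N → ℝ}
    (hsub : IsSubSol Ω F b α c₀ g (BNeu nv) u) : JetSub Ω ρ F b α c₀ g u := by
  refine ⟨fun x hx p hp X hX hj hb => ?_, hsub.2.1⟩
  refine le_of_forall_perturb (C := A * ‖p‖ ^ α * (2 * N)) fun ε hε => ?_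
  have hXs : (X + (2 * ε) • (1 : Mat N)).IsSymm := by
    refine hX.add ?_
    unfold Matrix.IsSymm
    simp
  obtain ⟨t1, t2, t3⟩ := exists_quadratic_test x p hXs
  have hmax := supJet_isLocalMaxOn hj hε
  have hF := (hF2.2.2 x hx p hp X ((2 * ε) • 1) hX (posSemidef_smul_one (by positivity))).2
  rw [Matrix.trace_smul, Matrix.trace_one, Fintype.card_fin, smul_eq_mul] at hF
  suffices hmain : g x ≤ F x p (X + (2 * ε) • 1) + ⟪b x, p⟫ * ‖p‖ ^ α + c₀ x (u x) by
    linarith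
  by_cases hxΩ : x ∈ Ω
  · have := hsub.1 x hxΩ _ t1 hmax (by rw [t2]; exact hp)
    rwa [t2, t3] at this
  · have hpos : 0 < ⟪p, gradient ρ x⟫ := hb.resolve_left hxΩ
    have hxf : x ∈ frontier Ω := by
      refine ⟨hx, fun h => hxΩ (interior_subset h)⟩
    have := hsub.2.2.1 x hxf _ t1 hmax (by rw [t2]; exact hp)
    rw [t2, t3] at this
    have hB : 0 < BNeu nv x (u x) p := by
      obtain ⟨h1, h2⟩ := hρ.2.2.2 x hxf
      rw [BNeu, h2, real_inner_smul_right]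
      have : 0 < ‖gradient ρ x‖ := norm_pos_iff.2 h1
      positivity
    rcases min_le_iff.1 this with h | h
    · linarith
    · linarith

/-- Multiplying a supersolution by `τ > 0` and changing sign gives, by homogeneity, a subsolution
for the dual operator. -/
lemma jetSub_of_isSuperSol {N : ℕ} {Ω : Set (EN N)} {nv : EN N → EN N} {ρ : EN N → ℝ}
    (hρ : IsC2DefiningFun Ω nv ρ) {α a A : ℝ} {F : EN N → EN N → Mat N → ℝ}
    (hF1 : CondF1 Ω α F) (hF2 : CondF2 Ω α a A F) {b : EN N → EN N} {c : EN N → ℝ} {lam : ℝ}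
    {h v : EN N → ℝ} (hsup : IsSuperSol Ω F b α (zot c lam α) h (BNeu nv) v) {τ : ℝ}
    (hτ : 0 < τ) :
    JetSub Ω ρ (dualOp F) b α (zot c lam α) (fun x => -(τ ^ (1 + α) * h x))
      (fun x => -(τ * v x)) := by
  have hτα : τ ^ (1 + α) = τ * τ ^ α := by rw [Real.rpow_add hτ, Real.rpow_one]
  have hzot : ∀ x r, zot c lam α x (-(τ * r)) = -(τ ^ (1 + α) * zot c lam α x r) := by
    intro x r
    simp only [zot]
    rw [abs_neg, abs_mul, abs_of_pos hτ, Real.mul_rpow hτ.le (abs_nonneg r), hτα]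
    ring
  refine ⟨fun x hx q hq Z hZ hj hb => ?_, fun x hx k hk => ?_⟩
  · set p : EN N := (-τ⁻¹) • q with hp
    set Y : Mat N := (-τ⁻¹) • Z with hY
    have hp0 : p ≠ 0 := by rw [hp]; simp [hτ.ne', hq]
    have hYs : Y.IsSymm := hZ.smul _
    have hq' : -q = τ • p := by rw [hp, smul_smul]; simp [hτ.ne']
    have hZ' : -Z = τ • Y := by rw [hY, smul_smul]; simp [hτ.ne']
    have hFh := hF1 x hx τ hτ.ne' τ hτ.le p hp0 Y hYs
    rw [abs_of_pos hτ] at hFh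
    have hpn : ‖q‖ = τ * ‖p‖ := by
      rw [← norm_neg, hq', norm_smul, Real.norm_of_nonneg hτ.le]
    have hbq : ⟪b x, q⟫ = -(τ * ⟪b x, p⟫) := by
      rw [← real_inner_smul_right, ← hq', inner_neg_right, neg_neg]
    simp only [dualOp]
    rw [hzot, hq', hZ', hFh, hpn, hbq, Real.mul_rpow hτ.le (norm_nonneg p), hτα]
    suffices hmain : F x p Y + ⟪b x, p⟫ * ‖p‖ ^ α + zot c lam α x (v x) ≤ h x by
      have h1 : 0 < τ * τ ^ α := by positivity
      have h2 := mul_le_mul_of_nonneg_left hmain h1.le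
      linarith
    refine le_of_forall_perturb (C := A * ‖p‖ ^ α * (2 * N)) fun ε hε => ?_
    have hYes : (Y - (2 * ε) • (1 : Mat N)).IsSymm := by
      refine hYs.sub ?_
      unfold Matrix.IsSymm
      simp
    obtain ⟨t1, t2, t3⟩ := exists_quadratic_test x p hYes
    have hF := (hF2.2.2 x hx p hp0 (Y - (2 * ε) • 1) ((2 * ε) • 1) hYes
      (posSemidef_smul_one (by positivity))).2
    rw [Matrix.trace_smul, Matrix.trace_one, Fintype.card_fin, smul_eq_mul, sub_add_cancel] at hF
    have hmin : IsLocalMinOn (fun y => v y - (⟪p, y - x⟫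
        + 1 / 2 * qf (Y - (2 * ε) • (1 : Mat N)) (y - x))) (closure Ω) x := by
      filter_upwards [hj (τ * ε) (by positivity)] with y hy
      have h0 : qf (Y - (2 * ε) • (1 : Mat N)) (x - x) = 0 := by simp [qf]
      rw [h0, qf_sub, qf_smul (2 * ε), qf_one, sub_self, inner_zero_right]
      have e1 : ⟪q, y - x⟫ = -(τ * ⟪p, y - x⟫) := by
        rw [← real_inner_smul_left, ← hq', inner_neg_left, neg_neg]
      have e2 : qf Z (y - x) = -(τ * qf Y (y - x)) := by
        rw [← qf_smul, ← hZ', qf_neg, neg_neg]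
      rw [e1, e2] at hy
      have : τ * (v x + ⟪p, y - x⟫ + 1 / 2 * qf Y (y - x) - ε * ‖y - x‖ ^ 2) ≤ τ * v y := by
        linarith
      have := le_of_mul_le_mul_left this hτ
      linarith
    suffices hmain : F x p (Y - (2 * ε) • 1) + ⟪b x, p⟫ * ‖p‖ ^ α + zot c lam α x (v x) ≤ h x by
      linarith
    by_cases hxΩ : x ∈ Ω
    · have := hsup.1 x hxΩ _ t1 hmin (by rw [t2]; exact hp0)
      rwa [t2, t3] at this
    · have hpos : 0 < ⟪q, gradient ρ x⟫ := hb.resolve_left hxΩ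
      have hxf : x ∈ frontier Ω := ⟨hx, fun h => hxΩ (interior_subset h)⟩
      have := hsup.2.2.1 x hxf _ t1 hmin (by rw [t2]; exact hp0)
      rw [t2, t3] at this
      have hB : BNeu nv x (v x) p < 0 := by
        obtain ⟨h1, h2⟩ := hρ.2.2.2 x hxf
        rw [BNeu, h2, real_inner_smul_right, hp, real_inner_smul_left]
        have h3 : 0 < ‖gradient ρ x‖ := norm_pos_iff.2 h1
        have : 0 < ‖gradient ρ x‖⁻¹ * (τ⁻¹ * ⟪q, gradient ρ x⟫) := by positivity
        linarith
      rcases le_max_iff.1 this with h | h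
      · linarith
      · linarith
  · have h1 : ∀ᶠ y in 𝓝[closure Ω] x, v y = -(k / τ) := by
      filter_upwards [hk] with y hy
      rw [← hy]
      field_simp
    have h2 := hsup.2.1 x hx _ h1
    have h3 := hzot x (-(k / τ))
    rw [show -(τ * -(k / τ)) = k by field_simp] at h3
    rw [h3]
    have : 0 < τ ^ (1 + α) := by positivity
    have := mul_le_mul_of_nonneg_left h2 this.le
    linarith

/-! ### Symmetric matrices and the growth of `F` -/

lemma norm_toEuclideanLin_le {N : ℕ} (X : Mat N) (h : EN N) :
    ‖Matrix.toEuclideanLin X h‖ ≤ matNorm X * ‖h‖ :=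
  (LinearMap.toContinuousLinearMap (Matrix.toEuclideanLin X)).le_opNorm h

lemma matNorm_nonneg {N : ℕ} (X : Mat N) : 0 ≤ matNorm X := norm_nonneg _

lemma abs_qf_le {N : ℕ} (X : Mat N) (h : EN N) : |qf X h| ≤ matNorm X * ‖h‖ ^ 2 := by
  refine (abs_real_inner_le_norm _ _).trans ?_
  have := mul_le_mul_of_nonneg_right (norm_toEuclideanLin_le X h) (norm_nonneg h)
  linarith

lemma matNorm_neg {N : ℕ} (X : Mat N) : matNorm (-X) = matNorm X := by
  simp [matNorm]

lemma toEuclideanLin_symm {N : ℕ} {X : Mat N} (hX : X.IsSymm) (h k : EN N) :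
    ⟪Matrix.toEuclideanLin X h, k⟫ = ⟪h, Matrix.toEuclideanLin X k⟫ := by
  have h1 := Matrix.toEuclideanLin_conjTranspose_eq_adjoint X
  rw [Matrix.conjTranspose_eq_transpose_of_trivial, hX] at h1
  conv_lhs => rw [h1]
  rw [LinearMap.adjoint_inner_left]

lemma qf_add_vec {N : ℕ} {X : Mat N} (hX : X.IsSymm) (h k : EN N) :
    qf X (h + k) = qf X h + 2 * ⟪Matrix.toEuclideanLin X h, k⟫ + qf X k := by
  simp only [qf, map_add, inner_add_left, inner_add_right]
  rw [toEuclideanLin_symm hX k h, real_inner_comm _ k]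
  ring

lemma qf_sub_vec {N : ℕ} {X : Mat N} (hX : X.IsSymm) (h k : EN N) :
    qf X (h - k) = qf X h - 2 * ⟪Matrix.toEuclideanLin X h, k⟫ + qf X k := by
  simp only [qf, map_sub, inner_sub_left, inner_sub_right]
  rw [toEuclideanLin_symm hX k h, real_inner_comm _ k]
  ring

lemma matNorm_le_of_abs_inner_le {N : ℕ} {X : Mat N} {κ : ℝ} (hκ : 0 ≤ κ)
    (h : ∀ h k : EN N, ‖h‖ = 1 → ‖k‖ = 1 → ⟪Matrix.toEuclideanLin X h, k⟫ ≤ κ) :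
    matNorm X ≤ κ := by
  refine ContinuousLinearMap.opNorm_le_bound _ hκ fun x => ?_
  change ‖Matrix.toEuclideanLin X x‖ ≤ κ * ‖x‖
  by_cases hx : x = 0
  · simp [hx]
  by_cases hy : Matrix.toEuclideanLin X x = 0
  · rw [hy, norm_zero]; positivity
  have hxn : 0 < ‖x‖ := norm_pos_iff.2 hx
  have hyn : 0 < ‖Matrix.toEuclideanLin X x‖ := norm_pos_iff.2 hy
  have := h (‖x‖⁻¹ • x) (‖Matrix.toEuclideanLin X x‖⁻¹ • Matrix.toEuclideanLin X x)
    (by rw [norm_smul, norm_inv, norm_norm, inv_mul_cancel₀ hxn.ne'])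
    (by rw [norm_smul, norm_inv, norm_norm, inv_mul_cancel₀ hyn.ne'])
  rw [map_smul, real_inner_smul_left, real_inner_smul_right, real_inner_self_eq_norm_sq] at this
  have h2 : ‖x‖⁻¹ * (‖Matrix.toEuclideanLin X x‖⁻¹ * ‖Matrix.toEuclideanLin X x‖ ^ 2)
      = ‖Matrix.toEuclideanLin X x‖ / ‖x‖ := by field_simp
  rwa [h2, div_le_iff₀ hxn] at this

lemma matNorm_le_of_abs_qf_le {N : ℕ} {X : Mat N} (hX : X.IsSymm) {κ : ℝ} (hκ : 0 ≤ κ)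
    (h : ∀ h : EN N, |qf X h| ≤ κ * ‖h‖ ^ 2) : matNorm X ≤ κ := by
  refine matNorm_le_of_abs_inner_le hκ fun x y hx hy => ?_
  have h1 := qf_add_vec hX x y
  have h2 := qf_sub_vec hX x y
  have h3 := (abs_le.1 (h (x + y))).2
  have h4 := (abs_le.1 (h (x - y))).1
  have h5 := parallelogram_law_with_norm ℝ x y
  rw [hx, hy] at h5
  have h6 : κ * ‖x + y‖ ^ 2 + κ * ‖x - y‖ ^ 2 = 4 * κ := by
    rw [← mul_add]
    nlinarith
  linarith

lemma qf_eq_dotProduct {N : ℕ} (X : Mat N) (h : EN N) :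
    qf X h = (h.ofLp) ⬝ᵥ (X.mulVec h.ofLp) := by
  simp [qf, PiLp.inner_apply, dotProduct, Matrix.toLpLin_apply]

lemma posSemidef_of_qf_nonneg {N : ℕ} {X : Mat N} (hX : X.IsSymm) (h : ∀ h, 0 ≤ qf X h) :
    X.PosSemidef := by
  refine Matrix.PosSemidef.of_dotProduct_mulVec_nonneg ?_ fun x => ?_
  · rw [Matrix.IsHermitian, Matrix.conjTranspose_eq_transpose_of_trivial]
    exact hX
  · have := h (WithLp.toLp 2 x)
    rw [qf_eq_dotProduct] at this
    simpa using this

lemma trace_eq_linearMap_trace {N : ℕ} (X : Mat N) :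
    LinearMap.trace ℝ (EN N) (Matrix.toEuclideanLin X) = X.trace := by
  rw [LinearMap.trace_eq_sum_inner _ (EuclideanSpace.basisFun (Fin N) ℝ), Matrix.trace]
  refine Finset.sum_congr rfl fun i _ => ?_
  simp [Matrix.toLpLin_apply, EuclideanSpace.inner_single_left]

/-- The trace of a positive semidefinite matrix dominates its quadratic form. -/
lemma qf_le_trace {N : ℕ} {X : Mat N} (h : ∀ h, 0 ≤ qf X h) (e : EN N) :
    qf X e ≤ X.trace * ‖e‖ ^ 2 := by
  by_cases he : e = 0
  · simp [he, qf]
  have hen : 0 < ‖e‖ := norm_pos_iff.2 he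
  have hN : 0 < N := by
    rcases Nat.eq_zero_or_pos N with h0 | h0
    · subst h0
      exact absurd (Subsingleton.elim e 0) he
    · exact h0
  set f : EN N := ‖e‖⁻¹ • e with hf
  have hfn : ‖f‖ = 1 := by rw [hf, norm_smul, norm_inv, norm_norm, inv_mul_cancel₀ hen.ne']
  have horth : Orthonormal ℝ (Set.domRestrict {(⟨0, hN⟩ : Fin N)} (fun _ : Fin N => f)) := by
    constructor
    · intro i; exact hfn
    · intro i j hij
      exact absurd (Subsingleton.elim i j) hij
  obtain ⟨B, hB⟩ := horth.exists_orthonormalBasis_extension_of_card_eq (by simp)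
  have h0 : B ⟨0, hN⟩ = f := hB _ rfl
  have ht := LinearMap.trace_eq_sum_inner (Matrix.toEuclideanLin X) B
  rw [trace_eq_linearMap_trace] at ht
  have hle : ⟪B ⟨0, hN⟩, Matrix.toEuclideanLin X (B ⟨0, hN⟩)⟫ ≤ X.trace := by
    rw [ht]
    refine Finset.single_le_sum (f := fun i => ⟪B i, Matrix.toEuclideanLin X (B i)⟫)
      (fun i _ => ?_) (Finset.mem_univ _)
    have := h (B i)
    rwa [qf, real_inner_comm] at this
  rw [h0, real_inner_comm] at hle
  have h1 : e = ‖e‖ • f := by rw [hf, smul_smul, mul_inv_cancel₀ hen.ne', one_smul]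
  have h2 : qf X e = ‖e‖ ^ 2 * ⟪Matrix.toEuclideanLin X f, f⟫ := by
    conv_lhs => rw [h1]
    rw [qf, map_smul, real_inner_smul_left, real_inner_smul_right]
    ring
  rw [h2, mul_comm]
  exact mul_le_mul_of_nonneg_right hle (by positivity)

lemma trace_le_of_qf_le {N : ℕ} {X : Mat N} {κ : ℝ} (h : ∀ h, qf X h ≤ κ * ‖h‖ ^ 2) :
    X.trace ≤ N * κ := by
  rw [← trace_eq_linearMap_trace,
    LinearMap.trace_eq_sum_inner _ (EuclideanSpace.basisFun (Fin N) ℝ)]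
  have h1 : ∀ i ∈ Finset.univ, ⟪EuclideanSpace.basisFun (Fin N) ℝ i,
      Matrix.toEuclideanLin X (EuclideanSpace.basisFun (Fin N) ℝ i)⟫ ≤ κ := by
    intro i _
    have := h (EuclideanSpace.basisFun (Fin N) ℝ i)
    rw [qf, real_inner_comm] at this
    simpa using this
  refine (Finset.sum_le_sum h1).trans ?_
  simp

lemma isSymm_smul_one {N : ℕ} (t : ℝ) : (t • (1 : Mat N)).IsSymm := by
  unfold Matrix.IsSymm
  simp

/-- Linear growth of `F` in the second order variable. -/
lemma abs_F_le {N : ℕ} {Ω : Set (EN N)} {α a A : ℝ} {F : EN N → EN N → Mat N → ℝ}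
    (hF1 : CondF1 Ω α F) (hF2 : CondF2 Ω α a A F) {x p : EN N} (hx : x ∈ closure Ω) (hp : p ≠ 0)
    {X : Mat N} (hX : X.IsSymm) : |F x p X| ≤ 2 * A * N * ‖p‖ ^ α * matNorm X := by
  set m := matNorm X with hm
  have hm0 : 0 ≤ m := matNorm_nonneg X
  have hA : 0 < A := hF2.1.trans_le hF2.2.1
  have ha := hF2.1
  have hpp : 0 ≤ ‖p‖ ^ α := by positivity
  have hF0 : F x p 0 = 0 := by
    have := hF1 x hx 1 one_ne_zero 0 le_rfl p hp 0 (by unfold Matrix.IsSymm; simp)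
    simpa using this
  have hq : ∀ h, qf (X + m • (1 : Mat N)) h = qf X h + m * ‖h‖ ^ 2 := by
    intro h; rw [qf_add, qf_smul, qf_one]
  have hP : (X + m • (1 : Mat N)).PosSemidef := by
    refine posSemidef_of_qf_nonneg (hX.add (isSymm_smul_one m)) fun h => ?_
    rw [hq]
    linarith [(abs_le.1 (abs_qf_le X h)).1]
  have htr : (X + m • (1 : Mat N)).trace ≤ N * (2 * m) := by
    refine trace_le_of_qf_le fun h => ?_
    rw [hq]
    linarith [(abs_le.1 (abs_qf_le X h)).2]
  have htr0 := hP.trace_nonneg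
  have h1 := hF2.2.2 x hx p hp (-(m • (1 : Mat N))) (X + m • 1) (isSymm_smul_one m).neg hP
  have h2 := hF2.2.2 x hx p hp (-(m • (1 : Mat N))) (m • 1) (isSymm_smul_one m).neg
    (posSemidef_smul_one hm0)
  rw [show -(m • (1 : Mat N)) + (X + m • 1) = X by abel] at h1
  rw [neg_add_cancel, hF0, Matrix.trace_smul, Matrix.trace_one, Fintype.card_fin, smul_eq_mul]
    at h2
  have h3 : A * ‖p‖ ^ α * (X + m • (1 : Mat N)).trace ≤ A * ‖p‖ ^ α * (N * (2 * m)) := by gcongr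
  have h4 : 0 ≤ a * ‖p‖ ^ α * (X + m • (1 : Mat N)).trace := by positivity
  have h5 : 0 ≤ a * ‖p‖ ^ α * (m * N) := by positivity
  have h6 : 0 ≤ A * ‖p‖ ^ α * (m * N) := by positivity
  rw [abs_le]
  constructor <;> linarith [h1.1, h1.2, h2.1, h2.2]

lemma dualOp_F1 {N : ℕ} {Ω : Set (EN N)} {α : ℝ} {F : EN N → EN N → Mat N → ℝ}
    (h : CondF1 Ω α F) : CondF1 Ω α (dualOp F) := by
  intro x hx t ht μ hμ p hp X hX
  have := h x hx t ht μ hμ (-p) (neg_ne_zero.2 hp) (-X) hX.neg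
  simp only [dualOp]
  rw [smul_neg, smul_neg] at this
  rw [this]
  ring

lemma dualOp_F2 {N : ℕ} {Ω : Set (EN N)} {α a A : ℝ} {F : EN N → EN N → Mat N → ℝ}
    (h : CondF2 Ω α a A F) : CondF2 Ω α a A (dualOp F) := by
  refine ⟨h.1, h.2.1, fun x hx p hp M P hM hP => ?_⟩
  have hPs : P.IsSymm := by
    have := hP.1
    rwa [Matrix.IsHermitian, Matrix.conjTranspose_eq_transpose_of_trivial] at this
  have := h.2.2 x hx (-p) (neg_ne_zero.2 hp) (-(M + P)) P (hM.add hPs).neg hP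
  rw [norm_neg, show -(M + P) + P = -M by abel] at this
  simp only [dualOp]
  constructor <;> linarith [this.1, this.2]

/-! ### The boundary weight -/

/-- The weight `η` and its gradient `n` that correct the penalisation near the boundary: `η` is a
positive function with a quadratic upper Taylor bound, whose gradient on `∂Ω` is an outward normal, so long that it beats the
deviation of `Ω` from convexity (field `strict`). -/
structure BoundaryWeight {N : ℕ} (Ω : Set (EN N)) (ρ : EN N → ℝ) (q η₀ Ce : ℝ) (η : EN N → ℝ)
    (n : EN N → EN N) : Prop where
  η₀_pos : 0 < η₀
  Ce_nonneg : 0 ≤ Ce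
  lower : ∀ x ∈ closure Ω, η₀ ≤ η x
  upper : ∀ x ∈ closure Ω, η x ≤ 1
  taylor : ∀ x ∈ closure Ω, ∀ y ∈ closure Ω, η x ≤ η y + ⟪n y, x - y⟫ + Ce * ‖x - y‖ ^ 2
  grad_bound : ∀ x ∈ closure Ω, ‖n x‖ ≤ Ce
  grad_cont : Continuous n
  cont : Continuous η
  outward : ∀ (x p : EN N), 0 < ⟪p, n x⟫ → 0 < ⟪p, gradient ρ x⟫
  strict : ∀ x ∈ frontier Ω, ∀ y ∈ closure Ω, y ≠ x →
    0 < 2 * q * ⟪n x, x - y⟫ + ‖n x‖ ^ 2 * ‖x - y‖ ^ 2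
  frontier_ne : ∀ x ∈ frontier Ω, n x ≠ 0

lemma hasGradientAt_of_contDiff {N : ℕ} {φ : EN N → ℝ} (hφ : ContDiff ℝ 2 φ) (x : EN N) :
    HasFDerivAt φ (innerSL ℝ (gradient φ x)) x := by
  have h1 : DifferentiableAt ℝ φ x := hφ.differentiable (by norm_num) x
  have h2 := hasGradientAt_iff_hasFDerivAt.1 h1.hasGradientAt
  exact h2

lemma continuous_gradient {N : ℕ} {φ : EN N → ℝ} (hφ : ContDiff ℝ 2 φ) :
    Continuous (gradient φ) :=
  (InnerProductSpace.toDual ℝ (EN N)).symm.continuous.comp (hφ.continuous_fderiv (by norm_num))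

/-- Second order Taylor bound for a `C²` function, uniform on a ball. -/
lemma taylor_bound {N : ℕ} {φ : EN N → ℝ} (hφ : ContDiff ℝ 2 φ) (R : ℝ) :
    ∃ M : ℝ, 0 ≤ M ∧ ∀ x ∈ closedBall (0 : EN N) R, ∀ y ∈ closedBall (0 : EN N) R,
      |φ x - φ y - ⟪gradient φ y, x - y⟫| ≤ M * ‖x - y‖ ^ 2 := by
  have hd : ContDiff ℝ 1 (fderiv ℝ φ) := hφ.fderiv_right (by norm_num)
  have hc : Continuous (fderiv ℝ (fderiv ℝ φ)) := hd.continuous_fderiv (by norm_num)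
  have hc' : Continuous fun x => ‖fderiv ℝ (fderiv ℝ φ) x‖ :=
    Continuous.norm (E := EN N →L[ℝ] EN N →L[ℝ] ℝ) hc
  obtain ⟨M, hM'⟩ := ((isCompact_closedBall (0 : EN N) R).image hc').bddAbove
  have hM : ∀ x ∈ closedBall (0 : EN N) R, ‖fderiv ℝ (fderiv ℝ φ) x‖ ≤ M :=
    fun x hx => hM' (mem_image_of_mem _ hx)
  refine ⟨max M 0, le_max_right _ _, fun x hx y hy => ?_⟩
  have hconv : Convex ℝ (closedBall (0 : EN N) R) := convex_closedBall 0 R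
  have hlip : ∀ z ∈ closedBall (0 : EN N) R,
      ‖fderiv ℝ φ z - fderiv ℝ φ y‖ ≤ max M 0 * ‖z - y‖ := fun z hz =>
    hconv.norm_image_sub_le_of_norm_fderiv_le (𝕜 := ℝ)
      (fun w _ => hd.differentiable (by norm_num) w)
      (fun w hw => (hM w hw).trans (le_max_left _ _)) hy hz
  have hseg : segment ℝ y x ⊆ closedBall (0 : EN N) R := hconv.segment_subset hy hx
  have h1 := (convex_segment y x).norm_image_sub_le_of_norm_fderiv_le' (𝕜 := ℝ) (f := φ)
    (φ := fderiv ℝ φ y) (C := max M 0 * ‖x - y‖)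
    (fun w _ => hφ.differentiable (by norm_num) w)
    (fun w hw => (hlip w (hseg hw)).trans (by
      gcongr
      exact norm_sub_le_of_mem_segment hw))
    (left_mem_segment ℝ y x) (right_mem_segment ℝ y x)
  rw [(hasGradientAt_of_contDiff hφ y).fderiv, innerSL_apply_apply, Real.norm_eq_abs] at h1
  calc _ ≤ _ := h1
    _ = _ := by ring

/-- Existence of the boundary weight `exp(L ρ)` with `L` large. -/
lemma exists_boundaryWeight {N : ℕ} {Ω : Set (EN N)} {nv : EN N → EN N} {ρ : EN N → ℝ}
    (hρ : IsC2DefiningFun Ω nv ρ) (hb : Bornology.IsBounded Ω) {q : ℝ} (hq : 0 ≤ q) :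
    ∃ η₀ Ce η n, BoundaryWeight Ω ρ q η₀ Ce η n := by
  obtain ⟨hcd, hΩ, hfr, hgrad⟩ := hρ
  have hKc : IsCompact (closure Ω) := hb.isCompact_closure
  obtain ⟨R, hR⟩ := hKc.isBounded.subset_closedBall (0 : EN N)
  obtain ⟨M, hM0, hM⟩ := taylor_bound hcd R
  have hle : ∀ x ∈ closure Ω, ρ x ≤ 0 := by
    intro x hx
    have : closure Ω ⊆ {x | ρ x ≤ 0} := by
      refine closure_minimal ?_ (isClosed_le hcd.continuous continuous_const)
      rw [hΩ]
      intro y hy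
      exact (show ρ y < 0 from hy).le
    exact this hx
  have hfrc : IsCompact (frontier Ω) := hKc.of_isClosed_subset isClosed_frontier
    frontier_subset_closure
  obtain ⟨c1, hc1, hc1'⟩ : ∃ c1 : ℝ, 0 < c1 ∧ ∀ x ∈ frontier Ω, c1 ≤ ‖gradient ρ x‖ := by
    rcases (frontier Ω).eq_empty_or_nonempty with he | hne
    · exact ⟨1, one_pos, fun x hx => by rw [he] at hx; exact hx.elim⟩
    · obtain ⟨x, hx, hmin⟩ := hfrc.exists_isMinOn hne
        (continuous_gradient hcd).norm.continuousOn
      exact ⟨‖gradient ρ x‖, norm_pos_iff.2 (hgrad x hx).1, fun y hy => hmin hy⟩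
  set L : ℝ := (2 * q * M + 1) / c1 ^ 2 with hL
  have hL0 : 0 < L := by positivity
  have hLc : L * c1 ^ 2 = 2 * q * M + 1 := by rw [hL]; field_simp
  set η : EN N → ℝ := fun x => Real.exp (L * ρ x) with hη
  have hηcd : ContDiff ℝ 2 η := Real.contDiff_exp.comp (contDiff_const.mul hcd)
  have hηg : ∀ x, gradient η x = (L * η x) • gradient ρ x := by
    intro x
    have h1 := ((hasGradientAt_of_contDiff hcd x).const_mul L).exp
    have h2 : HasGradientAt η ((L * η x) • gradient ρ x) x := by
      rw [hasGradientAt_iff_hasFDerivAt]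
      refine h1.congr_fderiv ?_
      ext k
      simp [hη]
      ring
    exact h2.gradient
  obtain ⟨M', hM'0, hM'⟩ := taylor_bound hηcd R
  obtain ⟨M'', hM''⟩ := hKc.exists_bound_of_continuousOn (continuous_gradient hηcd).continuousOn
  obtain ⟨η₀, hη₀, hη₀'⟩ : ∃ c1 : ℝ, 0 < c1 ∧ ∀ x ∈ closure Ω, c1 ≤ η x := by
    rcases (closure Ω).eq_empty_or_nonempty with he | hne
    · exact ⟨1, one_pos, fun x hx => by rw [he] at hx; exact hx.elim⟩
    · obtain ⟨x, hx, hmin⟩ := hKc.exists_isMinOn hne hηcd.continuous.continuousOn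
      exact ⟨η x, Real.exp_pos _, fun y hy => hmin hy⟩
  have hηfr : ∀ x ∈ frontier Ω, gradient η x = L • gradient ρ x := by
    intro x hx
    rw [hηg]
    have : ρ x = 0 := by rw [hfr] at hx; exact hx
    simp [hη, this]
  refine ⟨η₀, max M' M'', η, gradient η, hη₀, hM'0.trans (le_max_left _ _), hη₀', ?_, ?_, ?_,
    continuous_gradient hηcd, hηcd.continuous, ?_, ?_, ?_⟩
  · intro x hx
    simp only [hη]
    rw [Real.exp_le_one_iff]
    nlinarith [hle x hx]
  · intro x hx y hy
    have h1 := (abs_le.1 (hM' x (hR hx) y (hR hy))).2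
    have h2 : M' * ‖x - y‖ ^ 2 ≤ max M' M'' * ‖x - y‖ ^ 2 := by
      gcongr; exact le_max_left _ _
    linarith
  · intro x hx
    exact (hM'' x hx).trans (le_max_right _ _)
  · intro x p hp
    rw [hηg, real_inner_smul_right] at hp
    have : 0 < L * η x := mul_pos hL0 (Real.exp_pos _)
    exact (mul_pos_iff_of_pos_left this).1 hp
  · intro x hx y hy hxy
    rw [hηfr x hx, real_inner_smul_left, norm_smul, Real.norm_of_nonneg hL0.le]
    have hxK := frontier_subset_closure hx
    have h1 := (abs_le.1 (hM y (hR hy) x (hR hxK))).2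
    have h2 : ρ x = 0 := by rw [hfr] at hx; exact hx
    have h3 := hle y hy
    have h1' := (abs_le.1 (hM y (hR hy) x (hR hxK))).1
    rw [h2, ← neg_sub x y, inner_neg_right, norm_neg] at h1'
    have h4 : -(M * ‖x - y‖ ^ 2) ≤ ⟪gradient ρ x, x - y⟫ := by linarith
    have h5 : 0 < ‖x - y‖ ^ 2 := by
      have : 0 < ‖x - y‖ := norm_pos_iff.2 (sub_ne_zero.2 hxy.symm)
      positivity
    have h6 : c1 ^ 2 ≤ ‖gradient ρ x‖ ^ 2 := pow_le_pow_left₀ hc1.le (hc1' x hx) 2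
    have h7 : 2 * q * M + 1 ≤ L * ‖gradient ρ x‖ ^ 2 := by
      rw [← hLc]; gcongr
    have h8 : -(2 * q * M * ‖x - y‖ ^ 2) ≤ 2 * q * ⟪gradient ρ x, x - y⟫ := by
      have := mul_le_mul_of_nonneg_left h4 (show 0 ≤ 2 * q by positivity)
      linarith
    have h9 : (2 * q * M + 1) * ‖x - y‖ ^ 2 ≤ L * ‖gradient ρ x‖ ^ 2 * ‖x - y‖ ^ 2 := by gcongr
    have h10 : 0 < L * (2 * q * ⟪gradient ρ x, x - y⟫ + L * ‖gradient ρ x‖ ^ 2 * ‖x - y‖ ^ 2) :=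
      mul_pos hL0 (by linarith)
    linarith
  · intro x hx
    rw [hηfr x hx]
    exact smul_ne_zero hL0.ne' (hgrad x hx).1

/-! ### Structural estimate for `F` -/

/-- Estimate of the size of two matrices satisfying the doubling inequality in terms of the trace
`t` of their (shifted) difference; the free parameter `s'` balances the two contributions. -/
lemma matNorm_sum_le {N : ℕ} {X Y : Mat N} (hX : X.IsSymm) (hY : Y.IsSymm) {κ s t s' : ℝ}
    (hκ : 0 ≤ κ) (hs : 0 ≤ s) (ht : 0 ≤ t) (hs' : 0 < s') (hs'1 : s' ≤ 1)
    (hXY : ∀ h k, qf X h - qf Y k ≤ κ * ‖h - k‖ ^ 2 + s / 2 * (‖h‖ ^ 2 + ‖k‖ ^ 2))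
    (htr : ∀ h, qf (Y - X) h ≤ t * ‖h‖ ^ 2) :
    matNorm X + matNorm Y ≤ (t / s' + 2 * κ * s' + s / s') + t + s := by
  set W := t / s' + 2 * κ * s' + s / s' with hW
  have hW0 : 0 ≤ W := by positivity
  have h1 : ∀ h, |qf (X - Y) h| ≤ (t + s) * ‖h‖ ^ 2 := by
    intro h
    have h2 := hXY h h
    have h3 := htr h
    rw [qf_sub] at h3 ⊢
    rw [sub_self, norm_zero] at h2
    have h4 : 0 ≤ t * ‖h‖ ^ 2 := by positivity
    have h5 : 0 ≤ s * ‖h‖ ^ 2 := by positivity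
    rw [abs_le]
    constructor <;> linarith
  have hW1 : matNorm (X + Y) ≤ W := by
    refine matNorm_le_of_abs_inner_le hW0 fun ζ k hζ hk => ?_
    have h2 := hXY (ζ + s' • k) (ζ - s' • k)
    rw [qf_add_vec hX, qf_sub_vec hY] at h2
    have h3 := htr ζ
    have h4 := htr (s' • k)
    rw [qf_sub] at h3 h4
    have e1 : ζ + s' • k - (ζ - s' • k) = (2 * s') • k := by module
    have e2 : ‖ζ + s' • k‖ ^ 2 + ‖ζ - s' • k‖ ^ 2 = 2 * (1 + s' ^ 2) := by
      have := parallelogram_law_with_norm ℝ ζ (s' • k)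
      rw [norm_smul, hζ, hk, Real.norm_of_nonneg hs'.le] at this
      nlinarith
    rw [e1, e2, norm_smul, hk, Real.norm_of_nonneg (by positivity)] at h2
    rw [norm_smul, hk, Real.norm_of_nonneg hs'.le] at h4
    rw [hζ] at h3
    have e3 : ⟪Matrix.toEuclideanLin (X + Y) ζ, k⟫ = ⟪Matrix.toEuclideanLin X ζ, k⟫ +
      ⟪Matrix.toEuclideanLin Y ζ, k⟫ := by
      rw [map_add, LinearMap.add_apply, inner_add_left]
    rw [e3]
    rw [inner_smul_right, inner_smul_right] at h2
    have h6 : s' ^ 2 ≤ 1 := by nlinarith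
    have h7 : t * s' ^ 2 ≤ t := by nlinarith
    have h8 : s * s' ^ 2 ≤ s := by nlinarith
    have h9 : s' * W = t + 2 * κ * s' ^ 2 + s := by rw [hW]; field_simp
    refine le_of_mul_le_mul_left (a := s') ?_ hs'
    rw [h9]
    nlinarith
  have h2 : ∀ h, |qf (X + Y) h| ≤ W * ‖h‖ ^ 2 := fun h =>
    (abs_qf_le _ h).trans (by gcongr)
  have hXn : matNorm X ≤ (W + t + s) / 2 := by
    refine matNorm_le_of_abs_qf_le hX (by positivity) fun h => ?_
    have h3 := abs_le.1 (h1 h)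
    have h4 := abs_le.1 (h2 h)
    rw [qf_sub] at h3
    rw [qf_add] at h4
    rw [abs_le]
    constructor <;> linarith
  have hYn : matNorm Y ≤ (W + t + s) / 2 := by
    refine matNorm_le_of_abs_qf_le hY (by positivity) fun h => ?_
    have h3 := abs_le.1 (h1 h)
    have h4 := abs_le.1 (h2 h)
    rw [qf_sub] at h3
    rw [qf_add] at h4
    rw [abs_le]
    constructor <;> linarith
  linarith

set_option maxHeartbeats 1600000 in
/-- The structural estimate for `F` along a doubling of variables: the Hölder exponents `θ, ν > 1/2`
make the error `r ^ (2 min(θ, ν) - 1)` small, and the concavity of the penalisation (seen by the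
direction `e`) is available with a constant that does not depend on it. -/
lemma doubling_operator_bound {N : ℕ} {Ω : Set (EN N)} {α a A C₁ θ C₂ ν : ℝ}
    {F : EN N → EN N → Mat N → ℝ} (hF2 : CondF2 Ω α a A F)
    (hF3 : CondF3 Ω α C₁ θ F) (hF4 : CondF4 Ω α C₂ ν F) {Ca : ℝ} (hCa : 1 ≤ Ca) :
    ∃ C > 0, ∃ γ : ℝ, 0 < γ ∧ ∃ r₁ > 0, r₁ ≤ 1 ∧ Ca * r₁ ≤ 1 / 2 ∧ ∀ x ∈ closure Ω, ∀ y ∈ closure Ω,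
      ∀ P p₁ p₂ : EN N, P ≠ 0 → ∀ r, 0 < r → r ≤ r₁ → ‖x - y‖ ≤ 2 * r →
      ‖p₁ - P‖ ≤ Ca * r * ‖P‖ → ‖p₂ - P‖ ≤ Ca * r * ‖P‖ →
      ∀ X Y : Mat N, X.IsSymm → Y.IsSymm →
      (∀ h k, qf X h - qf Y k ≤
        Ca * (‖P‖ / r * ‖h - k‖ ^ 2 + r * ‖P‖ * (‖h‖ ^ 2 + ‖k‖ ^ 2))) →
      ∀ e : EN N, ‖e‖ ≤ 1 →
      F x p₁ X - F y p₂ Y ≤ ‖P‖ ^ α * (C * ‖P‖ * r ^ γ - a / 2 * qf (Y - X) e) := by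
  obtain ⟨ha, haA, hF2⟩ := hF2
  obtain ⟨hC₁, hθ, hF3⟩ := hF3
  obtain ⟨hC₂, hν, hF4⟩ := hF4
  have hA : 0 < A := ha.trans_le haA
  set β := min θ ν with hβ
  have hβ2 : 1 / 2 < β := lt_min hθ.1 hν.1
  have hβ1 : β ≤ 1 := (min_le_left _ _).trans hθ.2
  set D := 2 * C₁ + C₂ * Ca with hD
  have hD0 : 0 < D := by positivity
  set B := 4 * D / a + 1 with hB
  have hB1 : 1 ≤ B := by rw [hB]; linarith [show 0 ≤ 4 * D / a by positivity]
  have hB0 : 0 < B := by linarith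
  have hDB : D ≤ a / 4 * B := by
    have : a / 4 * B = D + a / 4 := by rw [hB]; field_simp
    linarith
  set r₁ := min (1 / (2 * Ca)) (B⁻¹ ^ β⁻¹) with hr₁
  have hr₁0 : 0 < r₁ := lt_min (by positivity) (by positivity)
  have hr₁a : Ca * r₁ ≤ 1 / 2 := by
    calc Ca * r₁ ≤ Ca * (1 / (2 * Ca)) := by gcongr; exact min_le_left _ _
      _ = 1 / 2 := by field_simp
  have hr₁1 : r₁ ≤ 1 := by nlinarith
  refine ⟨2 * Ca * A * N + 2 * D * Ca * B + 4 * D * Ca, by positivity, 2 * β - 1, by linarith, r₁,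
    hr₁0, hr₁1, hr₁a, ?_⟩
  intro x hx y hy P p₁ p₂ hP r hr hrr₁ hxy hp₁ hp₂ X Y hX hY hXY e he
  have hπ : 0 < ‖P‖ := norm_pos_iff.2 hP
  have hr1 : r ≤ 1 := hrr₁.trans hr₁1
  have hCar : Ca * r ≤ 1 / 2 := le_trans (by gcongr) hr₁a
  set s := 2 * Ca * r * ‖P‖ with hs
  have hs0 : 0 ≤ s := by positivity
  set P0 := Y - X + s • (1 : Mat N) with hP0
  have hP0s : P0.IsSymm := (hY.sub hX).add (isSymm_smul_one s)
  have hP0q : ∀ h, qf P0 h = qf Y h - qf X h + s * ‖h‖ ^ 2 := by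
    intro h
    rw [hP0, qf_add, qf_sub, qf_smul, qf_one]
  have hP0n : ∀ h, 0 ≤ qf P0 h := by
    intro h
    have := hXY h h
    rw [sub_self, norm_zero] at this
    rw [hP0q, hs]
    linarith
  have hP0p := posSemidef_of_qf_nonneg hP0s hP0n
  set t := P0.trace with ht
  have ht0 : 0 ≤ t := hP0p.trace_nonneg
  have htq : ∀ h, qf (Y - X) h ≤ t * ‖h‖ ^ 2 := by
    intro h
    have h1 := qf_le_trace hP0n h
    rw [hP0q] at h1
    rw [qf_sub]
    have : 0 ≤ s * ‖h‖ ^ 2 := by positivity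
    linarith
  -- the ellipticity estimate at the frozen point and gradient
  have hell : F y P X - F y P Y ≤ ‖P‖ ^ α * (A * N * s - a * t) := by
    have h1 := (hF2 y hy P hP X P0 hX hP0p).1
    have h2 := (hF2 y hy P hP Y (s • 1) hY (posSemidef_smul_one hs0)).2
    rw [Matrix.trace_smul, Matrix.trace_one, Fintype.card_fin, smul_eq_mul] at h2
    have h3 : X + P0 = Y + s • 1 := by rw [hP0]; abel
    rw [h3] at h1
    linarith
  have hrβ : ∀ μ, β ≤ μ → r ^ μ ≤ r ^ β := fun μ hμ => Real.rpow_le_rpow_of_exponent_ge hr hr1 hμ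
  have hgrad : ∀ z ∈ closure Ω, ∀ p, ‖p - P‖ ≤ Ca * r * ‖P‖ → ∀ X : Mat N, X.IsSymm →
      |F z p X - F z P X| ≤ C₂ * Ca * r ^ β * ‖P‖ ^ α * matNorm X := by
    intro z hz p hp X hX
    have h1 := hF4 z hz P hP (p - P) (hp.trans (by nlinarith)) X hX
    rw [add_sub_cancel] at h1
    refine h1.trans ?_
    have h2 : ‖p - P‖ ^ ν ≤ Ca * r ^ β * ‖P‖ ^ ν := by
      calc ‖p - P‖ ^ ν ≤ (Ca * r * ‖P‖) ^ ν :=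
            Real.rpow_le_rpow (norm_nonneg _) hp (by linarith [hν.1])
        _ = Ca ^ ν * r ^ ν * ‖P‖ ^ ν := by
            rw [Real.mul_rpow (by positivity) (by positivity),
              Real.mul_rpow (by positivity) (by positivity)]
        _ ≤ Ca * r ^ β * ‖P‖ ^ ν := by
            gcongr ?_ * ?_ * _
            · calc Ca ^ ν ≤ Ca ^ (1 : ℝ) := Real.rpow_le_rpow_of_exponent_le hCa hν.2
                _ = Ca := Real.rpow_one _
            · exact hrβ ν (min_le_right _ _)
    calc C₂ * ‖P‖ ^ (α - ν) * ‖p - P‖ ^ ν * matNorm X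
        ≤ C₂ * ‖P‖ ^ (α - ν) * (Ca * r ^ β * ‖P‖ ^ ν) * matNorm X := by
          gcongr
          exact matNorm_nonneg X
      _ = C₂ * Ca * r ^ β * (‖P‖ ^ (α - ν) * ‖P‖ ^ ν) * matNorm X := by ring
      _ = _ := by rw [← Real.rpow_add hπ, sub_add_cancel]
  have hspace : |F x P X - F y P X| ≤ 2 * C₁ * r ^ β * ‖P‖ ^ α * matNorm X := by
    refine (hF3 x hx y hy P hP X hX).trans ?_
    have h2 : ‖x - y‖ ^ θ ≤ 2 * r ^ β := by
      calc ‖x - y‖ ^ θ ≤ (2 * r) ^ θ :=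
            Real.rpow_le_rpow (norm_nonneg _) hxy (by linarith [hθ.1])
        _ = 2 ^ θ * r ^ θ := Real.mul_rpow (by positivity) hr.le
        _ ≤ 2 * r ^ β := by
            gcongr ?_ * ?_
            · calc (2 : ℝ) ^ θ ≤ 2 ^ (1 : ℝ) :=
                    Real.rpow_le_rpow_of_exponent_le (by norm_num) hθ.2
                _ = 2 := Real.rpow_one _
            · exact hrβ θ (min_le_left _ _)
    calc C₁ * ‖x - y‖ ^ θ * ‖P‖ ^ α * matNorm X ≤ C₁ * (2 * r ^ β) * ‖P‖ ^ α * matNorm X := by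
          gcongr
          exact matNorm_nonneg X
      _ = _ := by ring
  have hrβ0 : 0 < r ^ β := Real.rpow_pos_of_pos hr β
  have hrβ1 : r ^ β ≤ 1 := Real.rpow_le_one hr.le hr1 (by linarith)
  have hs'1 : B * r ^ β ≤ 1 := by
    have h1 : r ^ β ≤ (B⁻¹ ^ β⁻¹) ^ β :=
      Real.rpow_le_rpow hr.le (hrr₁.trans (min_le_right _ _)) (by linarith)
    rw [← Real.rpow_mul (by positivity), inv_mul_cancel₀ (by linarith), Real.rpow_one] at h1
    calc B * r ^ β ≤ B * B⁻¹ := by gcongr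
      _ = 1 := mul_inv_cancel₀ hB0.ne'
  have hrγ : r ^ β * r ^ β / r = r ^ (2 * β - 1) := by
    rw [← Real.rpow_add hr, Real.rpow_sub_one hr.ne']; ring_nf
  have hrγ' : r ≤ r ^ (2 * β - 1) := by
    calc r = r ^ (1 : ℝ) := (Real.rpow_one r).symm
      _ ≤ _ := Real.rpow_le_rpow_of_exponent_ge hr hr1 (by linarith)
  have hnorm := matNorm_sum_le hX hY (κ := Ca * (‖P‖ / r)) (s := s) (t := t) (s' := B * r ^ β)
    (by positivity) hs0 ht0 (by positivity) hs'1 (fun h k => by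
      have := hXY h k
      rw [hs]
      linarith) htq
  have hnorm2 : D * r ^ β * (matNorm X + matNorm Y) ≤
      a / 2 * t + (2 * D * Ca * B + 4 * D * Ca) * ‖P‖ * r ^ (2 * β - 1) := by
    have h1 : r ^ β * (t / (B * r ^ β) + 2 * (Ca * (‖P‖ / r)) * (B * r ^ β) + s / (B * r ^ β)) =
        t / B + 2 * Ca * B * ‖P‖ * (r ^ β * r ^ β / r) + s / B := by
      field_simp
    rw [hrγ] at h1
    have h2 : D * (t / B) ≤ a / 4 * t := by
      rw [mul_div_assoc', div_le_iff₀ hB0]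
      nlinarith
    have h3 : s / B ≤ s := div_le_self hs0 hB1
    have h4 : s ≤ 2 * Ca * ‖P‖ * r ^ (2 * β - 1) := by
      rw [hs]
      calc 2 * Ca * r * ‖P‖ = 2 * Ca * ‖P‖ * r := by ring
        _ ≤ _ := by gcongr
    have h5 : D * r ^ β ≤ a / 4 := by
      calc D * r ^ β ≤ a / 4 * B * r ^ β := by gcongr
        _ = a / 4 * (B * r ^ β) := by ring
        _ ≤ a / 4 * 1 := by gcongr
        _ = a / 4 := mul_one _
    calc D * r ^ β * (matNorm X + matNorm Y) ≤ D * r ^ β * (_ + t + s) := by gcongr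
      _ = D * (r ^ β * (t / (B * r ^ β) + 2 * (Ca * (‖P‖ / r)) * (B * r ^ β) + s / (B * r ^ β)))
          + D * r ^ β * t + D * r ^ β * s := by ring
      _ = D * (t / B) + D * (2 * Ca * B * ‖P‖ * r ^ (2 * β - 1)) + D * (s / B)
          + D * r ^ β * t + D * r ^ β * s := by rw [h1]; ring
      _ ≤ a / 4 * t + D * (2 * Ca * B * ‖P‖ * r ^ (2 * β - 1)) + D * s
          + a / 4 * t + D * 1 * s := by gcongr
      _ = a / 2 * t + D * (2 * Ca * B * ‖P‖ * r ^ (2 * β - 1)) + 2 * D * s := by ring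
      _ ≤ a / 2 * t + D * (2 * Ca * B * ‖P‖ * r ^ (2 * β - 1))
          + 2 * D * (2 * Ca * ‖P‖ * r ^ (2 * β - 1)) := by gcongr
      _ = _ := by ring
  have hs4 : A * N * s ≤ 2 * Ca * A * N * ‖P‖ * r ^ (2 * β - 1) := by
    rw [hs]
    calc A * N * (2 * Ca * r * ‖P‖) = 2 * Ca * A * N * ‖P‖ * r := by ring
      _ ≤ _ := by gcongr
  have hte : qf (Y - X) e ≤ t := by
    refine (htq e).trans ?_
    have : ‖e‖ ^ 2 ≤ 1 := by nlinarith [norm_nonneg e]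
    nlinarith
  have hα0 : 0 < ‖P‖ ^ α := Real.rpow_pos_of_pos hπ α
  have g1 := (abs_le.1 (hgrad x hx p₁ hp₁ X hX)).2
  have g2 := (abs_le.1 (hgrad y hy p₂ hp₂ Y hY)).1
  have g3 := (abs_le.1 hspace).2
  have hsum : F x p₁ X - F y p₂ Y ≤ ‖P‖ ^ α * (A * N * s - a * t +
      D * r ^ β * (matNorm X + matNorm Y)) := by
    have : 0 ≤ 2 * C₁ * r ^ β * ‖P‖ ^ α * matNorm Y := by
      have := matNorm_nonneg Y
      positivity
    have e1 : ‖P‖ ^ α * (A * N * s - a * t + D * r ^ β * (matNorm X + matNorm Y)) =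
      ‖P‖ ^ α * (A * N * s - a * t) + C₂ * Ca * r ^ β * ‖P‖ ^ α * matNorm X +
      C₂ * Ca * r ^ β * ‖P‖ ^ α * matNorm Y + 2 * C₁ * r ^ β * ‖P‖ ^ α * matNorm X +
      2 * C₁ * r ^ β * ‖P‖ ^ α * matNorm Y := by rw [hD]; ring
    rw [e1]
    linarith
  refine hsum.trans (mul_le_mul_of_nonneg_left ?_ hα0.le)
  nlinarith

/-! ### Doubling of variables -/

/-- The quadratic form arising from the second order expansion of the penalisation. -/
lemma exists_doubling_form {N : ℕ} (e n₁ n₂ : EN N) (a₁ a₂ b₁ c : ℝ) :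
    ∃ S1 S2 : EN N × EN N →L[ℝ] EN N,
      (∀ z z', ⟪S1 z, z'.1⟫ + ⟪S2 z, z'.2⟫ = ⟪S1 z', z.1⟫ + ⟪S2 z', z.2⟫) ∧
      ∀ h k, ⟪S1 (h, k), h⟫ + ⟪S2 (h, k), k⟫ = 2 * (a₁ * ‖h - k‖ ^ 2 + a₂ * ⟪e, h - k⟫ ^ 2 +
        b₁ * ⟪e, h - k⟫ * (⟪n₁, h⟫ + ⟪n₂, k⟫) + c * (‖h‖ ^ 2 + ‖k‖ ^ 2)) := by
  let f := ContinuousLinearMap.fst ℝ (EN N) (EN N)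
  let s := ContinuousLinearMap.snd ℝ (EN N) (EN N)
  let eδ : EN N × EN N →L[ℝ] ℝ := (innerSL ℝ e).comp (f - s)
  let l : EN N × EN N →L[ℝ] ℝ := (innerSL ℝ n₁).comp f + (innerSL ℝ n₂).comp s
  let S1 : EN N × EN N →L[ℝ] EN N := (2 * a₁) • (f - s) + (2 * a₂) • eδ.smulRight e +
    b₁ • (l.smulRight e + eδ.smulRight n₁) + (2 * c) • f
  let S2 : EN N × EN N →L[ℝ] EN N := -((2 * a₁) • (f - s)) - (2 * a₂) • eδ.smulRight e +
    b₁ • (-l.smulRight e + eδ.smulRight n₂) + (2 * c) • s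
  have h1 : ∀ z, S1 z = (2 * a₁) • (z.1 - z.2) + (2 * a₂ * ⟪e, z.1 - z.2⟫) • e +
      b₁ • ((⟪n₁, z.1⟫ + ⟪n₂, z.2⟫) • e + ⟪e, z.1 - z.2⟫ • n₁) + (2 * c) • z.1 := by
    intro z
    simp [S1, f, s, eδ, l, smul_smul, inner_sub_right]
  have h2 : ∀ z, S2 z = -((2 * a₁) • (z.1 - z.2)) - (2 * a₂ * ⟪e, z.1 - z.2⟫) • e +
      b₁ • (-((⟪n₁, z.1⟫ + ⟪n₂, z.2⟫) • e) + ⟪e, z.1 - z.2⟫ • n₂) + (2 * c) • z.2 := by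
    intro z
    simp [S2, f, s, eδ, l, smul_smul, inner_sub_right]
  refine ⟨S1, S2, fun z z' => ?_, fun h k => ?_⟩
  · rw [h1, h1, h2, h2]
    simp only [inner_add_left, inner_sub_left, inner_sub_right, inner_neg_left,
      real_inner_smul_left]
    rw [real_inner_comm z'.1 z.1, real_inner_comm z'.2 z.1, real_inner_comm z'.1 z.2,
      real_inner_comm z'.2 z.2]
    ring
  · rw [h1, h2, ← real_inner_self_eq_norm_sq, ← real_inner_self_eq_norm_sq,
      ← real_inner_self_eq_norm_sq]
    simp only [inner_add_left, inner_sub_left, inner_sub_right, inner_neg_left,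
      real_inner_smul_left]
    rw [real_inner_comm h k]
    ring

/-- If the gradient of the penalisation points outward at a boundary point, the jets at nearby
points satisfy the alternative required by `JetSub`. -/
lemma boundary_persist {N : ℕ} {Ω : Set (EN N)} {ρ : EN N → ℝ} {q η₀ Ce : ℝ} {η : EN N → ℝ}
    {n : EN N → EN N} (hη : BoundaryWeight Ω ρ q η₀ Ce η n) (hΩ : IsOpen Ω) {x p : EN N}
    (hx : x ∈ closure Ω) (hp : x ∈ frontier Ω → 0 < ⟪p, n x⟫) :
    ∃ ε > 0, ∀ x' p', ‖x' - x‖ < ε → ‖p' - p‖ < ε → x' ∈ Ω ∨ 0 < ⟪p', gradient ρ x'⟫ := by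
  by_cases hxΩ : x ∈ Ω
  · obtain ⟨ε, hε, hb⟩ := Metric.isOpen_iff.1 hΩ x hxΩ
    exact ⟨ε, hε, fun x' p' hx' _ => Or.inl (hb (mem_ball_iff_norm.2 hx'))⟩
  · have hfr : x ∈ frontier Ω := by
      rw [hΩ.frontier_eq]
      exact ⟨hx, hxΩ⟩
    have hc : Continuous fun z : EN N × EN N => ⟪z.2, n z.1⟫ :=
      continuous_snd.inner (hη.grad_cont.comp continuous_fst)
    have ho : IsOpen {z : EN N × EN N | 0 < ⟪z.2, n z.1⟫} := isOpen_lt continuous_const hc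
    obtain ⟨ε, hε, hb⟩ := Metric.isOpen_iff.1 ho (x, p) (hp hfr)
    refine ⟨ε, hε, fun x' p' hx' hp' => Or.inr (hη.outward x' p' ?_)⟩
    have : (x', p') ∈ ball (x, p) ε := by
      rw [mem_ball, Prod.dist_eq, dist_eq_norm, dist_eq_norm]
      exact max_lt hx' hp'
    exact hb this

/-- The gradient of the penalisation `ψ(x-y)(η(x)+η(y))` with respect to `x` points outward at
boundary points. -/
lemma boundary_sign {N : ℕ} {Ω : Set (EN N)} {ρ : EN N → ℝ} {q η₀ Ce : ℝ} {η : EN N → ℝ}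
    {n : EN N → EN N} (hη : BoundaryWeight Ω ρ q η₀ Ce η n) {x y : EN N}
    (hx : x ∈ frontier Ω) (hy : y ∈ closure Ω) (hxy : y ≠ x) {Ψ₀ Ψ₁ E : ℝ} (hΨ₀ : 0 < Ψ₀)
    (hΨ₁ : 0 ≤ Ψ₁) (hE : 0 ≤ E) (hE2 : E ≤ 2) (hq : ‖x - y‖ * Ψ₁ ≤ q * Ψ₀) :
    0 < ⟪(E * Ψ₁ / ‖x - y‖) • (x - y) + Ψ₀ • n x, n x⟫ := by
  have hr : 0 < ‖x - y‖ := norm_pos_iff.2 (sub_ne_zero.2 hxy.symm)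
  have hn : 0 < ‖n x‖ := norm_pos_iff.2 (hη.frontier_ne x hx)
  rw [inner_add_left, real_inner_smul_left, real_inner_smul_left, real_inner_self_eq_norm_sq]
  set r := ‖x - y‖ with hrd
  set i := ⟪x - y, n x⟫ with hi
  have hi' : ⟪n x, x - y⟫ = i := real_inner_comm _ _
  rcases le_or_gt 0 i with h0 | h0
  · have : 0 < Ψ₀ * ‖n x‖ ^ 2 := by positivity
    have : 0 ≤ E * Ψ₁ / r * i := by positivity
    linarith
  · have hs := hη.strict x hx y hy hxy
    rw [hi'] at hs
    have h1 : 2 * Ψ₀ * q / r ^ 2 * i ≤ E * Ψ₁ / r * i := by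
      refine mul_le_mul_of_nonpos_right ?_ h0.le
      rw [div_le_div_iff₀ hr (by positivity)]
      calc E * Ψ₁ * r ^ 2 ≤ 2 * Ψ₁ * r ^ 2 := by gcongr
        _ = 2 * r * (r * Ψ₁) := by ring
        _ ≤ 2 * r * (q * Ψ₀) := by gcongr
        _ = _ := by ring
    have h2 : 0 < Ψ₀ / r ^ 2 * (2 * q * i + ‖n x‖ ^ 2 * r ^ 2) := by positivity
    have h3 : Ψ₀ / r ^ 2 * (2 * q * i + ‖n x‖ ^ 2 * r ^ 2) =
      2 * Ψ₀ * q / r ^ 2 * i + Ψ₀ * ‖n x‖ ^ 2 := by field_simp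
    linarith

set_option maxHeartbeats 1000000 in
/-- Second order expansion from above of the penalisation `ψ(x-y)(η(x)+η(y))`; the cubic remainder
is absorbed by `c'`. -/
lemma penalisation_expansion {N : ℕ} {Ω : Set (EN N)} {ρ : EN N → ℝ} {q η₀ Ce : ℝ} {η : EN N → ℝ}
    {n : EN N → EN N} (hη : BoundaryWeight Ω ρ q η₀ Ce η n) {x₀ y₀ e : EN N}
    (hx₀ : x₀ ∈ closure Ω) (hy₀ : y₀ ∈ closure Ω) (he : ‖e‖ ≤ 1) {ψ : EN N → ℝ}
    {Ψ₀ Ψ₁ κ G R c' : ℝ} (hR : 0 < R) (hΨ₁ : 0 ≤ Ψ₁) (hκ : 0 ≤ κ) (hc' : 0 < c')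
    (hψ0 : ∀ δ, ‖δ‖ ≤ R → 0 ≤ ψ (x₀ - y₀ + δ))
    (hψ : ∀ δ, ‖δ‖ ≤ R → ψ (x₀ - y₀ + δ) ≤ Ψ₀ + Ψ₁ * ⟪e, δ⟫ + κ * (‖δ‖ ^ 2 - ⟪e, δ⟫ ^ 2) -
      G * ⟪e, δ⟫ ^ 2) :
    ∃ r > 0, ∀ x ∈ closure Ω, ∀ y ∈ closure Ω, ‖x - x₀‖ ≤ r → ‖y - y₀‖ ≤ r →
      ψ (x - y) * (η x + η y) ≤ Ψ₀ * (η x₀ + η y₀) +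
        ((η x₀ + η y₀) * Ψ₁ * ⟪e, (x - x₀) - (y - y₀)⟫ +
          Ψ₀ * (⟪n x₀, x - x₀⟫ + ⟪n y₀, y - y₀⟫)) +
        ((η x₀ + η y₀) * κ * ‖(x - x₀) - (y - y₀)‖ ^ 2 +
          (-((η x₀ + η y₀) * (κ + G))) * ⟪e, (x - x₀) - (y - y₀)⟫ ^ 2 +
          Ψ₁ * ⟪e, (x - x₀) - (y - y₀)⟫ * (⟪n x₀, x - x₀⟫ + ⟪n y₀, y - y₀⟫) +
          (Ψ₀ * Ce + c') * (‖x - x₀‖ ^ 2 + ‖y - y₀‖ ^ 2)) := by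
  have hCe := hη.Ce_nonneg
  set T := 2 * Ψ₁ * Ce + 8 * Ce * (κ + |G|) + 1 with hT
  have hT0 : 0 < T := by positivity
  refine ⟨min (R / 2) (min 1 (c' / T)), by positivity, fun x hx y hy hxr hyr => ?_⟩
  set r := min (R / 2) (min 1 (c' / T)) with hr
  have hr0 : 0 < r := by positivity
  have hrR : r ≤ R / 2 := min_le_left _ _
  have hr1 : r ≤ 1 := (min_le_right _ _).trans (min_le_left _ _)
  have hrT : T * r ≤ c' := by
    have : r ≤ c' / T := (min_le_right _ _).trans (min_le_right _ _)
    rw [le_div_iff₀ hT0] at this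
    linarith
  set h := x - x₀ with hh
  set k := y - y₀ with hk
  set δ := h - k with hδ
  have hδe : x - y = x₀ - y₀ + δ := by rw [hδ, hh, hk]; abel
  have hδn : ‖δ‖ ≤ 2 * r := (norm_sub_le _ _).trans (by linarith)
  have hδR : ‖δ‖ ≤ R := by linarith
  set t := ⟪e, δ⟫ with ht
  have htn : |t| ≤ ‖δ‖ := (abs_real_inner_le_norm _ _).trans (by nlinarith [norm_nonneg δ])
  set s := ‖h‖ ^ 2 + ‖k‖ ^ 2 with hs
  have hs0 : 0 ≤ s := by positivity
  have hδs : ‖δ‖ ^ 2 ≤ 2 * s := by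
    have h1 : ‖δ‖ ≤ ‖h‖ + ‖k‖ := norm_sub_le _ _
    have h2 : ‖δ‖ ^ 2 ≤ (‖h‖ + ‖k‖) ^ 2 := by gcongr
    nlinarith [sq_nonneg (‖h‖ - ‖k‖)]
  set l := ⟪n x₀, h⟫ + ⟪n y₀, k⟫ with hl
  have hll : |l| ≤ 2 * Ce * r := by
    have h1 : |⟪n x₀, h⟫| ≤ Ce * r := (abs_real_inner_le_norm _ _).trans
      (mul_le_mul (hη.grad_bound _ hx₀) hxr (norm_nonneg _) hCe)
    have h2 : |⟪n y₀, k⟫| ≤ Ce * r := (abs_real_inner_le_norm _ _).trans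
      (mul_le_mul (hη.grad_bound _ hy₀) hyr (norm_nonneg _) hCe)
    exact (abs_add_le _ _).trans (by linarith)
  have hss : s ≤ 2 * r := by
    have h1 : ‖h‖ ^ 2 ≤ r ^ 2 := by gcongr
    have h2 : ‖k‖ ^ 2 ≤ r ^ 2 := by gcongr
    nlinarith
  set E := η x₀ + η y₀ with hE
  have hEη : η x + η y ≤ E + (l + Ce * s) := by
    have h1 := hη.taylor x hx x₀ hx₀
    have h2 := hη.taylor y hy y₀ hy₀
    rw [hE, hl, hs]
    linarith
  have hηp : 0 ≤ η x + η y := by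
    have := hη.η₀_pos
    linarith [hη.lower x hx, hη.lower y hy]
  set Q := κ * (‖δ‖ ^ 2 - t ^ 2) - G * t ^ 2 with hQ
  have ht2 : t ^ 2 ≤ ‖δ‖ ^ 2 := by
    rw [← sq_abs]; gcongr
  have hQb : |Q| ≤ (κ + |G|) * (2 * s) := by
    have h1 : |Q| ≤ |κ * (‖δ‖ ^ 2 - t ^ 2)| + |G * t ^ 2| := abs_sub _ _
    have h2 : |κ * (‖δ‖ ^ 2 - t ^ 2)| ≤ κ * (2 * s) := by
      rw [abs_of_nonneg (mul_nonneg hκ (by linarith))]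
      exact mul_le_mul_of_nonneg_left (by nlinarith [sq_nonneg t]) hκ
    have h3 : |G * t ^ 2| ≤ |G| * (2 * s) := by
      rw [abs_mul, abs_of_nonneg (sq_nonneg t)]
      gcongr
      linarith
    linarith
  have hm : |l + Ce * s| ≤ 4 * Ce * r := by
    refine (abs_add_le _ _).trans ?_
    rw [abs_of_nonneg (mul_nonneg hCe hs0)]
    have := mul_le_mul_of_nonneg_left hss hCe
    linarith
  have hcub : Ψ₁ * t * (Ce * s) + Q * (l + Ce * s) ≤ c' * s := by
    have h1 : Ψ₁ * t * (Ce * s) ≤ Ψ₁ * (2 * r) * (Ce * s) := by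
      gcongr
      exact (le_abs_self t).trans (htn.trans hδn)
    have h2 : Q * (l + Ce * s) ≤ ((κ + |G|) * (2 * s)) * (4 * Ce * r) := by
      refine (le_abs_self _).trans ?_
      rw [abs_mul]
      exact mul_le_mul hQb hm (abs_nonneg _) (by positivity)
    have h3 : Ψ₁ * (2 * r) * (Ce * s) + ((κ + |G|) * (2 * s)) * (4 * Ce * r) = (T - 1) * r * s := by
      rw [hT]; ring
    have h4 : (T - 1) * r * s ≤ c' * s := by
      gcongr
      linarith
    linarith
  have hψb := hψ δ hδR
  rw [hδe]
  have hfin : ψ (x₀ - y₀ + δ) * (η x + η y) ≤ (Ψ₀ + Ψ₁ * t + Q) * (E + (l + Ce * s)) := by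
    refine mul_le_mul (by rw [hQ]; linarith) hEη hηp ?_
    exact (hψ0 δ hδR).trans (by rw [hQ]; linarith)
  refine hfin.trans ?_
  have e1 : (Ψ₀ + Ψ₁ * t + Q) * (E + (l + Ce * s)) = Ψ₀ * E + (E * Ψ₁ * t + Ψ₀ * l) +
    (E * Q + Ψ₁ * t * l + Ψ₀ * Ce * s) + (Ψ₁ * t * (Ce * s) + Q * (l + Ce * s)) := by ring
  rw [e1, hQ]
  have e2 : E * (κ * (‖δ‖ ^ 2 - t ^ 2) - G * t ^ 2) =
    E * κ * ‖δ‖ ^ 2 + (-(E * (κ + G))) * t ^ 2 := by ring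
  rw [hQ] at hcub
  rw [e2]
  linarith

/-- Estimate of the quadratic form of `exists_doubling_form`, in terms of the scalars
`D = ‖h-k‖`, `H = ‖h‖`, `K = ‖k‖`. -/
lemma doubling_form_bound {r Ψ₀ Ψ₁ Ce Cb E κ G c' ε D H K t l : ℝ} (hr : 0 < r) (hΨ₁ : 0 ≤ Ψ₁)
    (hCe : 0 ≤ Ce) (hE : 0 ≤ E) (hD : 0 ≤ D) (ht : |t| ≤ D) (hl : |l| ≤ Ce * (H + K))
    (hκ : κ = Cb * (Ψ₁ / r)) (hG : -κ ≤ G) (hc' : c' = r * Ψ₁) (hΨ₀ : Ψ₀ * Ce ≤ Cb * Ce * c')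
    (hε : ε ≤ c') :
    2 * (E * κ * D ^ 2 + -(E * (κ + G)) * t ^ 2 + Ψ₁ * t * l +
      (Ψ₀ * Ce + c') * (H ^ 2 + K ^ 2)) + ε * (H ^ 2 + K ^ 2) ≤
    (2 * Cb * (E * Ψ₁) + 2 * Ce * Ψ₁) * (D ^ 2 / r) +
      (2 * Ce + 2 * Cb * Ce + 3) * Ψ₁ * (r * (H ^ 2 + K ^ 2)) := by
  set s := H ^ 2 + K ^ 2 with hs
  have hs0 : 0 ≤ s := by positivity
  have h2 : -(E * (κ + G)) * t ^ 2 ≤ 0 := by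
    have : 0 ≤ E * (κ + G) * t ^ 2 := mul_nonneg (mul_nonneg hE (by linarith)) (sq_nonneg t)
    linarith
  have i1 : t * l ≤ D * (Ce * (H + K)) := by
    refine (le_abs_self _).trans ?_
    rw [abs_mul]
    exact mul_le_mul ht hl (abs_nonneg _) hD
  have i2 : D * (H + K) ≤ D ^ 2 / r + r * s := by
    have j1 : D ^ 2 / r = r * (D / r) ^ 2 := by field_simp
    have j2 : D * (H + K) = r * ((D / r) * (H + K)) := by field_simp
    rw [j1, j2, ← mul_add]
    refine mul_le_mul_of_nonneg_left ?_ hr.le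
    rw [hs]
    nlinarith [sq_nonneg (D / r - H), sq_nonneg (D / r - K), sq_nonneg H, sq_nonneg K]
  have h3 : t * l ≤ Ce * (D ^ 2 / r + r * s) := by
    have := mul_le_mul_of_nonneg_left i2 hCe
    linarith
  have h4 : Ψ₁ * t * l ≤ Ψ₁ * (Ce * (D ^ 2 / r + r * s)) := by
    rw [mul_assoc]
    exact mul_le_mul_of_nonneg_left h3 hΨ₁
  have h5 : E * κ * D ^ 2 = Cb * (E * Ψ₁) * (D ^ 2 / r) := by
    rw [hκ]; ring
  have h6 : (Ψ₀ * Ce + c') * s ≤ (Cb * Ce * c' + c') * s :=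
    mul_le_mul_of_nonneg_right (by linarith) hs0
  have h7 : ε * s ≤ c' * s := mul_le_mul_of_nonneg_right hε hs0
  rw [hc'] at h6 h7 ⊢
  rw [h5]
  linarith

set_option maxHeartbeats 2000000 in
/-- The doubling-of-variables estimate. At a maximum of `u(x) + w(y) - ψ(x-y)(η(x)+η(y))` with
`x ≠ y`, the two equations can be subtracted. `Ψ₀, Ψ₁` are the value and the radial derivative of
`ψ`, and `-2G` bounds its second radial derivative. The first estimate has an error that vanishes
with `r = ‖x-y‖`; the second one exploits the concavity `G`. -/
lemma doubling_estimate {N : ℕ} {Ω : Set (EN N)} {ρ : EN N → ℝ} {q η₀ Ce : ℝ} {η : EN N → ℝ}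
    {n : EN N → EN N} (hη : BoundaryWeight Ω ρ q η₀ Ce η n) (hΩ : IsOpen Ω)
    (hK : IsCompact (closure Ω)) {α a A C₁ θ C₂ ν : ℝ}
    {F : EN N → EN N → Mat N → ℝ} (hF2 : CondF2 Ω α a A F)
    (hF3 : CondF3 Ω α C₁ θ F) (hF4 : CondF4 Ω α C₂ ν F) {b : EN N → EN N} {c₀ : EN N → ℝ → ℝ}
    {g g' u w : EN N → ℝ} (hu : UpperSemicontinuousOn u (closure Ω))
    (hw : UpperSemicontinuousOn w (closure Ω)) (hju : JetSub Ω ρ F b α c₀ g u)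
    (hjw : JetSub Ω ρ (dualOp F) b α c₀ g' w) {Cb : ℝ} (hCb : 1 ≤ Cb) :
    ∃ Ca ≥ 0, ∃ C > 0, ∃ γ : ℝ, 0 < γ ∧ ∃ r₁ > 0, r₁ ≤ 1 ∧ Ca * r₁ ≤ 1 / 2 ∧
      ∀ x₀ ∈ closure Ω, ∀ y₀ ∈ closure Ω, x₀ ≠ y₀ → ‖x₀ - y₀‖ ≤ r₁ →
      ∀ (ψ : EN N → ℝ) (Ψ₀ Ψ₁ G R : ℝ), 0 < R → 0 < Ψ₀ → 0 < Ψ₁ →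
      ‖x₀ - y₀‖ * Ψ₁ ≤ q * Ψ₀ → Ψ₀ ≤ Cb * (‖x₀ - y₀‖ * Ψ₁) →
      -(Cb * (Ψ₁ / ‖x₀ - y₀‖)) ≤ G → ψ (x₀ - y₀) = Ψ₀ →
      (∀ δ, ‖δ‖ ≤ R → 0 ≤ ψ (x₀ - y₀ + δ)) →
      (∀ δ, ‖δ‖ ≤ R → ψ (x₀ - y₀ + δ) ≤ Ψ₀ + Ψ₁ * ⟪‖x₀ - y₀‖⁻¹ • (x₀ - y₀), δ⟫ +
        Cb * (Ψ₁ / ‖x₀ - y₀‖) * (‖δ‖ ^ 2 - ⟪‖x₀ - y₀‖⁻¹ • (x₀ - y₀), δ⟫ ^ 2) -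
        G * ⟪‖x₀ - y₀‖⁻¹ • (x₀ - y₀), δ⟫ ^ 2) →
      (∀ x ∈ closure Ω, ∀ y ∈ closure Ω, ‖x - x₀‖ ≤ R → ‖y - y₀‖ ≤ R →
        u x + w y - ψ (x - y) * (η x + η y) ≤
          u x₀ + w y₀ - ψ (x₀ - y₀) * (η x₀ + η y₀)) →
      ∀ ε > 0, ∃ x ∈ closure Ω, ∃ y ∈ closure Ω, ∃ P p₁ p₂ : EN N,
        ‖P‖ = (η x₀ + η y₀) * Ψ₁ ∧
        ‖x - x₀‖ < ε ∧ ‖y - y₀‖ < ε ∧ |u x - u x₀| < ε ∧ |w y - w y₀| < ε ∧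
        ‖p₁ - P‖ ≤ Ca * ‖x₀ - y₀‖ * ‖P‖ ∧ ‖p₂ - P‖ ≤ Ca * ‖x₀ - y₀‖ * ‖P‖ ∧
        g x + g' y ≤ ‖P‖ ^ α * (C * ‖P‖ * ‖x₀ - y₀‖ ^ γ) +
          (⟪b x, p₁⟫ * ‖p₁‖ ^ α - ⟪b y, p₂⟫ * ‖p₂‖ ^ α + c₀ x (u x) + c₀ y (w y)) ∧
        g x + g' y ≤ ‖P‖ ^ α * (C * ‖P‖ - 4 * a * ((η x₀ + η y₀) * G)) +
          (⟪b x, p₁⟫ * ‖p₁‖ ^ α - ⟪b y, p₂⟫ * ‖p₂‖ ^ α + c₀ x (u x) + c₀ y (w y)) := by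
  have hη₀ := hη.η₀_pos
  have hCe := hη.Ce_nonneg
  have ha := hF2.1
  set Ca := 2 * Cb + (2 * Ce + 2 * Cb * Ce + 3) / (2 * η₀) with hCa
  have hCa' : 0 ≤ (2 * Ce + 2 * Cb * Ce + 3) / (2 * η₀) := by positivity
  have hCa1 : 1 ≤ Ca := by rw [hCa]; linarith
  obtain ⟨C, hC, γ, hγ, r₁, hr₁, hr₁1, hCar, hop⟩ := doubling_operator_bound hF2 hF3 hF4 hCa1
  set c5 := 8 * Ce + 4 * Cb * Ce + 6 with hc5
  have hc50 : 0 < c5 := by positivity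
  refine ⟨Ca, by linarith, C + a * c5 / (4 * η₀), by positivity, γ, hγ, r₁, hr₁, hr₁1, hCar, ?_⟩
  intro x₀ hx₀ y₀ hy₀ hne hrr₁ ψ Ψ₀ Ψ₁ G R hR hΨ₀ hΨ₁ hq hΨ₀₁ hG hψd hψ0 hψ hmax ε hε
  set d := x₀ - y₀ with hd
  set r := ‖d‖ with hr
  have hr0 : 0 < r := norm_pos_iff.2 (sub_ne_zero.2 hne)
  set e := r⁻¹ • d with he
  have hen : ‖e‖ = 1 := by
    rw [he, norm_smul, norm_inv, Real.norm_of_nonneg hr0.le, ← hr]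
    exact inv_mul_cancel₀ hr0.ne'
  set E := η x₀ + η y₀ with hE
  have hE1 : 2 * η₀ ≤ E := by linarith [hη.lower x₀ hx₀, hη.lower y₀ hy₀]
  have hE2 : E ≤ 2 := by linarith [hη.upper x₀ hx₀, hη.upper y₀ hy₀]
  have hE0 : 0 < E := by linarith
  set P : EN N := (E * Ψ₁ / r) • d with hP
  have hPe : P = (E * Ψ₁) • e := by
    rw [hP, he, smul_smul, div_eq_mul_inv]
  have hPn : ‖P‖ = E * Ψ₁ := by
    rw [hPe, norm_smul, hen, mul_one, Real.norm_of_nonneg (by positivity)]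
  clear_value e
  have hπ0 : 0 < ‖P‖ := by rw [hPn]; positivity
  have hP0 : P ≠ 0 := norm_pos_iff.1 hπ0
  have hΨπ : Ψ₁ ≤ ‖P‖ / (2 * η₀) := by
    rw [le_div_iff₀ (by positivity), hPn]
    nlinarith
  set κ := Cb * (Ψ₁ / r) with hκ
  have hκ0 : 0 ≤ κ := by positivity
  set c' := r * Ψ₁ with hc'
  have hc'0 : 0 < c' := by positivity
  obtain ⟨r', hr', hexp⟩ := penalisation_expansion hη hx₀ hy₀ hen.le hR hΨ₁.le hκ0 hc'0 hψ0 hψ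
  obtain ⟨S1, S2, hS, hSq⟩ := exists_doubling_form e (n x₀) (n y₀) (E * κ) (-(E * (κ + G))) Ψ₁
    (Ψ₀ * Ce + c')
  set pp : EN N := P + Ψ₀ • n x₀ with hpp
  set qq : EN N := -P + Ψ₀ • n y₀ with hqq
  have hup : ∀ x ∈ closure Ω, ∀ y ∈ closure Ω, ‖x - x₀‖ ≤ min r' R → ‖y - y₀‖ ≤ min r' R →
      u x + w y ≤ u x₀ + w y₀ + ⟪pp, x - x₀⟫ + ⟪qq, y - y₀⟫ +
        1 / 2 * (⟪S1 (x - x₀, y - y₀), x - x₀⟫ + ⟪S2 (x - x₀, y - y₀), y - y₀⟫) := by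
    intro x hx y hy hxr hyr
    have h1 := hexp x hx y hy (hxr.trans (min_le_left _ _)) (hyr.trans (min_le_left _ _))
    have h2 := hmax x hx y hy (hxr.trans (min_le_right _ _)) (hyr.trans (min_le_right _ _))
    rw [hψd] at h2
    rw [hSq]
    have h3 : ⟪pp, x - x₀⟫ + ⟪qq, y - y₀⟫ = E * Ψ₁ * ⟪e, (x - x₀) - (y - y₀)⟫ +
        Ψ₀ * (⟪n x₀, x - x₀⟫ + ⟪n y₀, y - y₀⟫) := by
      rw [hpp, hqq, hPe, inner_add_left, inner_add_left, inner_neg_left, real_inner_smul_left,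
        real_inner_smul_left, real_inner_smul_left, real_inner_smul_left,
        inner_sub_right e (x - x₀)]
      ring
    linarith
  obtain ⟨ε₁, hε₁, hb1⟩ := boundary_persist hη hΩ hx₀ (p := pp) fun hfr =>
    boundary_sign hη hfr hy₀ hne.symm hΨ₀ hΨ₁.le hE0.le hE2 hq
  obtain ⟨ε₂, hε₂, hb2⟩ := boundary_persist hη hΩ hy₀ (p := qq) fun hfr => by
    have h1 := boundary_sign hη hfr hx₀ hne hΨ₀ hΨ₁.le hE0.le hE2 (by rw [norm_sub_rev]; exact hq)
    have h2 : (E * Ψ₁ / ‖y₀ - x₀‖) • (y₀ - x₀) = -P := by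
      rw [hP, norm_sub_rev, ← smul_neg, hd, neg_sub]
    rw [h2] at h1
    exact h1
  set ε' := min (min ε (r / 2)) (min c' (min ε₁ ε₂)) with hε'
  have hε'0 : 0 < ε' := by positivity
  have e1 : ε' ≤ ε := (min_le_left _ _).trans (min_le_left _ _)
  have e2 : ε' ≤ r / 2 := (min_le_left _ _).trans (min_le_right _ _)
  have e3 : ε' ≤ c' := (min_le_right _ _).trans (min_le_left _ _)
  have e4 : ε' ≤ ε₁ := (min_le_right _ _).trans ((min_le_right _ _).trans (min_le_left _ _))
  have e5 : ε' ≤ ε₂ := (min_le_right _ _).trans ((min_le_right _ _).trans (min_le_right _ _))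
  obtain ⟨x, hx, y, hy, p', q', X, Z, hxx, hyy, hux, hwy, hp', hq', hX, hZ, hjx, hjy, hXZ⟩ :=
    sums_superjets hK hu hw hx₀ hy₀ pp qq hS (lt_min hr' hR) hup hε'0
  have hΨ₀' : Ψ₀ * Ce ≤ Cb * Ce * c' := by
    have := mul_le_mul_of_nonneg_right hΨ₀₁ hCe
    rw [hc']
    linarith
  have hcπ : ∀ t, 0 ≤ t → t ≤ 2 * Ce + 2 * Cb * Ce + 3 → t * Ψ₁ ≤
      (2 * Ce + 2 * Cb * Ce + 3) / (2 * η₀) * ‖P‖ := by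
    intro t ht0 ht
    calc t * Ψ₁ ≤ (2 * Ce + 2 * Cb * Ce + 3) * (‖P‖ / (2 * η₀)) :=
          mul_le_mul ht hΨπ hΨ₁.le (by positivity)
      _ = _ := by ring
  have hgrad : ∀ z ∈ closure Ω, ‖Ψ₀ • n z‖ + ε' ≤ Ca * r * ‖P‖ := by
    intro z hz
    have h1 : ‖Ψ₀ • n z‖ ≤ Ψ₀ * Ce := by
      rw [norm_smul, Real.norm_of_nonneg hΨ₀.le]
      exact mul_le_mul_of_nonneg_left (hη.grad_bound z hz) hΨ₀.le
    have h2 := hcπ (Cb * Ce + 1) (by positivity)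
      (by nlinarith [mul_nonneg (by linarith : (0:ℝ) ≤ Cb) hCe])
    have h3 : ‖Ψ₀ • n z‖ + ε' ≤ r * ((Cb * Ce + 1) * Ψ₁) := by
      rw [hc'] at hΨ₀' e3
      linarith
    refine h3.trans ?_
    calc r * ((Cb * Ce + 1) * Ψ₁) ≤ r * ((2 * Ce + 2 * Cb * Ce + 3) / (2 * η₀) * ‖P‖) := by gcongr
      _ = (2 * Ce + 2 * Cb * Ce + 3) / (2 * η₀) * (r * ‖P‖) := by ring
      _ ≤ Ca * (r * ‖P‖) := by
          gcongr
          rw [hCa]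
          linarith
      _ = _ := by ring
  have hp1 : ‖p' - P‖ ≤ Ca * r * ‖P‖ := by
    have h1 : p' - P = (p' - pp) + Ψ₀ • n x₀ := by rw [hpp]; abel
    rw [h1]
    refine (norm_add_le _ _).trans (le_trans ?_ (hgrad x₀ hx₀))
    linarith
  have hp2 : ‖-q' - P‖ ≤ Ca * r * ‖P‖ := by
    have h1 : -q' - P = -((q' - qq) + Ψ₀ • n y₀) := by rw [hqq]; abel
    rw [h1, norm_neg]
    refine (norm_add_le _ _).trans (le_trans ?_ (hgrad y₀ hy₀))
    linarith
  have hCar' : Ca * r ≤ 1 / 2 := le_trans (by gcongr) hCar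
  have hnz : ∀ p : EN N, ‖p - P‖ ≤ Ca * r * ‖P‖ → p ≠ 0 := by
    intro p hp h0
    rw [h0, zero_sub, norm_neg] at hp
    nlinarith
  have hp'0 : p' ≠ 0 := hnz p' hp1
  have hq'0 : q' ≠ 0 := by
    intro h0
    exact hnz _ hp2 (by rw [h0, neg_zero])
  have hdist : ‖x - y‖ ≤ 2 * r := by
    have h1 : x - y = (x - x₀) + d - (y - y₀) := by rw [hd]; abel
    rw [h1]
    refine (norm_sub_le _ _).trans ?_
    have := norm_add_le (x - x₀) d
    linarith
  have hmat : ∀ h k, qf X h - qf (-Z) k ≤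
      Ca * (‖P‖ / r * ‖h - k‖ ^ 2 + r * ‖P‖ * (‖h‖ ^ 2 + ‖k‖ ^ 2)) := by
    intro h k
    have h1 := hXZ h k
    rw [hSq] at h1
    rw [qf_neg]
    have htn : |⟪e, h - k⟫| ≤ ‖h - k‖ := by
      refine (abs_real_inner_le_norm _ _).trans ?_
      rw [hen, one_mul]
    have hln : |⟪n x₀, h⟫ + ⟪n y₀, k⟫| ≤ Ce * (‖h‖ + ‖k‖) := by
      have i1 : |⟪n x₀, h⟫| ≤ Ce * ‖h‖ := (abs_real_inner_le_norm _ _).trans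
        (mul_le_mul_of_nonneg_right (hη.grad_bound _ hx₀) (norm_nonneg _))
      have i2 : |⟪n y₀, k⟫| ≤ Ce * ‖k‖ := (abs_real_inner_le_norm _ _).trans
        (mul_le_mul_of_nonneg_right (hη.grad_bound _ hy₀) (norm_nonneg _))
      exact (abs_add_le _ _).trans (by linarith)
    have h2 := doubling_form_bound hr0 hΨ₁.le hCe hE0.le (norm_nonneg (h - k)) htn hln
      (show κ = Cb * (Ψ₁ / r) from hκ) hG (show c' = r * Ψ₁ from hc') hΨ₀' e3
    have h3 := hcπ (2 * Ce) (by positivity)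
      (by nlinarith [mul_nonneg (by linarith : (0:ℝ) ≤ Cb) hCe])
    have h4 := hcπ _ (by positivity) le_rfl
    have h5 : (2 * Cb * (E * Ψ₁) + 2 * Ce * Ψ₁) * (‖h - k‖ ^ 2 / r) ≤
        Ca * ‖P‖ * (‖h - k‖ ^ 2 / r) := by
      refine mul_le_mul_of_nonneg_right ?_ (by positivity)
      rw [← hPn, hCa]
      linarith
    have h6 : (2 * Ce + 2 * Cb * Ce + 3) * Ψ₁ * (r * (‖h‖ ^ 2 + ‖k‖ ^ 2)) ≤
        Ca * ‖P‖ * (r * (‖h‖ ^ 2 + ‖k‖ ^ 2)) := by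
      refine mul_le_mul_of_nonneg_right ?_ (by positivity)
      rw [hCa]
      have : 0 ≤ 2 * Cb * ‖P‖ := by positivity
      linarith
    have h7 : Ca * (‖P‖ / r * ‖h - k‖ ^ 2 + r * ‖P‖ * (‖h‖ ^ 2 + ‖k‖ ^ 2)) =
      Ca * ‖P‖ * (‖h - k‖ ^ 2 / r) + Ca * ‖P‖ * (r * (‖h‖ ^ 2 + ‖k‖ ^ 2)) := by ring
    rw [h7]
    calc qf X h - -qf Z k = qf X h + qf Z k := by ring
      _ ≤ _ := h1
      _ ≤ _ := h2
      _ ≤ _ := add_le_add h5 h6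
  have hFd := hop x hx y hy P p' (-q') hP0 r hr0 hrr₁ hdist hp1 hp2 X (-Z) hX hZ.neg hmat
  have hJ1 := hju.1 x hx p' hp'0 X hX hjx (hb1 x p' (hxx.trans_le e4) (hp'.trans_le e4))
  have hJ2 := hjw.1 y hy q' hq'0 Z hZ hjy (hb2 y q' (hyy.trans_le e5) (hq'.trans_le e5))
  simp only [dualOp] at hJ2
  have hsumJ : g x + g' y ≤ (F x p' X - F y (-q') (-Z)) + (⟪b x, p'⟫ * ‖p'‖ ^ α -
      ⟪b y, -q'⟫ * ‖-q'‖ ^ α + c₀ x (u x) + c₀ y (w y)) := by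
    rw [inner_neg_right, norm_neg]
    linarith
  have hPα : 0 < ‖P‖ ^ α := Real.rpow_pos_of_pos hπ0 α
  have hC' : 0 ≤ a * c5 / (4 * η₀) := by positivity
  refine ⟨x, hx, y, hy, P, p', -q', hPn, hxx.trans_le e1, hyy.trans_le e1, hux.trans_le e1,
    hwy.trans_le e1, hp1, hp2, hsumJ.trans ?_, hsumJ.trans ?_⟩
  · have h1 := hFd 0 (by simp)
    have h0 : qf (-Z - X) (0 : EN N) = 0 := by simp [qf]
    rw [h0, mul_zero, sub_zero] at h1
    have h2 : ‖P‖ ^ α * (C * ‖P‖ * r ^ γ) ≤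
        ‖P‖ ^ α * ((C + a * c5 / (4 * η₀)) * ‖P‖ * r ^ γ) := by
      gcongr
      linarith
    linarith
  · have h1 := hFd e hen.le
    have h2 := hXZ e (-e)
    rw [hSq] at h2
    have i1 : e - -e = (2 : ℝ) • e := by module
    have i2 : qf Z (-e) = qf Z e := by simp [qf]
    have i3 : ⟪e, (2 : ℝ) • e⟫ = 2 := by
      rw [real_inner_smul_right, real_inner_self_eq_norm_sq, hen]; norm_num
    have i4 : ‖(2 : ℝ) • e‖ ^ 2 = 4 := by
      rw [norm_smul, hen, Real.norm_of_nonneg (by norm_num)]; norm_num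
    rw [i1, i2, i3, i4, norm_neg, hen] at h2
    have hln : ⟪n x₀, e⟫ + ⟪n y₀, -e⟫ ≤ 2 * Ce := by
      have j1 : ⟪n x₀, e⟫ ≤ Ce := (real_inner_le_norm _ _).trans (by
        rw [hen, mul_one]; exact hη.grad_bound _ hx₀)
      have j2 : ⟪n y₀, -e⟫ ≤ Ce := (real_inner_le_norm _ _).trans (by
        rw [norm_neg, hen, mul_one]; exact hη.grad_bound _ hy₀)
      linarith
    have h3 : Ψ₁ * 2 * (⟪n x₀, e⟫ + ⟪n y₀, -e⟫) ≤ Ψ₁ * 2 * (2 * Ce) := by gcongr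
    have hc'1 : c' ≤ Ψ₁ := by
      rw [hc']
      nlinarith
    have h4 : Ψ₀ * Ce ≤ Cb * Ce * Ψ₁ := hΨ₀'.trans (by gcongr)
    have h5 : qf X e + qf Z e ≤ -8 * (E * G) + c5 * Ψ₁ := by
      rw [hc5]
      linarith
    have h6 : qf (-Z - X) e = -(qf X e + qf Z e) := by
      rw [qf_sub, qf_neg]; ring
    rw [h6] at h1
    have h7 : c5 * Ψ₁ ≤ c5 * (‖P‖ / (2 * η₀)) := by gcongr
    have hrγ : r ^ γ ≤ 1 := Real.rpow_le_one hr0.le (hrr₁.trans hr₁1) hγ.le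
    have h8 : C * ‖P‖ * r ^ γ ≤ C * ‖P‖ * 1 := by gcongr
    have h9 : a / 2 * (qf X e + qf Z e) ≤
        a / 2 * (-8 * (E * G) + c5 * (‖P‖ / (2 * η₀))) :=
      mul_le_mul_of_nonneg_left (by linarith) (by positivity)
    have h10 : a / 2 * (c5 * (‖P‖ / (2 * η₀))) = a * c5 / (4 * η₀) * ‖P‖ := by
      field_simp
      norm_num
    have h11 : C * ‖P‖ * r ^ γ - a / 2 * -(qf X e + qf Z e) ≤
        (C + a * c5 / (4 * η₀)) * ‖P‖ - 4 * a * (E * G) := by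
      linarith
    have h12 := mul_le_mul_of_nonneg_left h11 hPα.le
    linarith

/-! ### Power penalties -/

lemma one_add_pow_le (m : ℕ) {s : ℝ} (h1 : -1 ≤ s) (h3 : s ≤ 3) :
    (1 + s) ^ m ≤ 1 + m * s + 5 ^ m * s ^ 2 := by
  induction m with
  | zero => simp; positivity
  | succ m ih =>
    have h5 : (m : ℝ) ≤ 5 ^ m := by
      exact_mod_cast (Nat.lt_pow_self (by norm_num : 1 < 5)).le
    have h0 : 0 ≤ 1 + s := by linarith
    have hs := sq_nonneg s
    calc (1 + s) ^ (m + 1) = (1 + s) ^ m * (1 + s) := pow_succ _ _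
      _ ≤ (1 + m * s + 5 ^ m * s ^ 2) * (1 + s) := by gcongr
      _ = 1 + (m + 1) * s + (m + 5 ^ m) * s ^ 2 + 5 ^ m * (s ^ 2 * s) := by ring
      _ ≤ 1 + (m + 1) * s + (5 ^ m + 5 ^ m) * s ^ 2 + 5 ^ m * (s ^ 2 * 3) := by gcongr
      _ = _ := by push_cast; ring

/-- Second order expansion of `Λ‖·‖^(2m)` away from the origin, in the form used by
`penalisation_expansion`. -/
lemma power_expansion {N : ℕ} {m : ℕ} (hm : 1 ≤ m) {Λ : ℝ} (hΛ : 0 ≤ Λ) {d : EN N} (hd : d ≠ 0)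
    {δ : EN N} (hδ : ‖δ‖ ≤ ‖d‖) {Ψ₁ κ : ℝ} (hΨ₁ : Ψ₁ = 2 * m * Λ * ‖d‖ ^ (2 * m - 1))
    (hκ : κ = 10 * 5 ^ m * (Ψ₁ / ‖d‖)) :
    Λ * ‖d + δ‖ ^ (2 * m) ≤ Λ * ‖d‖ ^ (2 * m) + Ψ₁ * ⟪‖d‖⁻¹ • d, δ⟫ +
      κ * (‖δ‖ ^ 2 - ⟪‖d‖⁻¹ • d, δ⟫ ^ 2) - (-κ) * ⟪‖d‖⁻¹ • d, δ⟫ ^ 2 := by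
  have hr0 : 0 < ‖d‖ := norm_pos_iff.2 hd
  rw [real_inner_smul_left]
  set i := ⟪d, δ⟫ with hi
  have hib : |i| ≤ ‖d‖ * ‖δ‖ := abs_real_inner_le_norm _ _
  have hnorm : ‖d + δ‖ ^ 2 = ‖d‖ ^ 2 + (2 * i + ‖δ‖ ^ 2) := by
    rw [norm_add_sq_real]; ring
  set r := ‖d‖ with hr
  set k := ‖δ‖ with hk
  have hk0 : 0 ≤ k := norm_nonneg _
  set s := (2 * i + k ^ 2) / r ^ 2 with hs
  have hnorm' : ‖d + δ‖ ^ 2 = r ^ 2 * (1 + s) := by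
    rw [hnorm, hs]; field_simp
  have hkr : k ^ 2 ≤ r * k := by nlinarith
  have hsb : |s| ≤ 3 * (k / r) := by
    rw [hs, abs_div, abs_of_pos (show 0 < r ^ 2 by positivity), div_le_iff₀ (by positivity)]
    have : 3 * (k / r) * r ^ 2 = 3 * (r * k) := by field_simp
    rw [this]
    refine (abs_add_le _ _).trans ?_
    rw [abs_mul, abs_of_nonneg (sq_nonneg k), abs_two]
    linarith
  have hkr1 : k / r ≤ 1 := (div_le_one hr0).2 hδ
  have hs1 : -1 ≤ s := by
    have h1 : 0 ≤ r ^ 2 * (1 + s) := by rw [← hnorm']; positivity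
    have h2 : 0 ≤ 1 + s := nonneg_of_mul_nonneg_right h1 (by positivity)
    linarith
  have hs3 : s ≤ 3 := by linarith [le_abs_self s]
  have hs2 : s ^ 2 ≤ 9 * (k ^ 2 / r ^ 2) := by
    rw [← sq_abs]
    calc |s| ^ 2 ≤ (3 * (k / r)) ^ 2 := by gcongr
      _ = _ := by ring
  have hpow := one_add_pow_le m hs1 hs3
  have hm1 : (1 : ℝ) ≤ m := by exact_mod_cast hm
  have h5 : (1 : ℝ) ≤ 5 ^ m := one_le_pow₀ (by norm_num)
  have hrm : r ^ (2 * m) = r ^ (2 * m - 1) * r := by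
    rw [← pow_succ]; congr 1; omega
  have hL : Λ * ‖d + δ‖ ^ (2 * m) = Λ * r ^ (2 * m) * (1 + s) ^ m := by
    rw [pow_mul, hnorm', mul_pow, ← pow_mul]; ring
  rw [hL]
  have hmain : (1 + s) ^ m ≤ 1 + m * (2 * i / r ^ 2) + 10 * 5 ^ m * (2 * m) * (k ^ 2 / r ^ 2) := by
    have e1 : s = 2 * i / r ^ 2 + k ^ 2 / r ^ 2 := by rw [hs, add_div]
    have e2 : 0 ≤ k ^ 2 / r ^ 2 := by positivity
    have e3 : (m : ℝ) + 9 * 5 ^ m ≤ 10 * 5 ^ m * (2 * m) := by nlinarith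
    calc (1 + s) ^ m ≤ 1 + m * s + 5 ^ m * s ^ 2 := hpow
      _ ≤ 1 + m * s + 5 ^ m * (9 * (k ^ 2 / r ^ 2)) := by gcongr
      _ = 1 + m * (2 * i / r ^ 2) + (m + 9 * 5 ^ m) * (k ^ 2 / r ^ 2) := by rw [e1]; ring
      _ ≤ _ := by gcongr
  calc Λ * r ^ (2 * m) * (1 + s) ^ m
      ≤ Λ * r ^ (2 * m) * (1 + m * (2 * i / r ^ 2) +
          10 * 5 ^ m * (2 * m) * (k ^ 2 / r ^ 2)) := by gcongr
    _ = _ := by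
      rw [hκ, hΨ₁, hrm]
      field_simp
      ring

/-- A function with a quadratic modulus of continuity on a ball has vanishing derivative there, so
it is constant. -/
lemma const_of_quadratic_modulus {N : ℕ} {u : EN N → ℝ} {x : EN N} {s C : ℝ} (hs : 0 < s)
    (h : ∀ y ∈ ball x s, ∀ z ∈ ball x s, |u y - u z| ≤ C * ‖y - z‖ ^ 2) :
    ∀ y ∈ ball x s, u y = u x := by
  have hd : ∀ z ∈ ball x s, HasFDerivAt u (0 : EN N →L[ℝ] ℝ) z := by
    intro z hz
    rw [hasFDerivAt_iff_isLittleO]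
    have h1 : (fun y => u y - u z - (0 : EN N →L[ℝ] ℝ) (y - z)) =O[𝓝 z]
        fun y => ‖y - z‖ ^ 2 := by
      refine Asymptotics.IsBigO.of_bound C ?_
      filter_upwards [isOpen_ball.mem_nhds hz] with y hy
      have := h y hy z hz
      simpa using this
    refine h1.trans_isLittleO ?_
    have h2 : (fun y : EN N => ‖y - z‖ ^ 2) =o[𝓝 z] fun y => ‖y - z‖ := by
      have h3 : Tendsto (fun y : EN N => ‖y - z‖) (𝓝 z) (𝓝 0) := by
        have : Continuous fun y : EN N => ‖y - z‖ := by fun_prop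
        simpa using this.tendsto z
      have h4 := (Asymptotics.isLittleO_pow_id (𝕜 := ℝ) (n := 2) (by norm_num)).comp_tendsto h3
      exact h4
    exact h2.norm_right.trans_isBigO (Asymptotics.isBigO_of_le _ fun y => by simp)
  intro y hy
  exact isOpen_ball.is_const_of_fderiv_eq_zero (convex_ball x s).isPreconnected
    (fun z hz => (hd z hz).differentiableAt.differentiableWithinAt)
    (fun z hz => (hd z hz).fderiv) hy (mem_ball_self hs)

/-! ### Touching by flat functions -/

/-- At a maximum point `x ≠ z` of `u - Λ‖· - z‖^(2m)(η + η z)` the function `u` has a superjet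
`(p, X)` with `|p|` comparable to `Ψ₁ = 2mΛ‖x-z‖^(2m-1)` and `‖X‖ = O(Ψ₁/‖x-z‖)`, whose gradient
points strictly outward when `x` is a boundary point. -/
lemma diagonal_jet {N : ℕ} {Ω : Set (EN N)} {ρ : EN N → ℝ} {q η₀ Ce : ℝ} {η : EN N → ℝ}
    {n : EN N → EN N} (hη : BoundaryWeight Ω ρ q η₀ Ce η n) (hΩ : IsOpen Ω) {m : ℕ} (hm : 1 ≤ m)
    (hq : 2 * m ≤ q) {Λ : ℝ} (hΛ : 0 < Λ) {u : EN N → ℝ} {x z : EN N} (hx : x ∈ closure Ω)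
    (hz : z ∈ closure Ω) (hxz : x ≠ z) (hr1 : ‖x - z‖ ≤ 1) (hrC : ‖x - z‖ * Ce ≤ η₀)
    (hmax : ∀ y ∈ closure Ω, u y - Λ * ‖y - z‖ ^ (2 * m) * (η y + η z) ≤
      u x - Λ * ‖x - z‖ ^ (2 * m) * (η x + η z)) {Ψ₁ : ℝ}
    (hΨ₁ : Ψ₁ = 2 * m * Λ * ‖x - z‖ ^ (2 * m - 1)) :
    ∃ (p : EN N) (X : Mat N), X.IsSymm ∧ SupJet (closure Ω) u x p X ∧ η₀ * Ψ₁ ≤ ‖p‖ ∧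
      ‖p‖ ≤ 3 * Ψ₁ ∧ matNorm X ≤ (40 * 5 ^ m + 4 * Ce + 2) * (Ψ₁ / ‖x - z‖) ∧
      (x ∈ Ω ∨ 0 < ⟪p, gradient ρ x⟫) := by
  have hη₀ := hη.η₀_pos
  have hCe := hη.Ce_nonneg
  have hm0 : (1 : ℝ) ≤ m := by exact_mod_cast hm
  set d := x - z with hd
  have hd0 : d ≠ 0 := sub_ne_zero.2 hxz
  set r := ‖d‖ with hr
  have hr0 : 0 < r := norm_pos_iff.2 hd0
  set e := r⁻¹ • d with he
  have hen : ‖e‖ = 1 := by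
    rw [he, norm_smul, norm_inv, Real.norm_of_nonneg hr0.le, ← hr]
    exact inv_mul_cancel₀ hr0.ne'
  set E := η x + η z with hE
  have hE1 : 2 * η₀ ≤ E := by linarith [hη.lower x hx, hη.lower z hz]
  have hE2 : E ≤ 2 := by linarith [hη.upper x hx, hη.upper z hz]
  have hE0 : 0 < E := by linarith
  have hη1 : η₀ ≤ 1 := by linarith
  have hΨ₁0 : 0 < Ψ₁ := by rw [hΨ₁]; positivity
  set Ψ₀ := Λ * r ^ (2 * m) with hΨ₀
  have hΨ₀0 : 0 < Ψ₀ := by rw [hΨ₀]; positivity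
  have hrel : r * Ψ₁ = 2 * m * Ψ₀ := by
    rw [hΨ₁, hΨ₀]
    obtain ⟨k, rfl⟩ : ∃ k, m = k + 1 := ⟨m - 1, by omega⟩
    rw [show 2 * (k + 1) - 1 = 2 * k + 1 by omega, show 2 * (k + 1) = 2 * k + 1 + 1 by ring,
      pow_succ r (2 * k + 1)]
    ring
  have hΨ₀le : 2 * Ψ₀ ≤ r * Ψ₁ := by rw [hrel]; gcongr; linarith
  set κ := 10 * 5 ^ m * (Ψ₁ / r) with hκ
  have hκ0 : 0 ≤ κ := by positivity
  have hrΨ : 0 < r * Ψ₁ := by positivity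
  obtain ⟨s, hs, hexp⟩ := penalisation_expansion hη hx hz hen.le (ψ := fun δ => Λ * ‖δ‖ ^ (2 * m))
    (Ψ₀ := Ψ₀) (Ψ₁ := Ψ₁) (κ := κ) (G := -κ) (R := r) (c' := r * Ψ₁) hr0 hΨ₁0.le hκ0 hrΨ
    (fun δ _ => by positivity) (fun δ hδ => power_expansion hm hΛ.le hd0 hδ hΨ₁ hκ)
  have hPn : ‖(E * Ψ₁ / r) • d‖ = E * Ψ₁ := by
    rw [norm_smul, Real.norm_of_nonneg (by positivity), ← hr]
    field_simp
  set P : EN N := (E * Ψ₁ / r) • d with hP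
  have hPe : P = (E * Ψ₁) • e := by rw [hP, he, smul_smul, div_eq_mul_inv]
  have hnx := hη.grad_bound x hx
  have hnn : ‖Ψ₀ • n x‖ ≤ η₀ * Ψ₁ := by
    rw [norm_smul, Real.norm_of_nonneg hΨ₀0.le]
    calc Ψ₀ * ‖n x‖ ≤ (r * Ψ₁) * Ce := by
          have : Ψ₀ ≤ r * Ψ₁ := by linarith
          gcongr
      _ = (r * Ce) * Ψ₁ := by ring
      _ ≤ _ := by gcongr
  set t := E * κ + Ψ₁ * Ce + (Ψ₀ * Ce + r * Ψ₁) with ht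
  have ht0 : 0 ≤ t := by positivity
  refine ⟨P + Ψ₀ • n x, (2 * t) • 1, isSymm_smul_one _, ?_, ?_, ?_, ?_, ?_⟩
  · intro ε hε
    have hev : ∀ᶠ y in 𝓝[closure Ω] x, ‖y - x‖ ≤ s := by
      refine mem_nhdsWithin_of_mem_nhds ?_
      filter_upwards [Metric.closedBall_mem_nhds x hs] with y hy
      rwa [mem_closedBall, dist_eq_norm] at hy
    filter_upwards [hev, self_mem_nhdsWithin] with y hy hyK
    have h1 := hexp y hyK z hz hy (by simp [hs.le])
    have h2 := hmax y hyK
    clear_value e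
    rw [qf_smul, qf_one, inner_add_left, hPe, real_inner_smul_left, real_inner_smul_left]
    rw [← hE] at h1
    simp only [sub_self, sub_zero, inner_zero_right, add_zero, norm_zero] at h1
    have h3 : ⟪e, y - x⟫ * ⟪n x, y - x⟫ ≤ Ce * ‖y - x‖ ^ 2 := by
      calc ⟪e, y - x⟫ * ⟪n x, y - x⟫ ≤ |⟪e, y - x⟫| * |⟪n x, y - x⟫| := by
            rw [← abs_mul]; exact le_abs_self _
        _ ≤ (‖e‖ * ‖y - x‖) * (‖n x‖ * ‖y - x‖) := by
            gcongr
            · exact abs_real_inner_le_norm _ _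
            · exact abs_real_inner_le_norm _ _
        _ ≤ (1 * ‖y - x‖) * (Ce * ‖y - x‖) := by gcongr; exact hen.le
        _ = _ := by ring
    have h4 := mul_le_mul_of_nonneg_left h3 hΨ₁0.le
    have h5 : 0 ≤ ε * ‖y - x‖ ^ 2 := by positivity
    have h6 : 1 / 2 * (2 * t * ‖y - x‖ ^ 2) = E * κ * ‖y - x‖ ^ 2 + Ψ₁ * (Ce * ‖y - x‖ ^ 2) +
        (Ψ₀ * Ce + r * Ψ₁) * ‖y - x‖ ^ 2 := by rw [ht]; ring
    rw [h6]
    linarith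
  · have h1 := norm_sub_norm_le P (-(Ψ₀ • n x))
    rw [sub_neg_eq_add, norm_neg, hPn] at h1
    have := mul_le_mul_of_nonneg_right hE1 hΨ₁0.le
    linarith
  · have h1 := norm_add_le P (Ψ₀ • n x)
    rw [hPn] at h1
    have := mul_le_mul_of_nonneg_right hE2 hΨ₁0.le
    have := mul_le_mul_of_nonneg_right hη1 hΨ₁0.le
    linarith
  · have hb : Ψ₁ ≤ Ψ₁ / r := by
      rw [le_div_iff₀ hr0]
      exact mul_le_of_le_one_right hΨ₁0.le hr1
    have hb0 : 0 ≤ Ψ₁ / r := by positivity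
    have hrΨ1 : r * Ψ₁ ≤ Ψ₁ / r := (mul_le_of_le_one_left hΨ₁0.le hr1).trans hb
    refine matNorm_le_of_abs_qf_le (isSymm_smul_one _) (by positivity) fun y => ?_
    rw [qf_smul, qf_one, abs_of_nonneg (by positivity)]
    refine mul_le_mul_of_nonneg_right ?_ (sq_nonneg _)
    have e1 : E * κ ≤ 2 * κ := by gcongr
    have e2 : Ψ₁ * Ce ≤ Ψ₁ / r * Ce := by gcongr
    have e3 : Ψ₀ * Ce ≤ Ψ₁ / r * Ce := mul_le_mul_of_nonneg_right (by linarith) hCe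
    calc 2 * t ≤ 2 * (2 * κ + Ψ₁ / r * Ce + (Ψ₁ / r * Ce + Ψ₁ / r)) := by
          rw [ht]
          linarith
      _ = _ := by rw [hκ]; ring
  · by_cases hxΩ : x ∈ Ω
    · exact Or.inl hxΩ
    · right
      have hfr : x ∈ frontier Ω := by
        rw [hΩ.frontier_eq]
        exact ⟨hx, hxΩ⟩
      refine hη.outward x _ (boundary_sign hη hfr hz hxz.symm hΨ₀0 hΨ₁0.le hE0.le hE2 ?_)
      rw [← hd, ← hr, hrel]
      gcongr

lemma exists_mul_rpow_le {β : ℝ} (hβ : 0 < β) (C : ℝ) {ε : ℝ} (hε : 0 < ε) :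
    ∃ s > 0, ∀ r : ℝ, 0 ≤ r → r ≤ s → C * r ^ β ≤ ε := by
  have h1 : Continuous fun r : ℝ => C * r ^ β :=
    continuous_const.mul (Real.continuous_rpow_const hβ.le)
  have h2 : ∀ᶠ r in 𝓝 (0 : ℝ), C * r ^ β < ε := by
    refine h1.continuousAt.eventually_lt continuousAt_const ?_
    simp [Real.zero_rpow hβ.ne', hε]
  obtain ⟨s, hs, hb⟩ := Metric.eventually_nhds_iff.1 h2
  refine ⟨s / 2, by positivity, fun r hr0 hr => (hb ?_).le⟩
  rw [Real.dist_eq, sub_zero, abs_of_nonneg hr0]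
  linarith

set_option maxHeartbeats 1000000 in
/-- If `u` is touched from above at `x'` by the flat function `u x' + C‖· - x'‖^(2m)`, with `m` large,
then the equation for `u` holds at points near `x'` with its first and second order terms dropped.
Either `u` is locally constant around points of `Ω` close to `x'`, or sliding the vertex `z` of the
penalisation near `x'` produces contact points with small but nonzero gradients. -/
lemma diagonal_estimate {N : ℕ} {Ω : Set (EN N)} {ρ : EN N → ℝ} {q η₀ Ce : ℝ} {η : EN N → ℝ}
    {n : EN N → EN N} (hη : BoundaryWeight Ω ρ q η₀ Ce η n) (hΩ : IsOpen Ω)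
    (hK : IsCompact (closure Ω)) {m : ℕ} (hm : 1 ≤ m) (hq : 2 * m ≤ q) {α : ℝ} (hα : -1 < α)
    (hmα : 1 < (2 * m - 1) * (1 + α)) {F : EN N → EN N → Mat N → ℝ} {b : EN N → EN N}
    {c₀ : EN N → ℝ → ℝ} {g u : EN N → ℝ} (hu : UpperSemicontinuousOn u (closure Ω))
    (hj : JetSub Ω ρ F b α c₀ g u) {CF : ℝ} (hCF : 0 ≤ CF)
    (hF : ∀ x ∈ closure Ω, ∀ p : EN N, p ≠ 0 → ∀ X : Mat N, X.IsSymm →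
      |F x p X| ≤ CF * ‖p‖ ^ α * matNorm X) {Bb : ℝ} (hb : ∀ x ∈ closure Ω, ‖b x‖ ≤ Bb)
    {x' : EN N} (hx' : x' ∈ closure Ω) {C : ℝ} (hC : 0 < C)
    (htouch : ∀ x ∈ closure Ω, u x ≤ u x' + C * ‖x - x'‖ ^ (2 * m)) {ε : ℝ} (hε : 0 < ε) :
    ∃ x ∈ closure Ω, ‖x - x'‖ < ε ∧ |u x - u x'| < ε ∧ g x ≤ ε + c₀ x (u x) := by
  have hη₀ := hη.η₀_pos
  have hCe := hη.Ce_nonneg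
  have hBb : 0 ≤ Bb := (norm_nonneg _).trans (hb x' hx')
  have hm0 : (1 : ℝ) ≤ m := by exact_mod_cast hm
  have h2m : 2 * m ≠ 0 := by omega
  obtain ⟨Λ, hΛd⟩ : ∃ Λ, Λ = C * 4 ^ m / η₀ := ⟨_, rfl⟩
  have hΛ : 0 < Λ := by rw [hΛd]; positivity
  have hΛη : C * 4 ^ m = Λ * η₀ := by rw [hΛd]; field_simp
  obtain ⟨S, hSd⟩ : ∃ S, S = 1 + 2 / η₀ := ⟨_, rfl⟩
  have hS : 1 ≤ S := by
    have : 0 < 2 / η₀ := by positivity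
    linarith
  obtain ⟨D, hDd⟩ : ∃ D, D = 2 * Λ + C * (S + 1) ^ (2 * m) := ⟨_, rfl⟩
  have hD : 0 < D := by rw [hDd]; positivity
  have hpow : ∀ t : ℝ, 0 ≤ t → t ≤ 1 → t ^ (2 * m) ≤ t := fun t h0 h1 => pow_le_of_le_one h0 h1 h2m
  by_cases hB : ∃ ζ₀ > 0, ∀ z ∈ closure Ω, ‖z - x'‖ < ζ₀ → ∀ x ∈ closure Ω,
      u x - Λ * ‖x - z‖ ^ (2 * m) * (η x + η z) ≤ u z
  · obtain ⟨ζ₀, hζ₀, hB⟩ := hB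
    have hB' : ∀ z ∈ closure Ω, ‖z - x'‖ < ζ₀ → ∀ x ∈ closure Ω,
        u x ≤ u z + 2 * Λ * ‖x - z‖ ^ (2 * m) := by
      intro z hz hzx x hx
      have h1 := hB z hz hzx x hx
      have h2 : Λ * ‖x - z‖ ^ (2 * m) * (η x + η z) ≤ Λ * ‖x - z‖ ^ (2 * m) * 2 := by
        have := hη.upper x hx
        have := hη.upper z hz
        gcongr
        linarith
      linarith
    obtain ⟨s, hs⟩ : ∃ s, s = min (min (ζ₀ / 2) ε) (min 1 (ε / (D + 1))) := ⟨_, rfl⟩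
    have hs0 : 0 < s := by rw [hs]; positivity
    have hsζ : s ≤ ζ₀ / 2 := by rw [hs]; exact (min_le_left _ _).trans (min_le_left _ _)
    have hsε : s ≤ ε := by rw [hs]; exact (min_le_left _ _).trans (min_le_right _ _)
    have hs1 : s ≤ 1 := by rw [hs]; exact (min_le_right _ _).trans (min_le_left _ _)
    have hsD : s * (D + 1) ≤ ε := by
      rw [← le_div_iff₀ (by positivity), hs]
      exact (min_le_right _ _).trans (min_le_right _ _)
    obtain ⟨x₁, hx₁Ω, hx₁⟩ := Metric.mem_closure_iff.1 hx' s hs0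
    rw [dist_comm, dist_eq_norm] at hx₁
    have hx₁K := subset_closure hx₁Ω
    obtain ⟨t, ht, htΩ⟩ := Metric.isOpen_iff.1 hΩ x₁ hx₁Ω
    have hmin : 0 < min t (min (ζ₀ / 2) (1 / 2)) := by positivity
    have hconst := const_of_quadratic_modulus (u := u) (x := x₁) (C := 2 * Λ) hmin (by
      have key : ∀ y ∈ ball x₁ (min t (min (ζ₀ / 2) (1 / 2))),
          ∀ z ∈ ball x₁ (min t (min (ζ₀ / 2) (1 / 2))), u y - u z ≤ 2 * Λ * ‖y - z‖ ^ 2 := by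
        intro y hy z hz
        rw [mem_ball, dist_eq_norm] at hy hz
        have hyt : ‖y - x₁‖ < t := hy.trans_le (min_le_left _ _)
        have hzt : ‖z - x₁‖ < t := hz.trans_le (min_le_left _ _)
        have hy2 : ‖y - x₁‖ < 1 / 2 := hy.trans_le ((min_le_right _ _).trans (min_le_right _ _))
        have hz2 : ‖z - x₁‖ < 1 / 2 := hz.trans_le ((min_le_right _ _).trans (min_le_right _ _))
        have hz3 : ‖z - x₁‖ < ζ₀ / 2 := hz.trans_le ((min_le_right _ _).trans (min_le_left _ _))
        have hyK := subset_closure (htΩ (mem_ball_iff_norm.2 hyt))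
        have hzK := subset_closure (htΩ (mem_ball_iff_norm.2 hzt))
        have hzx : ‖z - x'‖ < ζ₀ := by
          have := norm_sub_le_norm_sub_add_norm_sub z x₁ x'
          linarith
        have h1 := hB' z hzK hzx y hyK
        have hyz : ‖y - z‖ ≤ 1 := by
          have := norm_sub_le_norm_sub_add_norm_sub y x₁ z
          rw [norm_sub_rev x₁ z] at this
          linarith
        have h2 : ‖y - z‖ ^ (2 * m) ≤ ‖y - z‖ ^ 2 :=
          pow_le_pow_of_le_one (norm_nonneg _) hyz (by omega)
        have h3 := mul_le_mul_of_nonneg_left h2 (by positivity : 0 ≤ 2 * Λ)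
        linarith
      intro y hy z hz
      rw [abs_le]
      have h1 := key y hy z hz
      have h2 := key z hz y hy
      rw [norm_sub_rev] at h2
      constructor <;> linarith)
    refine ⟨x₁, hx₁K, hx₁.trans_le hsε, ?_, ?_⟩
    · have h1 := htouch x₁ hx₁K
      have h2 := hB' x₁ hx₁K (by linarith) x' hx'
      rw [norm_sub_rev] at h2
      have h3 := hpow _ (norm_nonneg (x₁ - x')) (hx₁.le.trans hs1)
      have h3' : ‖x₁ - x'‖ ^ (2 * m) ≤ s := h3.trans hx₁.le
      have hCD : C ≤ D := by
        have : C * 1 ≤ C * (S + 1) ^ (2 * m) := by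
          gcongr
          exact one_le_pow₀ (by linarith)
        linarith
      have hΛD : 2 * Λ ≤ D := by
        have : 0 ≤ C * (S + 1) ^ (2 * m) := by positivity
        linarith
      have h4 : C * ‖x₁ - x'‖ ^ (2 * m) ≤ D * s := by gcongr
      have h5 : 2 * Λ * ‖x₁ - x'‖ ^ (2 * m) ≤ D * s := by gcongr
      rw [abs_lt]
      constructor <;> linarith
    · have h1 := hj.2 x₁ hx₁Ω (u x₁) (by
        refine mem_nhdsWithin_of_mem_nhds ?_
        filter_upwards [ball_mem_nhds x₁ hmin] with y hy using hconst y hy)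
      linarith
  · push Not at hB
    obtain ⟨β, hβd⟩ : ∃ β, β = (2 * m - 1) * (1 + α) - 1 := ⟨_, rfl⟩
    have hβ : 0 < β := by linarith
    obtain ⟨C5, hC5d⟩ : ∃ C5, C5 = 40 * 5 ^ m + 4 * Ce + 2 := ⟨_, rfl⟩
    have hC5 : 0 < C5 := by rw [hC5d]; positivity
    obtain ⟨C6, hC6d⟩ : ∃ C6, C6 = CF * C5 / η₀ + Bb := ⟨_, rfl⟩
    have hC6 : 0 ≤ C6 := by rw [hC6d]; positivity
    obtain ⟨s₀, hs₀, hsmall⟩ := exists_mul_rpow_le hβ (C6 * (6 * m * Λ) ^ (1 + α)) hε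
    obtain ⟨s, hs⟩ : ∃ s, s = min (min s₀ ε) (min 1 (min (ε / (D + 1)) (η₀ / (Ce + 1)))) / (S + 1) :=
      ⟨_, rfl⟩
    have hs0 : 0 < s := by rw [hs]; positivity
    have hsS : s * (S + 1) = min (min s₀ ε) (min 1 (min (ε / (D + 1)) (η₀ / (Ce + 1)))) := by
      rw [hs]; field_simp
    have hs1 : s * (S + 1) ≤ s₀ := by rw [hsS]; exact (min_le_left _ _).trans (min_le_left _ _)
    have hs2 : s * (S + 1) ≤ ε := by rw [hsS]; exact (min_le_left _ _).trans (min_le_right _ _)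
    have hs3 : s * (S + 1) ≤ 1 := by rw [hsS]; exact (min_le_right _ _).trans (min_le_left _ _)
    have hs4 : s * (S + 1) ≤ ε / (D + 1) := by
      rw [hsS]; exact (min_le_right _ _).trans ((min_le_right _ _).trans (min_le_left _ _))
    have hs5 : s * (S + 1) ≤ η₀ / (Ce + 1) := by
      rw [hsS]; exact (min_le_right _ _).trans ((min_le_right _ _).trans (min_le_right _ _))
    have hsle : s ≤ s * (S + 1) := le_mul_of_one_le_right hs0.le (by linarith)
    rw [le_div_iff₀ (by positivity)] at hs4 hs5
    obtain ⟨z, hz, hzx, y₀, hy₀, hy₀z⟩ := hB s hs0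
    have husc : UpperSemicontinuousOn
        (fun x => u x + -(Λ * ‖x - z‖ ^ (2 * m) * (η x + η z))) (closure Ω) := by
      refine hu.add (Continuous.continuousOn ?_).upperSemicontinuousOn
      have := hη.cont
      fun_prop
    obtain ⟨x, hx, hxmax⟩ := husc.exists_isMaxOn ⟨z, hz⟩ hK
    have hmax : ∀ y ∈ closure Ω, u y - Λ * ‖y - z‖ ^ (2 * m) * (η y + η z) ≤
        u x - Λ * ‖x - z‖ ^ (2 * m) * (η x + η z) := fun y hy => hxmax hy
    have hxz : x ≠ z := by
      rintro rfl
      have := hmax y₀ hy₀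
      rw [sub_self, norm_zero, zero_pow h2m] at this
      linarith
    obtain ⟨ζ, hζ⟩ : ∃ ζ, ζ = ‖z - x'‖ := ⟨_, rfl⟩
    rw [← hζ] at hzx
    have hζ0 : 0 ≤ ζ := by rw [hζ]; positivity
    obtain ⟨r, hr⟩ : ∃ r, r = ‖x - z‖ := ⟨_, rfl⟩
    have hr0 : 0 < r := by rw [hr]; exact norm_pos_iff.2 (sub_ne_zero.2 hxz)
    have hxx' : ‖x - x'‖ ≤ r + ζ := by
      rw [hr, hζ]; exact norm_sub_le_norm_sub_add_norm_sub _ _ _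
    have hEx : 2 * η₀ ≤ η x + η z := by linarith [hη.lower x hx, hη.lower z hz]
    have hcmp : u x' - 2 * Λ * ζ ^ (2 * m) ≤ u x - Λ * r ^ (2 * m) * (η x + η z) := by
      have h1 := hmax x' hx'
      rw [norm_sub_rev x' z, ← hr, ← hζ] at h1
      have h2 : Λ * ζ ^ (2 * m) * (η x' + η z) ≤ Λ * ζ ^ (2 * m) * 2 := by
        have := hη.upper x' hx'
        have := hη.upper z hz
        gcongr
        linarith
      linarith
    have hrS : r ≤ S * ζ := by
      have h1 := htouch x hx
      have h2 : ‖x - x'‖ ^ (2 * m) ≤ 4 ^ m * (r ^ (2 * m) + ζ ^ (2 * m)) := by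
        calc ‖x - x'‖ ^ (2 * m) ≤ (r + ζ) ^ (2 * m) := by gcongr
          _ = ((r + ζ) ^ 2) ^ m := by rw [pow_mul]
          _ ≤ (4 * max (r ^ 2) (ζ ^ 2)) ^ m := by
              gcongr
              nlinarith [le_max_left (r ^ 2) (ζ ^ 2), le_max_right (r ^ 2) (ζ ^ 2),
                sq_nonneg (r - ζ)]
          _ = 4 ^ m * max (r ^ 2) (ζ ^ 2) ^ m := mul_pow _ _ _
          _ ≤ _ := by
              gcongr
              rw [pow_mul, pow_mul]
              rcases le_total (r ^ 2) (ζ ^ 2) with h | h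
              · rw [max_eq_right h]; have : 0 ≤ (r ^ 2) ^ m := by positivity
                linarith
              · rw [max_eq_left h]; have : 0 ≤ (ζ ^ 2) ^ m := by positivity
                linarith
      have h3 : Λ * r ^ (2 * m) * (2 * η₀) ≤ Λ * r ^ (2 * m) * (η x + η z) := by gcongr
      have h4 := mul_le_mul_of_nonneg_left h2 hC.le
      have h5 : C * (4 ^ m * (r ^ (2 * m) + ζ ^ (2 * m))) =
          Λ * η₀ * (r ^ (2 * m) + ζ ^ (2 * m)) := by rw [← hΛη]; ring
      have h6 : Λ * (η₀ * r ^ (2 * m)) ≤ Λ * ((η₀ + 2) * ζ ^ (2 * m)) := by linarith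
      have h7 := le_of_mul_le_mul_left h6 hΛ
      have h8 : η₀ + 2 = η₀ * S := by rw [hSd]; field_simp
      rw [h8, mul_assoc] at h7
      have h9 := le_of_mul_le_mul_left h7 hη₀
      refine le_of_pow_le_pow_left₀ h2m (by positivity) (h9.trans ?_)
      rw [mul_pow]
      gcongr
      exact le_self_pow₀ hS h2m
    have hζs : S * ζ ≤ s * (S + 1) := by
      have : S * ζ ≤ S * s := by gcongr
      linarith
    have hr_s : r ≤ s * (S + 1) := hrS.trans hζs
    have hxx2 : ‖x - x'‖ ≤ (S + 1) * ζ := by linarith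
    have hζ1 : ζ ≤ 1 := by linarith
    have hζD : D * ζ < ε := by
      have : D * ζ ≤ D * (s * (S + 1)) := by gcongr; linarith
      have : 0 < s * (S + 1) := by positivity
      linarith
    have hζm := hpow ζ hζ0 hζ1
    refine ⟨x, hx, ?_, ?_, ?_⟩
    · have : (S + 1) * ζ < (S + 1) * s := by gcongr
      linarith
    · have h1 := htouch x hx
      have h2 : ‖x - x'‖ ^ (2 * m) ≤ (S + 1) ^ (2 * m) * ζ := by
        calc ‖x - x'‖ ^ (2 * m) ≤ ((S + 1) * ζ) ^ (2 * m) := by gcongr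
          _ = (S + 1) ^ (2 * m) * ζ ^ (2 * m) := mul_pow _ _ _
          _ ≤ _ := by gcongr
      have h3 := mul_le_mul_of_nonneg_left h2 hC.le
      have h4 : 0 ≤ Λ * r ^ (2 * m) * (η x + η z) := by
        have : 0 ≤ η x + η z := by linarith
        positivity
      have h5 := mul_le_mul_of_nonneg_left hζm (by positivity : 0 ≤ 2 * Λ)
      have h6 : D * ζ = 2 * Λ * ζ + C * ((S + 1) ^ (2 * m) * ζ) := by rw [hDd]; ring
      have h7 : 0 ≤ C * ((S + 1) ^ (2 * m) * ζ) := by positivity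
      have h8 : 0 ≤ 2 * Λ * ζ := by positivity
      rw [abs_lt]
      constructor <;> linarith
    · have hr1 : r ≤ 1 := hr_s.trans hs3
      have hrC : r * Ce ≤ η₀ := by
        calc r * Ce ≤ (s * (S + 1)) * (Ce + 1) := by gcongr; linarith
          _ ≤ η₀ := hs5
      obtain ⟨Ψ₁, hΨ₁⟩ : ∃ Ψ₁, Ψ₁ = 2 * m * Λ * r ^ (2 * m - 1) := ⟨_, rfl⟩
      have hΨ₁0 : 0 < Ψ₁ := by rw [hΨ₁]; positivity
      obtain ⟨p, X, hX, hjet, hp1, hp2, hXn, hside⟩ := diagonal_jet hη hΩ hm hq hΛ hx hz hxz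
        (hr ▸ hr1) (hr ▸ hrC) hmax (Ψ₁ := Ψ₁) (hr ▸ hΨ₁)
      rw [← hr, ← hC5d] at hXn
      have hpn : 0 < ‖p‖ := lt_of_lt_of_le (by positivity) hp1
      have hp0 : p ≠ 0 := norm_pos_iff.1 hpn
      have hmain := hj.1 x hx p hp0 X hX hjet hside
      have hFb := (le_abs_self _).trans (hF x hx p hp0 X hX)
      have hsplit : ‖p‖ ^ (1 + α) = ‖p‖ * ‖p‖ ^ α := by
        rw [Real.rpow_add hpn, Real.rpow_one]
      have hpp : ‖p‖ ^ (1 + α) ≤ (3 * Ψ₁) ^ (1 + α) :=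
        Real.rpow_le_rpow hpn.le hp2 (by linarith)
      have h1 : CF * ‖p‖ ^ α * matNorm X ≤ CF * C5 / η₀ * ((3 * Ψ₁) ^ (1 + α) / r) := by
        calc CF * ‖p‖ ^ α * matNorm X ≤ CF * ‖p‖ ^ α * (C5 * (Ψ₁ / r)) := by gcongr
          _ = CF * C5 / η₀ * ((η₀ * Ψ₁ * ‖p‖ ^ α) / r) := by field_simp
          _ ≤ CF * C5 / η₀ * ((‖p‖ * ‖p‖ ^ α) / r) := by gcongr
          _ ≤ _ := by rw [← hsplit]; gcongr
      have h2 : ⟪b x, p⟫ * ‖p‖ ^ α ≤ Bb * ((3 * Ψ₁) ^ (1 + α) / r) := by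
        have h3 : ⟪b x, p⟫ ≤ Bb * ‖p‖ :=
          (real_inner_le_norm _ _).trans (mul_le_mul_of_nonneg_right (hb x hx) hpn.le)
        calc ⟪b x, p⟫ * ‖p‖ ^ α ≤ (Bb * ‖p‖) * ‖p‖ ^ α := by gcongr
          _ = Bb * ‖p‖ ^ (1 + α) := by rw [hsplit]; ring
          _ ≤ Bb * (3 * Ψ₁) ^ (1 + α) := by gcongr
          _ ≤ _ := by
              gcongr
              exact le_div_self (by positivity) hr0 hr1
      have h3 : (3 * Ψ₁) ^ (1 + α) / r = (6 * m * Λ) ^ (1 + α) * r ^ β := by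
        rw [hΨ₁, show 3 * (2 * m * Λ * r ^ (2 * m - 1)) = 6 * m * Λ * r ^ (2 * m - 1) by ring,
          Real.mul_rpow (by positivity) (by positivity), ← Real.rpow_natCast r (2 * m - 1),
          ← Real.rpow_mul hr0.le, hβd, Real.rpow_sub_one hr0.ne', mul_div_assoc,
          Nat.cast_sub (by omega)]
        push_cast
        rfl
      have h4 := hsmall r hr0.le (hr_s.trans hs1)
      have h5 : CF * C5 / η₀ * ((3 * Ψ₁) ^ (1 + α) / r) + Bb * ((3 * Ψ₁) ^ (1 + α) / r) =
          C6 * (6 * m * Λ) ^ (1 + α) * r ^ β := by rw [h3, hC6d]; ring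
      linarith

/-! ### Lipschitz estimate -/

/-- Second order expansion of the concave profile `M(‖·‖ - B‖·‖²)` away from the origin, in the
form used by `doubling_estimate`. -/
lemma concave_expansion {N : ℕ} {M B : ℝ} (hM : 0 < M) (hB : 0 ≤ B) {d : EN N} (hd : d ≠ 0)
    (hBr : B * ‖d‖ ≤ 1 / 4) {δ : EN N} (hδ : ‖δ‖ ≤ ‖d‖ / 2) :
    M * (‖d + δ‖ - B * ‖d + δ‖ ^ 2) ≤ M * (‖d‖ - B * ‖d‖ ^ 2) +
      M * (1 - 2 * B * ‖d‖) * ⟪‖d‖⁻¹ • d, δ⟫ +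
      2 * (M * (1 - 2 * B * ‖d‖) / ‖d‖) * (‖δ‖ ^ 2 - ⟪‖d‖⁻¹ • d, δ⟫ ^ 2) -
      M * B * ⟪‖d‖⁻¹ • d, δ⟫ ^ 2 := by
  have hr0 : 0 < ‖d‖ := norm_pos_iff.2 hd
  have hen : ‖‖d‖⁻¹ • d‖ = 1 := by
    rw [norm_smul, norm_inv, norm_norm]
    exact inv_mul_cancel₀ hr0.ne'
  have hii : ⟪d, δ⟫ = ‖d‖ * ⟪‖d‖⁻¹ • d, δ⟫ := by
    rw [real_inner_smul_left]
    field_simp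
  have hib : |⟪‖d‖⁻¹ • d, δ⟫| ≤ ‖δ‖ := by
    have := abs_real_inner_le_norm (‖d‖⁻¹ • d) δ
    rwa [hen, one_mul] at this
  have hnorm : ‖d + δ‖ ^ 2 = ‖d‖ ^ 2 + 2 * (‖d‖ * ⟪‖d‖⁻¹ • d, δ⟫) + ‖δ‖ ^ 2 := by
    rw [norm_add_sq_real, hii]
  generalize ⟪‖d‖⁻¹ • d, δ⟫ = i at *
  have hs0 := norm_nonneg (d + δ)
  generalize ‖d + δ‖ = s at *
  have hk0 := norm_nonneg δ
  generalize ‖δ‖ = k at *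
  generalize ‖d‖ = r at *
  obtain ⟨Δ, hΔ⟩ : ∃ Δ, Δ = k ^ 2 - i ^ 2 := ⟨_, rfl⟩
  have hΔ0 : 0 ≤ Δ := by
    have := sq_le_sq' (by linarith [(abs_le.1 hib).1]) (abs_le.1 hib).2
    linarith
  have hri : r / 2 ≤ r + i := by linarith [(abs_le.1 hib).1]
  have hΔr : 0 ≤ Δ / r := by positivity
  have hs : s ≤ r + i + Δ / r := by
    refine abs_le_of_sq_le_sq' ?_ (by linarith) |>.2
    have h1 : Δ ≤ 2 * (r + i) * (Δ / r) := by
      calc Δ = 2 * (r / 2) * (Δ / r) := by field_simp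
        _ ≤ _ := by gcongr
    have h2 : s ^ 2 = (r + i) ^ 2 + Δ := by rw [hnorm, hΔ]; ring
    have h3 : (r + i + Δ / r) ^ 2 = (r + i) ^ 2 + 2 * (r + i) * (Δ / r) + (Δ / r) ^ 2 := by ring
    rw [h2, h3]
    linarith [sq_nonneg (Δ / r)]
  have h4 : Δ / r ≤ 2 * ((1 - 2 * B * r) / r) * Δ := by
    have : (1 : ℝ) ≤ 2 * (1 - 2 * B * r) := by linarith
    calc Δ / r = 1 * (Δ / r) := (one_mul _).symm
      _ ≤ 2 * (1 - 2 * B * r) * (Δ / r) := by gcongr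
      _ = _ := by ring
  have h5 : 0 ≤ B * Δ := by positivity
  have h6 : s - B * s ^ 2 ≤ (r - B * r ^ 2) + (1 - 2 * B * r) * i +
      2 * ((1 - 2 * B * r) / r) * Δ - B * i ^ 2 := by
    have : B * s ^ 2 = B * r ^ 2 + 2 * B * r * i + B * i ^ 2 + B * Δ := by rw [hnorm, hΔ]; ring
    linarith
  have h7 := mul_le_mul_of_nonneg_left h6 hM.le
  rw [← hΔ]
  calc _ ≤ _ := h7
    _ = _ := by ring

/-- The doubled functional attains its maximum over any closed set of pairs. -/
lemma exists_doubling_max {N : ℕ} {K : Set (EN N)} (hK : IsCompact K) {u w : EN N → ℝ}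
    (hu : UpperSemicontinuousOn u K) (hw : UpperSemicontinuousOn w K) {φ : EN N × EN N → ℝ}
    (hφ : Continuous φ) {s : Set (EN N × EN N)} (hs : IsClosed s) {z : EN N} (hz : z ∈ K)
    (hzs : (z, z) ∈ s) :
    ∃ x₀ ∈ K, ∃ y₀ ∈ K, (x₀, y₀) ∈ s ∧ ∀ x ∈ K, ∀ y ∈ K, (x, y) ∈ s →
      u x + w y - φ (x, y) ≤ u x₀ + w y₀ - φ (x₀, y₀) := by
  have hc : IsCompact ((K ×ˢ K) ∩ s) := (hK.prod hK).inter_right hs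
  have h1 : UpperSemicontinuousOn (u ∘ Prod.fst) ((K ×ˢ K) ∩ s) :=
    hu.comp continuous_fst.continuousOn fun p hp => hp.1.1
  have h2 : UpperSemicontinuousOn (w ∘ Prod.snd) ((K ×ˢ K) ∩ s) :=
    hw.comp continuous_snd.continuousOn fun p hp => hp.1.2
  have h3 := (h1.add h2).add hφ.neg.continuousOn.upperSemicontinuousOn
  have hne : ((K ×ˢ K) ∩ s).Nonempty := ⟨(z, z), ⟨hz, hz⟩, hzs⟩
  obtain ⟨p, hp, hmax⟩ := UpperSemicontinuousOn.exists_isMaxOn hne hc h3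
  refine ⟨p.1, hp.1.1, p.2, hp.1.2, hp.2, fun x hx y hy hxy => ?_⟩
  have hmem : (x, y) ∈ (K ×ˢ K) ∩ s := ⟨⟨hx, hy⟩, hxy⟩
  exact hmax hmem

lemma abs_inner_mul_rpow_le {N : ℕ} {α : ℝ} (hα : -1 < α) (b p : EN N) :
    |⟪b, p⟫ * ‖p‖ ^ α| ≤ ‖b‖ * ‖p‖ ^ (1 + α) := by
  rcases eq_or_ne p 0 with rfl | hp
  · simp [Real.zero_rpow (by linarith : 1 + α ≠ 0)]
  · have hpn : 0 < ‖p‖ := norm_pos_iff.2 hp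
    rw [Real.rpow_add hpn, Real.rpow_one, abs_mul, abs_of_nonneg (by positivity : 0 ≤ ‖p‖ ^ α),
      ← mul_assoc]
    gcongr
    exact abs_real_inner_le_norm _ _

set_option maxHeartbeats 1000000 in
/-- Lipschitz bound for the difference `u(x) + w(y)` near the diagonal, given that `u + w ≤ 0` on
it. The concave profile `M(‖δ‖ - B‖δ‖²)` makes the ellipticity term dominate once `B` and `M` are
large. -/
lemma lipschitz_estimate {N : ℕ} {Ω : Set (EN N)} {ρ : EN N → ℝ} {q η₀ Ce : ℝ} {η : EN N → ℝ}
    {n : EN N → EN N} (hη : BoundaryWeight Ω ρ q η₀ Ce η n) (hq : 1 ≤ q) (hΩ : IsOpen Ω)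
    (hK : IsCompact (closure Ω)) {α a A C₁ θ C₂ ν : ℝ} (hα : -1 < α)
    {F : EN N → EN N → Mat N → ℝ} (hF2 : CondF2 Ω α a A F)
    (hF3 : CondF3 Ω α C₁ θ F) (hF4 : CondF4 Ω α C₂ ν F) {b : EN N → EN N} {c₀ : EN N → ℝ → ℝ}
    {g g' u w : EN N → ℝ} (hu : UpperSemicontinuousOn u (closure Ω))
    (hw : UpperSemicontinuousOn w (closure Ω)) (hju : JetSub Ω ρ F b α c₀ g u)
    (hjw : JetSub Ω ρ (dualOp F) b α c₀ g' w) {Bb U Cz L : ℝ}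
    (hb : ∀ x ∈ closure Ω, ‖b x‖ ≤ Bb) (hu1 : ∀ x ∈ closure Ω, u x ≤ U)
    (hw0 : ∀ x ∈ closure Ω, w x ≤ 0) (hw1 : ∀ x ∈ closure Ω, -U ≤ w x)
    (hc : ∀ x ∈ closure Ω, ∀ t : ℝ, |t| ≤ U + 1 → |c₀ x t| ≤ Cz)
    (hg : ∀ x ∈ closure Ω, ∀ y ∈ closure Ω, -L ≤ g x + g' y)
    (hdiag : ∀ x ∈ closure Ω, u x + w x ≤ 0) :
    ∃ M > 0, ∃ r₀ > 0, ∀ x ∈ closure Ω, ∀ y ∈ closure Ω, ‖x - y‖ ≤ r₀ →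
      u x + w y ≤ M * ‖x - y‖ := by
  rcases (closure Ω).eq_empty_or_nonempty with hemp | ⟨z₀, hz₀⟩
  · refine ⟨1, one_pos, 1, one_pos, fun x hx => ?_⟩
    rw [hemp] at hx
    exact hx.elim
  have hη₀ := hη.η₀_pos
  have ha := hF2.1
  have hBb : 0 ≤ Bb := (norm_nonneg _).trans (hb z₀ hz₀)
  obtain ⟨Ca, hCa, C, hC, γ, hγ, r₁, hr₁, hr₁1, hCar, hest⟩ :=
    doubling_estimate hη hΩ hK hF2 hF3 hF4 hu hw hju hjw (Cb := 2) (by norm_num)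
  obtain ⟨k, hk⟩ : ∃ k : ℝ, k = 2 ^ (1 + α) := ⟨_, rfl⟩
  have hk0 : 0 < k := by rw [hk]; positivity
  -- This choice of `B` turns the bracket of the second estimate into `-‖P‖`.
  obtain ⟨B, hBd⟩ : ∃ B, B = (C + 2 * Bb * k + 1) / (4 * a) := ⟨_, rfl⟩
  have hB : 0 < B := by rw [hBd]; positivity
  have hBa : 4 * a * B = C + 2 * Bb * k + 1 := by rw [hBd]; field_simp
  obtain ⟨r₀, hr₀d⟩ : ∃ r₀, r₀ = min r₁ (1 / (4 * B)) := ⟨_, rfl⟩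
  have hr₀ : 0 < r₀ := by rw [hr₀d]; positivity
  have hr₀1 : r₀ ≤ r₁ := by rw [hr₀d]; exact min_le_left _ _
  have hr₀B : B * r₀ ≤ 1 / 4 := by
    have h1 : r₀ ≤ 1 / (4 * B) := by rw [hr₀d]; exact min_le_right _ _
    calc B * r₀ ≤ B * (1 / (4 * B)) := by gcongr
      _ = 1 / 4 := by field_simp
  -- `M` is large enough to exclude both `‖x - y‖ = r₀` and an interior contact point.
  obtain ⟨M, hMpos, hM1, hM2⟩ : ∃ M : ℝ, 0 < M ∧ U ≤ M * (η₀ * r₀) ∧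
      L + 2 * Cz < (η₀ * M) ^ (1 + α) := by
    have h1 : Tendsto (fun M : ℝ => (η₀ * M) ^ (1 + α)) atTop atTop :=
      (tendsto_rpow_atTop (by linarith)).comp (tendsto_id.const_mul_atTop hη₀)
    have h2 : Tendsto (fun M : ℝ => M * (η₀ * r₀)) atTop atTop :=
      tendsto_id.atTop_mul_const (by positivity)
    obtain ⟨M, h3, h4, h5⟩ := ((eventually_gt_atTop 0).and ((h2.eventually_ge_atTop U).and
      (h1.eventually_gt_atTop (L + 2 * Cz)))).exists
    exact ⟨M, h3, h4, h5⟩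
  have hEub : ∀ x ∈ closure Ω, ∀ y ∈ closure Ω, η x + η y ≤ 2 := fun x hx y hy => by
    linarith [hη.upper x hx, hη.upper y hy]
  have hElb : ∀ x ∈ closure Ω, ∀ y ∈ closure Ω, 2 * η₀ ≤ η x + η y := fun x hx y hy => by
    linarith [hη.lower x hx, hη.lower y hy]
  obtain ⟨ψ, hψ⟩ : ∃ ψ : EN N → ℝ, ψ = fun δ => M * (‖δ‖ - B * ‖δ‖ ^ 2) := ⟨_, rfl⟩
  have hψc : Continuous ψ := by rw [hψ]; fun_prop
  obtain ⟨x₀, hx₀, y₀, hy₀, hs, hmax⟩ := exists_doubling_max hK hu hw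
    (φ := fun p => ψ (p.1 - p.2) * (η p.1 + η p.2)) (by have := hη.cont; fun_prop)
    (s := {p | ‖p.1 - p.2‖ ≤ r₀}) (isClosed_le (by fun_prop) continuous_const) hz₀
    (by simp [hr₀.le])
  simp only [mem_ofPred_eq] at hs hmax
  refine ⟨2 * M, by positivity, r₀, hr₀, fun x hx y hy hxy => ?_⟩
  by_contra hcon
  push Not at hcon
  have hval : 0 < u x₀ + w y₀ - ψ (x₀ - y₀) * (η x₀ + η y₀) := by
    refine lt_of_lt_of_le ?_ (hmax x hx y hy hxy)
    have h1 : ψ (x - y) ≤ M * ‖x - y‖ := by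
      rw [hψ]
      refine mul_le_mul_of_nonneg_left ?_ hMpos.le
      have : 0 ≤ B * ‖x - y‖ ^ 2 := by positivity
      linarith
    have h2 : ψ (x - y) * (η x + η y) ≤ M * ‖x - y‖ * 2 := by
      have h3 := hEub x hx y hy
      have h4 := hElb x hx y hy
      have h5 : 0 ≤ η x + η y := by linarith
      exact mul_le_mul h1 h3 h5 (by positivity)
    linarith
  have hne : x₀ ≠ y₀ := by
    rintro rfl
    have := hdiag x₀ hx₀
    rw [sub_self, hψ] at hval
    simp at hval
    linarith
  have hd0 : x₀ - y₀ ≠ 0 := sub_ne_zero.2 hne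
  obtain ⟨r, hr⟩ : ∃ r, r = ‖x₀ - y₀‖ := ⟨_, rfl⟩
  have hr0 : 0 < r := by rw [hr]; exact norm_pos_iff.2 hd0
  rw [← hr] at hs
  have hBr : B * r ≤ 1 / 4 := (mul_le_mul_of_nonneg_left hs hB.le).trans hr₀B
  obtain ⟨Ψ₀, hΨ₀⟩ : ∃ Ψ₀, Ψ₀ = M * (r - B * r ^ 2) := ⟨_, rfl⟩
  obtain ⟨Ψ₁, hΨ₁⟩ : ∃ Ψ₁, Ψ₁ = M * (1 - 2 * B * r) := ⟨_, rfl⟩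
  have hBr2 : B * r ^ 2 ≤ r / 4 := by
    have := mul_le_mul_of_nonneg_right hBr hr0.le
    linarith
  have hBr20 : 0 ≤ B * r ^ 2 := by positivity
  have hΨ₀lb : M * r / 2 ≤ Ψ₀ := by
    rw [hΨ₀, mul_div_assoc]
    gcongr
    linarith
  have hΨ₀0 : 0 < Ψ₀ := lt_of_lt_of_le (by positivity) hΨ₀lb
  have hΨ₀ub : Ψ₀ ≤ M * r := by
    rw [hΨ₀]
    gcongr
    linarith
  have hΨ₁lb : M / 2 ≤ Ψ₁ := by
    rw [hΨ₁, div_eq_mul_one_div]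
    gcongr
    linarith
  have hΨ₁0 : 0 < Ψ₁ := lt_of_lt_of_le (by positivity) hΨ₁lb
  have hΨ₁ub : Ψ₁ ≤ M := by
    rw [hΨ₁]
    have : 0 ≤ 2 * B * r := by positivity
    exact mul_le_of_le_one_right hMpos.le (by linarith)
  have hψd : ψ (x₀ - y₀) = Ψ₀ := by rw [hψ, hΨ₀, hr]
  have hElb0 := hElb x₀ hx₀ y₀ hy₀
  have hrlt : r < r₀ := by
    refine lt_of_le_of_ne hs fun heq => ?_
    rw [hψd] at hval
    have h1 : M * r / 2 * (2 * η₀) ≤ Ψ₀ * (η x₀ + η y₀) := by gcongr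
    have h2 := hu1 x₀ hx₀
    have h3 := hw0 y₀ hy₀
    rw [heq] at h1
    linarith
  have hR : 0 < min (r / 2) ((r₀ - r) / 2) := by
    have : 0 < r₀ - r := by linarith
    positivity
  have hΨ₁0' : 0 ≤ Ψ₁ / r := by positivity
  have hux : 0 < u x₀ := by
    have h3 := hw0 y₀ hy₀
    have h4 : 0 ≤ ψ (x₀ - y₀) * (η x₀ + η y₀) := by
      rw [hψd]
      have : 0 ≤ η x₀ + η y₀ := by linarith
      positivity
    linarith
  obtain ⟨x', hx', y', hy', P, p₁, p₂, hP, -, -, hux', hwy', hp₁, hp₂, -, hfin⟩ :=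
    hest x₀ hx₀ y₀ hy₀ hne (by rw [← hr]; linarith) ψ Ψ₀ Ψ₁ (M * B) _ hR hΨ₀0 hΨ₁0
    (by
      rw [← hr]
      calc r * Ψ₁ = 1 * (M * (r - B * r ^ 2) - M * (B * r ^ 2)) := by rw [hΨ₁]; ring
        _ ≤ 1 * Ψ₀ := by
            rw [hΨ₀]
            have : 0 ≤ M * (B * r ^ 2) := by positivity
            linarith
        _ ≤ q * Ψ₀ := by gcongr)
    (by
      rw [← hr]
      have : r * (M / 2) ≤ r * Ψ₁ := by gcongr
      linarith)
    (by
      rw [← hr]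
      have : 0 ≤ M * B := by positivity
      linarith) hψd
    (by
      intro δ hδ
      have hδ' : ‖δ‖ ≤ r / 2 := hδ.trans (min_le_left _ _)
      have h1 : ‖x₀ - y₀ + δ‖ ≤ 2 * r := by
        have := norm_add_le (x₀ - y₀) δ
        rw [← hr] at this
        linarith
      rw [hψ]
      have h2 : B * ‖x₀ - y₀ + δ‖ ≤ 1 := by
        have := mul_le_mul_of_nonneg_left h1 hB.le
        linarith
      have h3 := mul_le_mul_of_nonneg_right h2 (norm_nonneg (x₀ - y₀ + δ))
      refine mul_nonneg hMpos.le ?_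
      linarith)
    (by
      intro δ hδ
      have hδ' : ‖δ‖ ≤ ‖x₀ - y₀‖ / 2 := by rw [← hr]; exact hδ.trans (min_le_left _ _)
      have := concave_expansion hMpos hB.le hd0 (by rw [← hr]; exact hBr) hδ'
      rw [hψ, hΨ₀, hΨ₁, hr]
      exact this)
    (by
      intro x hx y hy hxR hyR
      refine hmax x hx y hy ?_
      have h1 : ‖x - x₀‖ ≤ (r₀ - r) / 2 := hxR.trans (min_le_right _ _)
      have h2 : ‖y - y₀‖ ≤ (r₀ - r) / 2 := hyR.trans (min_le_right _ _)
      have h3 : x - y = (x₀ - y₀) + ((x - x₀) - (y - y₀)) := by abel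
      rw [h3]
      have h4 := norm_add_le (x₀ - y₀) ((x - x₀) - (y - y₀))
      have h5 := norm_sub_le (x - x₀) (y - y₀)
      rw [← hr] at h4
      linarith) 1 one_pos
  have hE0 : 0 < η x₀ + η y₀ := by linarith
  obtain ⟨π, hπ⟩ : ∃ π, π = ‖P‖ := ⟨_, rfl⟩
  rw [← hπ] at hP hp₁ hp₂ hfin
  have hπ0 : 0 < π := by rw [hP]; positivity
  have hCaπ : Ca * ‖x₀ - y₀‖ * π ≤ π := by
    rw [← hr]
    have : Ca * r ≤ Ca * r₁ := by gcongr; linarith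
    exact mul_le_of_le_one_left hπ0.le (by linarith)
  have hterm : ∀ x ∈ closure Ω, ∀ p : EN N, ‖p - P‖ ≤ Ca * ‖x₀ - y₀‖ * π →
      |⟪b x, p⟫ * ‖p‖ ^ α| ≤ Bb * (k * π ^ (1 + α)) := by
    intro x hx p hp
    have h1 : ‖p‖ ≤ 2 * π := by
      have := norm_sub_norm_le p P
      rw [← hπ] at this
      linarith
    refine (abs_inner_mul_rpow_le hα _ _).trans ?_
    rw [hk, ← Real.mul_rpow (by norm_num) hπ0.le]
    have h2 : ‖p‖ ^ (1 + α) ≤ (2 * π) ^ (1 + α) :=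
      Real.rpow_le_rpow (norm_nonneg _) h1 (by linarith)
    have h3 := hb x hx
    gcongr
  have ht1 := (le_abs_self _).trans (hterm x' hx' p₁ hp₁)
  have ht2 := (neg_le_abs _).trans (hterm y' hy' p₂ hp₂)
  have hub0 := hu1 x₀ hx₀
  have hc1 := (le_abs_self _).trans (hc x' hx' (u x') (by
    rw [abs_lt] at hux'
    rw [abs_le]
    constructor <;> linarith))
  have hc2 := (le_abs_self _).trans (hc y' hy' (w y') (by
    rw [abs_lt] at hwy'
    have := hw0 y₀ hy₀
    have := hw1 y₀ hy₀
    rw [abs_le]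
    constructor <;> linarith))
  have hG : 4 * a * B * π ≤ 4 * a * ((η x₀ + η y₀) * (M * B)) := by
    rw [hP]
    have : 4 * a * B * ((η x₀ + η y₀) * Ψ₁) ≤ 4 * a * B * ((η x₀ + η y₀) * M) := by gcongr
    linarith
  have hsplit : π ^ (1 + α) = π ^ α * π := by
    rw [Real.rpow_add hπ0, Real.rpow_one, mul_comm]
  have hkey : π ^ α * (C * π - 4 * a * ((η x₀ + η y₀) * (M * B))) ≤
      π ^ (1 + α) * (-(2 * Bb * k) - 1) := by
    calc _ ≤ π ^ α * (C * π - 4 * a * B * π) := by gcongr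
      _ = _ := by rw [hBa, hsplit]; ring
  have hlow := hg x' hx' y' hy'
  have hπM : (η₀ * M) ^ (1 + α) ≤ π ^ (1 + α) := by
    refine Real.rpow_le_rpow (by positivity) ?_ (by linarith)
    rw [hP]
    calc η₀ * M = 2 * η₀ * (M / 2) := by ring
      _ ≤ _ := by gcongr
  linarith

/-! ### Continuity of the lower order terms -/

/-- Uniform continuity on compact products, in `ε`-`δ` form. -/
lemma exists_modulus {E E' : Type*} [NormedAddCommGroup E] [NormedAddCommGroup E'] {K : Set E}
    {K' : Set E'} (hK : IsCompact K) (hK' : IsCompact K') {f : E × E' → ℝ}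
    (hf : ContinuousOn f (K ×ˢ K')) {ε : ℝ} (hε : 0 < ε) :
    ∃ δ > 0, ∀ x ∈ K, ∀ y ∈ K, ∀ s ∈ K', ∀ t ∈ K', ‖x - y‖ < δ → ‖s - t‖ < δ →
      |f (x, s) - f (y, t)| < ε := by
  have h := (hK.prod hK').uniformContinuousOn_of_continuous hf
  rw [Metric.uniformContinuousOn_iff] at h
  obtain ⟨δ, hδ, h⟩ := h ε hε
  refine ⟨δ, hδ, fun x hx y hy s hs t ht hxy hst => ?_⟩
  have := h (x, s) ⟨hx, hs⟩ (y, t) ⟨hy, ht⟩ (by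
    rw [Prod.dist_eq, max_lt_iff]
    simpa only [dist_eq_norm] using ⟨hxy, hst⟩)
  rwa [Real.dist_eq] at this

/-- Passing to the limit in an inequality between lower semicontinuous functions along pairs of
points that approach the diagonal. -/
lemma exists_diagonal_limit {E : Type*} [NormedAddCommGroup E] {K : Set E} (hK : IsCompact K)
    {g g' : E → ℝ} (hg : LowerSemicontinuousOn g K) (hg' : LowerSemicontinuousOn g' K)
    (h : ∀ ε > 0, ∃ x ∈ K, ∃ y ∈ K, ‖x - y‖ < ε ∧ g x + g' y ≤ ε) :
    ∃ x ∈ K, g x + g' x ≤ 0 := by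
  have h' : ∀ k : ℕ, ∃ x ∈ K, ∃ y ∈ K, ‖x - y‖ < 1 / ((k : ℝ) + 1) ∧
      g x + g' y ≤ 1 / ((k : ℝ) + 1) := fun k => h _ (by positivity)
  choose x hx y hy hxy hgg using h'
  obtain ⟨z, hz, φ, hφ, hlim⟩ := hK.tendsto_subseq hx
  have h0 : Tendsto (fun k => 1 / ((φ k : ℝ) + 1)) atTop (𝓝 0) :=
    tendsto_one_div_add_atTop_nhds_zero_nat.comp hφ.tendsto_atTop
  have hlimy : Tendsto (y ∘ φ) atTop (𝓝 z) := by
    have h1 : Tendsto (fun k => x (φ k) - y (φ k)) atTop (𝓝 0) :=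
      squeeze_zero_norm (fun k => (hxy (φ k)).le) h0
    have h2 := hlim.sub h1
    simpa [Function.comp_def] using h2
  have hwx : Tendsto (x ∘ φ) atTop (𝓝[K] z) :=
    tendsto_nhdsWithin_iff.2 ⟨hlim, Eventually.of_forall fun k => hx _⟩
  have hwy : Tendsto (y ∘ φ) atTop (𝓝[K] z) :=
    tendsto_nhdsWithin_iff.2 ⟨hlimy, Eventually.of_forall fun k => hy _⟩
  refine ⟨z, hz, ?_⟩
  by_contra hcon
  push Not at hcon
  obtain ⟨e, he⟩ : ∃ e, e = (g z + g' z) / 3 := ⟨_, rfl⟩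
  have he0 : 0 < e := by rw [he]; positivity
  have h1 := hwx.eventually (hg z hz (g z - e) (by linarith))
  have h2 := hwy.eventually (hg' z hz (g' z - e) (by linarith))
  have h3 := h0.eventually (gt_mem_nhds he0)
  obtain ⟨k, h1, h2, h3⟩ := (h1.and (h2.and h3)).exists
  have h4 := hgg (φ k)
  simp only [Function.comp_apply] at h1 h2
  linarith

lemma continuous_inner_mul_rpow {N : ℕ} {α : ℝ} (hα : -1 < α) {K : Set (EN N)}
    {b : EN N → EN N} (hK : IsCompact K) (hb : ContinuousOn b K) :
    ContinuousOn (fun z : EN N × EN N => ⟪b z.1, z.2⟫ * ‖z.2‖ ^ α) (K ×ˢ univ) := by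
  obtain ⟨Bb, hBb⟩ := hK.exists_bound_of_continuousOn hb
  rintro ⟨x, p⟩ ⟨hx, -⟩
  have hin : ContinuousWithinAt (fun z : EN N × EN N => ⟪b z.1, z.2⟫) (K ×ˢ univ) (x, p) := by
    have h1 : ContinuousWithinAt (fun z : EN N × EN N => b z.1) (K ×ˢ univ) (x, p) :=
      (hb x hx).comp (t := K) continuous_fst.continuousWithinAt fun z hz => hz.1
    exact h1.inner continuous_snd.continuousWithinAt
  rcases eq_or_ne p 0 with rfl | hp
  · -- At `p = 0` the power may be singular; the product is dominated by `‖p‖^(1+α)`.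
    have h0 : Tendsto (fun z : EN N × EN N => Bb * ‖z.2‖ ^ (1 + α)) (𝓝[K ×ˢ univ] (x, 0))
        (𝓝 0) := by
      have h1 : Continuous fun z : EN N × EN N => Bb * ‖z.2‖ ^ (1 + α) :=
        continuous_const.mul (continuous_snd.norm.rpow_const fun _ => Or.inr (by linarith))
      have h2 := h1.tendsto (x, (0 : EN N))
      simp only [norm_zero, Real.zero_rpow (by linarith : 1 + α ≠ 0), mul_zero] at h2
      exact h2.mono_left nhdsWithin_le_nhds
    unfold ContinuousWithinAt
    simp only [inner_zero_right, zero_mul]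
    refine squeeze_zero_norm' ?_ h0
    filter_upwards [self_mem_nhdsWithin] with z hz
    rw [Real.norm_eq_abs]
    refine (abs_inner_mul_rpow_le hα _ _).trans ?_
    have := hBb z.1 hz.1
    gcongr
  · refine hin.mul (ContinuousWithinAt.rpow_const continuous_snd.norm.continuousWithinAt ?_)
    left
    simpa using hp

lemma continuousOn_zot {N : ℕ} {α : ℝ} (hα : -1 < α) (lam : ℝ) {K : Set (EN N)} {c : EN N → ℝ}
    (hc : ContinuousOn c K) :
    ContinuousOn (fun z : EN N × ℝ => zot c lam α z.1 z.2) (K ×ˢ univ) := by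
  have h1 : Continuous fun t : ℝ => |t| ^ α * t := by
    rw [continuous_iff_continuousAt]
    intro t
    rcases eq_or_ne t 0 with rfl | ht
    · have h0 : Tendsto (fun t : ℝ => |t| ^ (1 + α)) (𝓝 0) (𝓝 0) := by
        have h1 : Continuous fun t : ℝ => |t| ^ (1 + α) :=
          continuous_abs.rpow_const fun _ => Or.inr (by linarith)
        have h2 := h1.tendsto 0
        simpa only [abs_zero, Real.zero_rpow (by linarith : 1 + α ≠ 0)] using h2
      unfold ContinuousAt
      simp only [mul_zero]
      refine squeeze_zero_norm (fun t => ?_) h0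
      rcases eq_or_ne t 0 with rfl | ht
      · simp [Real.zero_rpow (by linarith : 1 + α ≠ 0)]
      · rw [norm_mul, Real.norm_of_nonneg (by positivity), Real.rpow_add (abs_pos.2 ht),
          Real.rpow_one, Real.norm_eq_abs, mul_comm]
    · exact (continuous_abs.continuousAt.rpow_const (Or.inl (abs_ne_zero.2 ht))).mul continuousAt_id
  have h2 : ContinuousOn (fun z : EN N × ℝ => c z.1 + lam) (K ×ˢ univ) :=
    (hc.comp continuous_fst.continuousOn fun z hz => hz.1).add continuousOn_const
  refine (h2.mul (h1.comp continuous_snd).continuousOn).congr fun z _ => ?_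
  simp only [zot, Pi.mul_apply, Function.comp_apply]
  ring

lemma zot_neg {N : ℕ} (c : EN N → ℝ) (lam α : ℝ) (x : EN N) (t : ℝ) :
    zot c lam α x (-t) = -zot c lam α x t := by
  simp [zot]

/-- Two values `s ≈ -t` at nearby points almost cancel in the zeroth order term, which is odd. -/
lemma exists_zot_add_lt {N : ℕ} {α : ℝ} (hα : -1 < α) (lam : ℝ) {K : Set (EN N)}
    (hK : IsCompact K) {c : EN N → ℝ} (hc : ContinuousOn c K) (U : ℝ) {ε : ℝ} (hε : 0 < ε) :
    ∃ δ > 0, ∀ x ∈ K, ∀ y ∈ K, ∀ s t : ℝ, |s| ≤ U → |t| ≤ U → ‖x - y‖ < δ → |s + t| < δ →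
      zot c lam α x s + zot c lam α y t < ε := by
  obtain ⟨δ, hδ, h⟩ := exists_modulus hK (isCompact_closedBall (0 : ℝ) U)
    ((continuousOn_zot hα lam hc).mono (prod_mono_right (subset_univ _))) hε
  refine ⟨δ, hδ, fun x hx y hy s t hs ht hxy hst => ?_⟩
  have := h x hx y hy s (by simpa using hs) (-t) (by simpa using ht) hxy
    (by rw [sub_neg_eq_add]; exact hst)
  rw [zot_neg, sub_neg_eq_add] at this
  exact (le_abs_self _).trans_lt this

/-! ### Comparison -/

/-- The case in which a maximum point of the doubled functional lies on the diagonal. -/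
lemma diagonal_case {N : ℕ} {Ω : Set (EN N)} {ρ : EN N → ℝ} {q η₀ Ce : ℝ} {η : EN N → ℝ}
    {n : EN N → EN N} (hη : BoundaryWeight Ω ρ q η₀ Ce η n) (hΩ : IsOpen Ω)
    (hK : IsCompact (closure Ω)) {m : ℕ} (hm : 1 ≤ m) (hq : 2 * m ≤ q) {α a A : ℝ} (hα : -1 < α)
    (hmα : 1 < (2 * m - 1) * (1 + α)) {F : EN N → EN N → Mat N → ℝ} (hF1 : CondF1 Ω α F)
    (hF2 : CondF2 Ω α a A F) {b : EN N → EN N} (hb : ContinuousOn b (closure Ω))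
    {c : EN N → ℝ} (hc : ContinuousOn c (closure Ω)) {lam : ℝ}
    {g g' u w : EN N → ℝ} (hu : UpperSemicontinuousOn u (closure Ω))
    (hw : UpperSemicontinuousOn w (closure Ω)) (hju : JetSub Ω ρ F b α (zot c lam α) g u)
    (hjw : JetSub Ω ρ (dualOp F) b α (zot c lam α) g' w) {x' : EN N} (hx' : x' ∈ closure Ω)
    (h0 : u x' + w x' = 0) {C : ℝ} (hC : 0 < C)
    (htu : ∀ x ∈ closure Ω, u x ≤ u x' + C * ‖x - x'‖ ^ (2 * m))
    (htw : ∀ x ∈ closure Ω, w x ≤ w x' + C * ‖x - x'‖ ^ (2 * m)) {ε : ℝ} (hε : 0 < ε) :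
    ∃ x ∈ closure Ω, ∃ y ∈ closure Ω, ‖x - y‖ < ε ∧ g x + g' y ≤ ε := by
  obtain ⟨Bb, hBb⟩ := hK.exists_bound_of_continuousOn hb
  have hA : 0 < A := hF2.1.trans_le hF2.2.1
  obtain ⟨δ, hδ, hz⟩ := exists_zot_add_lt hα lam hK hc (|u x'| + 1) (half_pos hε)
  obtain ⟨e, he⟩ : ∃ e, e = min 1 (min (ε / 4) (δ / 4)) := ⟨_, rfl⟩
  have he0 : 0 < e := by rw [he]; positivity
  have he1 : e ≤ 1 := by rw [he]; exact min_le_left _ _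
  have he2 : e ≤ ε / 4 := by rw [he]; exact (min_le_right _ _).trans (min_le_left _ _)
  have he3 : e ≤ δ / 4 := by rw [he]; exact (min_le_right _ _).trans (min_le_right _ _)
  obtain ⟨x, hx, hxx, hux, hgx⟩ := diagonal_estimate hη hΩ hK hm hq hα hmα hu hju
    (CF := 2 * A * N) (by positivity) (fun x hx p hp X hX => abs_F_le hF1 hF2 hx hp hX) hBb hx' hC
    htu he0
  obtain ⟨y, hy, hyy, hwy, hgy⟩ := diagonal_estimate hη hΩ hK hm hq hα hmα hw hjw
    (CF := 2 * A * N) (by positivity)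
    (fun x hx p hp X hX => abs_F_le (dualOp_F1 hF1) (dualOp_F2 hF2) hx hp hX) hBb hx' hC htw he0
  have hxy : ‖x - y‖ < 2 * e := by
    have h1 := norm_sub_le (x - x') (y - x')
    rw [sub_sub_sub_cancel_right] at h1
    linarith
  refine ⟨x, hx, y, hy, by linarith, ?_⟩
  have hsum : |u x + w y| < δ := by
    rw [abs_lt] at hux hwy ⊢
    constructor <;> linarith [hux.1, hux.2, hwy.1, hwy.2]
  have hub : |u x| ≤ |u x'| + 1 := by
    have := abs_sub_abs_le_abs_sub (u x) (u x')
    linarith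
  have hwb : |w y| ≤ |u x'| + 1 := by
    have h1 := abs_sub_abs_le_abs_sub (w y) (w x')
    have h2 : |w x'| = |u x'| := by
      rw [show w x' = -u x' by linarith, abs_neg]
    linarith
  have := hz x hx y hy (u x) (w y) hub hwb (by linarith) hsum
  linarith

set_option maxHeartbeats 1000000 in
/-- If `u` is a subsolution, `w` a nonpositive subsolution of the dual equation, and `u + w` has
maximum value zero on the compact set `closure Ω`, then the right-hand sides satisfy
`g + g' ≤ 0` somewhere. The variables are doubled with the penalty `j|x - y|^{2m}(η(x) + η(y))`;
the Lipschitz estimate keeps the gradients of the penalty bounded as `j → ∞`. -/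
lemma comparison_point {N : ℕ} {Ω : Set (EN N)} {ρ : EN N → ℝ} {q η₀ Ce : ℝ} {η : EN N → ℝ}
    {n : EN N → EN N} (hη : BoundaryWeight Ω ρ q η₀ Ce η n) (hΩ : IsOpen Ω)
    (hK : IsCompact (closure Ω)) {m : ℕ} (hm : 1 ≤ m) (hq : 2 * m ≤ q)
    {α a A C₁ θ C₂ ν : ℝ} (hα : -1 < α)
    (hmα : 1 < (2 * m - 1) * (1 + α)) {F : EN N → EN N → Mat N → ℝ} (hF1 : CondF1 Ω α F)
    (hF2 : CondF2 Ω α a A F) (hF3 : CondF3 Ω α C₁ θ F) (hF4 : CondF4 Ω α C₂ ν F)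
    {b : EN N → EN N} (hb : ContinuousOn b (closure Ω))
    {c : EN N → ℝ} (hc : ContinuousOn c (closure Ω)) {lam : ℝ}
    {g g' u w : EN N → ℝ} (hu : UpperSemicontinuousOn u (closure Ω))
    (hw : UpperSemicontinuousOn w (closure Ω)) (hju : JetSub Ω ρ F b α (zot c lam α) g u)
    (hjw : JetSub Ω ρ (dualOp F) b α (zot c lam α) g' w)
    (hg : LowerSemicontinuousOn g (closure Ω)) (hg' : LowerSemicontinuousOn g' (closure Ω))
    {U L : ℝ} (hu1 : ∀ x ∈ closure Ω, u x ≤ U)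
    (hw0 : ∀ x ∈ closure Ω, w x ≤ 0) (hw1 : ∀ x ∈ closure Ω, -U ≤ w x)
    (hL : ∀ x ∈ closure Ω, ∀ y ∈ closure Ω, -L ≤ g x + g' y)
    (hdiag : ∀ x ∈ closure Ω, u x + w x ≤ 0) {z : EN N} (hz : z ∈ closure Ω)
    (hz0 : u z + w z = 0) :
    ∃ x ∈ closure Ω, g x + g' x ≤ 0 := by
  refine exists_diagonal_limit hK hg hg' fun ε hε => ?_
  have hη₀ := hη.η₀_pos
  have hm0 : (1 : ℝ) ≤ m := by exact_mod_cast hm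
  have hU : 0 ≤ U := by linarith [hw0 z hz, hw1 z hz]
  obtain ⟨Bb, hBb⟩ := hK.exists_bound_of_continuousOn hb
  obtain ⟨Cz, hCz⟩ := (hK.prod (isCompact_closedBall (0 : ℝ) (U + 1))).exists_bound_of_continuousOn
    ((continuousOn_zot hα lam hc).mono (prod_mono_right (subset_univ _)))
  obtain ⟨M, hM, r₀, hr₀, hLip⟩ := lipschitz_estimate hη (by linarith) hΩ hK hα hF2 hF3 hF4 hu hw
    hju hjw hBb hu1 hw0 hw1 (Cz := Cz)
    (fun x hx t ht => by simpa using hCz (x, t) ⟨hx, by simpa using ht⟩) hL hdiag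
  have h5 : (1 : ℝ) ≤ 5 ^ m := one_le_pow₀ (by norm_num)
  obtain ⟨Ca, hCa, C, hC, γ, hγ, r₁, hr₁, hr₁1, hCar, hest⟩ :=
    doubling_estimate hη hΩ hK hF2 hF3 hF4 hu hw hju hjw (Cb := 10 * 5 ^ m) (by linarith)
  -- An upper bound for the gradient of the penalty at the maximum point, independent of `j`.
  obtain ⟨Q, hQ⟩ : ∃ Q, Q = 2 * m * M / η₀ := ⟨_, rfl⟩
  have hQ0 : 0 < Q := by rw [hQ]; positivity
  obtain ⟨δ₁, hδ₁, hmod⟩ := exists_modulus hK (isCompact_closedBall (0 : EN N) (2 * Q))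
    ((continuous_inner_mul_rpow hα hK hb).mono (prod_mono_right (subset_univ _)))
    (show 0 < ε / 3 by positivity)
  obtain ⟨δ₂, hδ₂, hzot⟩ := exists_zot_add_lt hα lam hK hc (U + 1) (show 0 < ε / 3 by positivity)
  obtain ⟨s₀, hs₀, hs⟩ := exists_mul_rpow_le hγ (C * Q ^ (1 + α)) (show 0 < ε / 3 by positivity)
  obtain ⟨D, hD⟩ : ∃ D, D = 4 + 2 * Ca * Q + M := ⟨_, rfl⟩
  have hCaQ : 0 ≤ 2 * Ca * Q := by positivity
  have hD0 : 0 < D := by rw [hD]; positivity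
  obtain ⟨σ, hσ, hσ0, hσ1, hσs, hσε, hσδ₁, hσδ₂⟩ : ∃ σ > 0, σ ≤ r₀ ∧ σ ≤ r₁ ∧ σ ≤ s₀ ∧
      σ ≤ ε / 4 ∧ D * σ ≤ δ₁ ∧ D * σ ≤ δ₂ := by
    refine ⟨min r₀ (min r₁ (min s₀ (min (ε / 4) (min (δ₁ / D) (δ₂ / D))))), by positivity,
      min_le_left _ _, ?_, ?_, ?_, ?_, ?_⟩
    · exact (min_le_right _ _).trans (min_le_left _ _)
    · exact (min_le_right _ _).trans ((min_le_right _ _).trans (min_le_left _ _))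
    · exact (min_le_right _ _).trans ((min_le_right _ _).trans
        ((min_le_right _ _).trans (min_le_left _ _)))
    · rw [mul_comm, ← le_div_iff₀ hD0]
      exact (min_le_right _ _).trans ((min_le_right _ _).trans
        ((min_le_right _ _).trans ((min_le_right _ _).trans (min_le_left _ _))))
    · rw [mul_comm, ← le_div_iff₀ hD0]
      exact (min_le_right _ _).trans ((min_le_right _ _).trans
        ((min_le_right _ _).trans ((min_le_right _ _).trans (min_le_right _ _))))
  have hDσ : D * σ = 4 * σ + 2 * Ca * Q * σ + M * σ := by rw [hD]; ring
  have hCaQσ : 0 ≤ 2 * Ca * Q * σ := by positivity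
  have hMσ : 0 < M * σ := by positivity
  -- For this `j`, maximum points of the doubled functional satisfy `|x₀ - y₀| < σ`.
  obtain ⟨j, hj⟩ : ∃ j, j = (U + 1) / (2 * η₀ * σ ^ (2 * m)) := ⟨_, rfl⟩
  have hj0 : 0 < j := by rw [hj]; positivity
  have hjU : 2 * η₀ * (j * σ ^ (2 * m)) = U + 1 := by rw [hj]; field_simp
  obtain ⟨ψ, hψ⟩ : ∃ ψ : EN N → ℝ, ψ = fun d => j * ‖d‖ ^ (2 * m) := ⟨_, rfl⟩
  have hψc : Continuous ψ := by rw [hψ]; fun_prop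
  obtain ⟨x₀, hx₀, y₀, hy₀, -, hmax⟩ := exists_doubling_max hK hu hw
    (φ := fun p => ψ (p.1 - p.2) * (η p.1 + η p.2)) (by have := hη.cont; fun_prop)
    (s := univ) isClosed_univ hz (mem_univ _)
  have h2m : 2 * m ≠ 0 := by omega
  have hψ0 : ψ 0 = 0 := by rw [hψ]; simp [h2m]
  have hval : 0 ≤ u x₀ + w y₀ - ψ (x₀ - y₀) * (η x₀ + η y₀) := by
    have := hmax z hz z hz (mem_univ _)
    simp only [sub_self, hψ0, zero_mul, sub_zero] at this
    linarith
  have hmax' : ∀ x ∈ closure Ω, ∀ y ∈ closure Ω, u x + w y - ψ (x - y) * (η x + η y) ≤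
      u x₀ + w y₀ - ψ (x₀ - y₀) * (η x₀ + η y₀) := fun x hx y hy => hmax x hx y hy (mem_univ _)
  clear hmax
  have hEub : ∀ x ∈ closure Ω, ∀ y ∈ closure Ω, η x + η y ≤ 2 := fun x hx y hy => by
    linarith [hη.upper x hx, hη.upper y hy]
  have hElb : ∀ x ∈ closure Ω, ∀ y ∈ closure Ω, 2 * η₀ ≤ η x + η y := fun x hx y hy => by
    linarith [hη.lower x hx, hη.lower y hy]
  rcases eq_or_ne x₀ y₀ with rfl | hne
  · rw [sub_self, hψ0, zero_mul, sub_zero] at hval hmax'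
    have h0 : u x₀ + w x₀ = 0 := le_antisymm (hdiag x₀ hx₀) hval
    have hψle : ∀ x ∈ closure Ω, ∀ y ∈ closure Ω, ψ (x - y) * (η x + η y) ≤
        2 * j * ‖x - y‖ ^ (2 * m) := fun x hx y hy => by
      have h1 : 0 ≤ ψ (x - y) := by rw [hψ]; positivity
      have h2 := mul_le_mul_of_nonneg_left (hEub x hx y hy) h1
      have h3 : ψ (x - y) = j * ‖x - y‖ ^ (2 * m) := by rw [hψ]
      rw [h3] at h2 ⊢
      linarith
    refine diagonal_case hη hΩ hK hm hq hα hmα hF1 hF2 hb hc hu hw hju hjw hx₀ h0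
      (C := 2 * j) (by positivity) (fun x hx => ?_) (fun y hy => ?_) hε
    · linarith [hmax' x hx x₀ hx₀, hψle x hx x₀ hx₀]
    · have := hψle x₀ hx₀ y hy
      rw [norm_sub_rev] at this
      linarith [hmax' x₀ hx₀ y hy]
  have hd0 : x₀ - y₀ ≠ 0 := sub_ne_zero.2 hne
  obtain ⟨r, hr⟩ : ∃ r, r = ‖x₀ - y₀‖ := ⟨_, rfl⟩
  have hr0 : 0 < r := by rw [hr]; exact norm_pos_iff.2 hd0
  obtain ⟨Ψ₀, hΨ₀⟩ : ∃ Ψ₀, Ψ₀ = j * r ^ (2 * m) := ⟨_, rfl⟩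
  obtain ⟨Ψ₁, hΨ₁⟩ : ∃ Ψ₁, Ψ₁ = 2 * m * j * r ^ (2 * m - 1) := ⟨_, rfl⟩
  have hΨ₀0 : 0 < Ψ₀ := by rw [hΨ₀]; positivity
  have hΨ₁0 : 0 < Ψ₁ := by rw [hΨ₁]; positivity
  have hrel : r * Ψ₁ = 2 * m * Ψ₀ := by
    rw [hΨ₀, hΨ₁]
    have : r ^ (2 * m) = r ^ (2 * m - 1) * r := by
      rw [← pow_succ, Nat.sub_add_cancel (by omega)]
    rw [this]
    ring
  have hψd : ψ (x₀ - y₀) = Ψ₀ := by rw [hψ, hΨ₀, hr]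
  rw [hψd] at hval
  have hElb0 := hElb x₀ hx₀ y₀ hy₀
  have hEub0 := hEub x₀ hx₀ y₀ hy₀
  have hE0 : 0 < η x₀ + η y₀ := by linarith
  have hpen : 2 * η₀ * Ψ₀ ≤ u x₀ + w y₀ := by
    have := mul_le_mul_of_nonneg_left hElb0 hΨ₀0.le
    linarith
  have hu1' := hu1 x₀ hx₀
  have hw0' := hw0 y₀ hy₀
  have hw1' := hw1 y₀ hy₀
  have hrσ : r < σ := by
    by_contra hcon
    push Not at hcon
    have h1 : σ ^ (2 * m) ≤ r ^ (2 * m) := pow_le_pow_left₀ hσ.le hcon _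
    have h2 : 2 * η₀ * (j * σ ^ (2 * m)) ≤ 2 * η₀ * Ψ₀ := by rw [hΨ₀]; gcongr
    linarith
  have hLip0 : u x₀ + w y₀ ≤ M * r := by
    rw [hr]
    exact hLip x₀ hx₀ y₀ hy₀ (by rw [← hr]; linarith)
  have hΨ₁Q : 2 * Ψ₁ ≤ Q := by
    rw [hQ, le_div_iff₀ hη₀]
    refine le_of_mul_le_mul_right ?_ hr0
    have h1 : 2 * (m : ℝ) * (2 * η₀ * Ψ₀) ≤ 2 * m * (M * r) :=
      mul_le_mul_of_nonneg_left (hpen.trans hLip0) (by positivity)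
    calc 2 * Ψ₁ * η₀ * r = 2 * η₀ * (r * Ψ₁) := by ring
      _ = 2 * m * (2 * η₀ * Ψ₀) := by rw [hrel]; ring
      _ ≤ 2 * m * (M * r) := h1
      _ = 2 * m * M * r := by ring
  have hux0 : 0 ≤ u x₀ := by
    have : 0 < 2 * η₀ * Ψ₀ := by positivity
    linarith
  have h2mΨ : 2 * Ψ₀ ≤ 2 * m * Ψ₀ := by
    have := mul_le_mul_of_nonneg_right hm0 hΨ₀0.le
    linarith
  obtain ⟨x', hx', y', hy', P, p₁, p₂, hP, hxx, hyy, hux', hwy', hp₁, hp₂, hfin, -⟩ :=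
    hest x₀ hx₀ y₀ hy₀ hne (by rw [← hr]; linarith) ψ Ψ₀ Ψ₁ (-(10 * 5 ^ m * (Ψ₁ / r))) r hr0
    hΨ₀0 hΨ₁0
    (by
      rw [← hr, hrel]
      gcongr)
    (by
      rw [← hr, hrel]
      have h1 : 1 * (2 * m * Ψ₀) ≤ 10 * 5 ^ m * (2 * m * Ψ₀) :=
        mul_le_mul_of_nonneg_right (by linarith) (by positivity)
      linarith)
    (by rw [← hr]) hψd
    (by
      intro δ _
      rw [hψ]
      positivity)
    (by
      intro δ hδ
      rw [hr] at hδ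
      have := power_expansion hm hj0.le hd0 hδ (Ψ₁ := Ψ₁) (by rw [hΨ₁, hr]) rfl
      rw [hψ, hΨ₀, hr]
      exact this)
    (fun x hx y hy _ _ => hmax' x hx y hy) σ hσ
  clear hest hmax' hLip hs₀
  obtain ⟨π, hπ⟩ : ∃ π, π = ‖P‖ := ⟨_, rfl⟩
  rw [← hπ] at hP hp₁ hp₂ hfin
  rw [← hr] at hp₁ hp₂ hfin
  have hπ0 : 0 < π := by rw [hP]; positivity
  have hπQ : π ≤ Q := by
    rw [hP]
    exact (mul_le_mul_of_nonneg_right hEub0 hΨ₁0.le).trans hΨ₁Q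
  have hCaπ : Ca * r * π ≤ π := by
    have : Ca * r ≤ Ca * r₁ := mul_le_mul_of_nonneg_left (by linarith) hCa
    exact mul_le_of_le_one_left hπ0.le (by linarith)
  have hCaπ' : Ca * r * π ≤ Ca * σ * Q := by gcongr
  have hpn : ∀ p : EN N, ‖p - P‖ ≤ Ca * r * π → p ∈ closedBall (0 : EN N) (2 * Q) := by
    intro p hp
    rw [mem_closedBall_zero_iff]
    have := norm_sub_norm_le p P
    rw [← hπ] at this
    linarith
  have hpp : ‖p₁ - p₂‖ < δ₁ := by
    have h1 := norm_sub_le (p₁ - P) (p₂ - P)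
    rw [sub_sub_sub_cancel_right] at h1
    linarith
  have hxy : ‖x' - y'‖ < 3 * σ := by
    have h3 : x' - y' = (x₀ - y₀) + ((x' - x₀) - (y' - y₀)) := by abel
    have h4 := norm_add_le (x₀ - y₀) ((x' - x₀) - (y' - y₀))
    have h5 := norm_sub_le (x' - x₀) (y' - y₀)
    rw [← hr] at h4
    rw [h3]
    linarith
  have hσ1' : σ ≤ 1 := hσ1.trans hr₁1
  rw [abs_lt] at hux' hwy'
  obtain ⟨hux1, hux2⟩ := hux'
  obtain ⟨hwy1, hwy2⟩ := hwy'
  have hMr : M * r ≤ M * σ := mul_le_mul_of_nonneg_left hrσ.le hM.le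
  have hpen0 : 0 < 2 * η₀ * Ψ₀ := by positivity
  have hb1 := (le_abs_self _).trans_lt
    (hmod x' hx' y' hy' p₁ (hpn p₁ hp₁) p₂ (hpn p₂ hp₂) (by linarith) hpp)
  have hz1 := hzot x' hx' y' hy' (u x') (w y') (by rw [abs_le]; constructor <;> linarith)
    (by rw [abs_le]; constructor <;> linarith) (by linarith)
    (by rw [abs_lt]; constructor <;> linarith)
  have hfirst : π ^ α * (C * π * r ^ γ) ≤ ε / 3 := by
    refine le_trans ?_ (hs r hr0.le (by linarith))
    have h1 : π ^ α * (C * π * r ^ γ) = C * π ^ (1 + α) * r ^ γ := by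
      rw [Real.rpow_add hπ0, Real.rpow_one]
      ring
    have h2 : π ^ (1 + α) ≤ Q ^ (1 + α) := Real.rpow_le_rpow hπ0.le hπQ (by linarith)
    rw [h1]
    gcongr
  refine ⟨x', hx', y', hy', by linarith, ?_⟩
  simp only at hb1
  linarith

/-- Theorem `comparisonl<ls`: comparison between a subsolution with
right-hand side `g` and a bounded positive supersolution with right-hand side `h ≤ 0`,
`h ≤ g`, `g > 0` where `h = 0`. -/
theorem stmt15 {N : ℕ} (Ω : Set (EN N)) (nv : EN N → EN N) (hΩ : IsC2Domain Ω nv)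
    (α a A C₁ θ C₂ ν : ℝ) (hα : -1 < α)
    (F : EN N → EN N → Mat N → ℝ)
    (hF1 : CondF1 Ω α F) (hF2 : CondF2 Ω α a A F)
    (hF3 : CondF3 Ω α C₁ θ F) (hF4 : CondF4 Ω α C₂ ν F)
    (b : EN N → EN N) (c : EN N → ℝ)
    (hbc : ContinuousOn b (closure Ω)) (hcc : ContinuousOn c (closure Ω))
    (lam : ℝ) (g h : EN N → ℝ)
    (hg : LowerSemicontinuousOn g (closure Ω)) (hh : UpperSemicontinuousOn h (closure Ω))
    (hh0 : ∀ x ∈ closure Ω, h x ≤ 0) (hhg : ∀ x ∈ closure Ω, h x ≤ g x)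
    (hgpos : ∀ x ∈ closure Ω, h x = 0 → 0 < g x)
    (u : EN N → ℝ) (husc : UpperSemicontinuousOn u (closure Ω))
    (hsub : IsSubSol Ω F b α (fun x r => (c x + lam) * |r| ^ α * r) g (BNeu nv) u)
    (v : EN N → ℝ) (hlsc : LowerSemicontinuousOn v (closure Ω))
    (hvpos : ∀ x ∈ closure Ω, 0 < v x) (hvbd : ∃ M, ∀ x ∈ closure Ω, v x ≤ M)
    (hsup : IsSuperSol Ω F b α (fun x r => (c x + lam) * |r| ^ α * r) h (BNeu nv) v) :
    ∀ x ∈ closure Ω, u x ≤ v x := by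
  intro x₁ hx₁
  by_contra hcon
  push Not at hcon
  obtain ⟨hopen, -, hbdd, ρ, hρ⟩ := hΩ
  have hK : IsCompact (closure Ω) := hbdd.isCompact_closure
  have hne : (closure Ω).Nonempty := ⟨x₁, hx₁⟩
  obtain ⟨V, hV⟩ := hvbd
  have hV0 : 0 < V := (hvpos x₁ hx₁).trans_le (hV x₁ hx₁)
  obtain ⟨zv, hzv, hvmin⟩ := hlsc.exists_isMinOn hne hK
  obtain ⟨zu, hzu, humax⟩ := husc.exists_isMaxOn hne hK
  obtain ⟨zg, hzg, hgmin⟩ := hg.exists_isMinOn hne hK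
  rw [isMinOn_iff] at hvmin hgmin
  rw [isMaxOn_iff] at humax
  have hv₀ := hvpos zv hzv
  have hu1 : 0 < u zu := ((hvpos x₁ hx₁).trans hcon).trans_le (humax x₁ hx₁)
  obtain ⟨τ, hτ⟩ : ∃ τ, IsLUB ((fun x => u x / v x) '' closure Ω) τ := by
    refine ⟨_, isLUB_csSup (hne.image _) ⟨u zu / v zv, ?_⟩⟩
    rintro _ ⟨x, hx, rfl⟩
    exact div_le_div₀ hu1.le (humax x hx) hv₀ (hvmin x hx)
  have hτ1 : 1 < τ :=
    ((one_lt_div (hvpos x₁ hx₁)).2 hcon).trans_le (hτ.1 (mem_image_of_mem _ hx₁))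
  have hτ0 : 0 < τ := by linarith
  have hle : ∀ x ∈ closure Ω, u x + -(τ * v x) ≤ 0 := fun x hx => by
    have := (div_le_iff₀ (hvpos x hx)).1 (hτ.1 (mem_image_of_mem _ hx))
    linarith
  have hw : UpperSemicontinuousOn (fun x => -(τ * v x)) (closure Ω) :=
    Continuous.comp_lowerSemicontinuousOn_antitone
      (g := fun t : ℝ => -(τ * t)) (by fun_prop) hlsc fun s t hst => by
        have := mul_le_mul_of_nonneg_left hst hτ0.le
        simp only
        linarith
  have hg' : LowerSemicontinuousOn (fun x => -(τ ^ (1 + α) * h x)) (closure Ω) :=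
    Continuous.comp_upperSemicontinuousOn_antitone
      (g := fun t : ℝ => -(τ ^ (1 + α) * t)) (by fun_prop) hh fun s t hst => by
        have := mul_le_mul_of_nonneg_left hst (Real.rpow_nonneg hτ0.le (1 + α))
        simp only
        linarith
  -- The supremum `τ` of `u / v` is attained, since `u - τ v` has a maximum and `v` is bounded.
  obtain ⟨z, hz, hzmax⟩ := (husc.add hw).exists_isMaxOn hne hK
  rw [isMaxOn_iff] at hzmax
  have hz0 : u z + -(τ * v z) = 0 := by
    refine le_antisymm (hle z hz) ?_
    by_contra hneg
    push Not at hneg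
    obtain ⟨e, he⟩ : ∃ e, e = -(u z + -(τ * v z)) := ⟨_, rfl⟩
    have he0 : 0 < e := by linarith
    have hub : τ ≤ τ - e / V := by
      refine hτ.2 ?_
      rintro _ ⟨x, hx, rfl⟩
      simp only
      rw [div_le_iff₀ (hvpos x hx)]
      have h1 : e / V * v x ≤ e / V * V := mul_le_mul_of_nonneg_left (hV x hx) (by positivity)
      rw [div_mul_cancel₀ _ hV0.ne'] at h1
      have h2 := hzmax x hx
      linarith
    have : 0 < e / V := by positivity
    linarith
  obtain ⟨m, hm, hmα⟩ : ∃ m : ℕ, 1 ≤ m ∧ 1 < (2 * (m : ℝ) - 1) * (1 + α) := by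
    obtain ⟨m, hm⟩ := exists_nat_gt (1 / (1 + α))
    rw [div_lt_iff₀ (by linarith)] at hm
    have h1 : 0 ≤ (m : ℝ) * (1 + α) := mul_nonneg (by positivity) (by linarith)
    refine ⟨m + 1, by omega, ?_⟩
    push_cast
    linarith
  obtain ⟨η₀, Ce, η, n, hη⟩ := exists_boundaryWeight hρ hbdd (q := 2 * (m : ℝ)) (by positivity)
  obtain ⟨x, hx, hfin⟩ := comparison_point hη hopen hK hm le_rfl hα hmα hF1 hF2 hF3 hF4 hbc hcc
    husc hw (jetSub_of_isSubSol hρ hF2 (c₀ := zot c lam α) hsub)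
    (jetSub_of_isSuperSol hρ hF1 hF2 (c := c) (lam := lam) hsup hτ0) hg hg'
    (U := max (u zu) (τ * V)) (L := -g zg) (fun x hx => (humax x hx).trans (le_max_left _ _))
    (fun x hx => by have := mul_pos hτ0 (hvpos x hx); linarith)
    (fun x hx => by
      have h1 := mul_le_mul_of_nonneg_left (hV x hx) hτ0.le
      have h2 := le_max_right (u zu) (τ * V)
      linarith)
    (fun x hx y hy => by
      have h1 := mul_nonpos_of_nonneg_of_nonpos (Real.rpow_nonneg hτ0.le (1 + α)) (hh0 y hy)
      have h2 := hgmin x hx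
      linarith)
    hle hz hz0
  have hτα : 1 < τ ^ (1 + α) := Real.one_lt_rpow hτ1 (by linarith)
  rcases (hh0 x hx).lt_or_eq with hlt | heq
  · have h1 := mul_lt_mul_of_neg_right hτα hlt
    have h2 := hhg x hx
    linarith
  · have h1 := hgpos x hx heq
    rw [heq, mul_zero] at hfin
    linarith
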